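/- There exists a constant c > 0 such that, for n ranging over even natural numbers and Δ drawn from U(n), the probability that |χ(Δ)| ≤ c·n·2^{n/2} tends to 1 as n → ∞. -/

import Mathlib

open scoped Classical

noncomputable section

/-- `Δ` is a simplicial complex on vertex set `Fin n`: all faces are nonempty
and it is downward closed. -/
def IsComplex {n : ℕ} (Δ : Finset (Finset (Fin n))) : Prop :=
  (∀ x ∈ Δ, x.Nonempty) ∧
    ∀ x ∈ Δ, ∀ y : Finset (Fin n), y.Nonempty → y ⊆ x → y ∈ Δ

/-- The finite set of all simplicial complexes on `n` vertices. -/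
def allComplexes (n : ℕ) : Finset (Finset (Finset (Fin n))) :=
  Finset.univ.filter IsComplex

/-- The probability, under the uniform measure `U(n)` on all simplicial
complexes on `n` vertices, of the event `P`. -/
def uniformProb (n : ℕ) (P : Finset (Finset (Fin n)) → Prop) : ℝ :=
  (((allComplexes n).filter P).card : ℝ) / ((allComplexes n).card : ℝ)

/-- The Euler characteristic `χ(Δ) = Σ_{i ≥ 1} (-1)^{i-1} f_i(Δ)`, computed as a
sum over the faces of `Δ`. -/
def eulerChar {n : ℕ} (Δ : Finset (Finset (Fin n))) : ℤ :=
  ∑ x ∈ Δ, (-1 : ℤ) ^ (x.card - 1)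


/-! ### Linked sets and their enumeration -/

/-- `T` is connected with respect to the relation `R`. -/
def Linked {V : Type*} (R : V → V → Prop) (T : Finset V) : Prop :=
  ∀ T1 ⊆ T, T1.Nonempty → T1 ≠ T → ∃ u ∈ T1, ∃ v ∈ T, v ∉ T1 ∧ R u v

def walkSets {V : Type*} (nb : V → Finset V) : ℕ → V → Finset (Finset V)
  | 0, v => {{v}}
  | l + 1, v => (nb v).biUnion fun w => (walkSets nb l w).image (insert v)

lemma mem_walkSets_succ {V : Type*} {nb : V → Finset V} {l : ℕ} {v : V} {S : Finset V} :
    S ∈ walkSets nb (l + 1) v ↔ ∃ w ∈ nb v, ∃ S' ∈ walkSets nb l w, insert v S' = S := by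
  simp [walkSets]

lemma card_walkSets {V : Type*} {nb : V → Finset V} {K : ℕ} (hK : ∀ v, (nb v).card ≤ K)
    (l : ℕ) (v : V) : (walkSets nb l v).card ≤ K ^ l := by
  induction l generalizing v with
  | zero => simp [walkSets]
  | succ l ih =>
    have : (walkSets nb (l + 1) v).card ≤ (nb v).card * K ^ l := by
      simp only [walkSets]
      refine Finset.card_biUnion_le_card_mul _ _ _ fun w _ => ?_
      exact Finset.card_image_le.trans (ih w)
    calc _ ≤ _ := this
      _ ≤ K * K ^ l := Nat.mul_le_mul_right _ (hK v)
      _ = _ := by ring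

lemma root_mem_walkSets {V : Type*} {nb : V → Finset V} {l : ℕ} {v : V} {S : Finset V}
    (h : S ∈ walkSets nb l v) : v ∈ S := by
  cases l with
  | zero => simp [walkSets] at h; simp [h]
  | succ l =>
    obtain ⟨w, _, S', _, rfl⟩ := mem_walkSets_succ.1 h
    simp

lemma splice_walkSets {V : Type*} {nb : V → Finset V} {l : ℕ} {v u v' : V} {S : Finset V}
    (h : S ∈ walkSets nb l v) (hu : u ∈ S) (h1 : v' ∈ nb u) (h2 : u ∈ nb v') :
    insert v' S ∈ walkSets nb (l + 2) v := by
  have base : ∀ l v S, S ∈ walkSets nb l v → v' ∈ nb v → v ∈ nb v' →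
      insert v' S ∈ walkSets nb (l + 2) v := by
    intro l v S h h1 h2
    refine mem_walkSets_succ.2 ⟨v', h1, insert v' S, mem_walkSets_succ.2 ⟨v, h2, S, h, rfl⟩, ?_⟩
    exact Finset.insert_eq_of_mem (Finset.mem_insert_of_mem (root_mem_walkSets h))
  induction l generalizing v S with
  | zero =>
    have hS : S = {v} := by simpa [walkSets] using h
    have : u = v := by simpa [hS] using hu
    subst this
    exact base _ _ _ h h1 h2
  | succ l ih =>
    by_cases huv : u = v
    · subst huv; exact base _ _ _ h h1 h2
    · obtain ⟨w, hw, S', hS', rfl⟩ := mem_walkSets_succ.1 h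
      have hu' : u ∈ S' := by simpa [huv] using hu
      refine mem_walkSets_succ.2 ⟨w, hw, _, ih hS' hu', ?_⟩
      exact Finset.insert_comm _ _ _

lemma linked_mem_walkSets {V : Type*} {R : V → V → Prop} {nb : V → Finset V}
    (hR : ∀ u v, R u v → v ∈ nb u ∧ u ∈ nb v) {T : Finset V} (hT : Linked R T) {v : V}
    (hv : v ∈ T) : T ∈ walkSets nb (2 * (T.card - 1)) v := by
  have key : ∀ i, i + 1 ≤ T.card → ∃ S ⊆ T, S.card = i + 1 ∧ S ∈ walkSets nb (2 * i) v := by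
    intro i
    induction i with
    | zero => intro _; exact ⟨{v}, by simpa using hv, by simp, by simp [walkSets]⟩
    | succ i ih =>
      intro hi
      obtain ⟨S, hST, hSc, hS⟩ := ih (by omega)
      obtain ⟨u, hu, w, hw, hwS, hr⟩ := hT S hST ⟨v, root_mem_walkSets hS⟩
        (by rintro rfl; omega)
      refine ⟨insert w S, Finset.insert_subset hw hST, ?_, ?_⟩
      · rw [Finset.card_insert_of_notMem hwS, hSc]
      · exact splice_walkSets hS hu (hR _ _ hr).1 (hR _ _ hr).2
  have hpos : 0 < T.card := Finset.card_pos.2 ⟨v, hv⟩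
  obtain ⟨S, hST, hSc, hS⟩ := key (T.card - 1) (by omega)
  have : S = T := Finset.eq_of_subset_of_card_le hST (by omega)
  rwa [← this, hSc] at *

lemma walkSets_mono {V : Type*} {nb : V → Finset V} (hself : ∀ v, v ∈ nb v) {l l' : ℕ} (h : l ≤ l')
    {v : V} {S : Finset V} (hS : S ∈ walkSets nb l v) : S ∈ walkSets nb l' v := by
  induction l', h using Nat.le_induction with
  | base => exact hS
  | succ m _ ih =>
    exact mem_walkSets_succ.2 ⟨v, hself v, S, ih, Finset.insert_eq_of_mem (root_mem_walkSets ih)⟩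

/-- Enumeration of linked sets: there are few containing a given vertex. -/
lemma card_linked_le {V : Type*} {R : V → V → Prop} {nb : V → Finset V}
    (hself : ∀ v, v ∈ nb v)
    (hR : ∀ u v, R u v → v ∈ nb u ∧ u ∈ nb v) {K : ℕ} (hK : ∀ v, (nb v).card ≤ K) (s : ℕ) (v : V)
    (F : Finset (Finset V)) (hF : ∀ T ∈ F, Linked R T ∧ v ∈ T ∧ T.card ≤ s) :
    F.card ≤ K ^ (2 * (s - 1)) := by
  refine le_trans (Finset.card_le_card ?_) (card_walkSets hK (2 * (s - 1)) v)
  intro T hT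
  replace hT := hF T hT
  exact walkSets_mono hself (by omega) (linked_mem_walkSets hR hT.1 hT.2.1)

/-- Existence of components. -/
lemma exists_component {V : Type*} {R : V → V → Prop} (hsymm : ∀ u v, R u v → R v u) (M : Finset V) {x : V} (hx : x ∈ M) :
    ∃ C ⊆ M, x ∈ C ∧ Linked R C ∧ ∀ u ∈ C, ∀ v ∈ M, R u v → v ∈ C := by
  let F := M.powerset.filter fun C => x ∈ C ∧ Linked R C
  have hF : F.Nonempty := by
    refine ⟨{x}, ?_⟩
    simp only [F, Finset.mem_filter, Finset.mem_powerset, Finset.singleton_subset_iff, hx,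
      Finset.mem_singleton, true_and]
    intro T1 h1 h2 h3
    exact absurd (Finset.Nonempty.subset_singleton_iff h2 |>.1 h1) h3
  obtain ⟨C, hC, hmax⟩ := F.exists_max_image Finset.card hF
  simp only [F, Finset.mem_filter, Finset.mem_powerset] at hC hmax
  refine ⟨C, hC.1, hC.2.1, hC.2.2, ?_⟩
  intro u hu v hv hr
  by_contra hvC
  have := hmax (insert v C) ⟨Finset.insert_subset hv hC.1, by simp [hC.2.1], ?_⟩
  · rw [Finset.card_insert_of_notMem hvC] at this; omega
  intro T1 h1 h2 h3
  by_cases hvT : v ∈ T1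
  · by_cases hu1 : u ∈ T1
    · obtain ⟨a, ha, b, hb, hbn, hab⟩ := hC.2.2 (T1 ∩ C) Finset.inter_subset_right
        ⟨u, Finset.mem_inter.2 ⟨hu1, hu⟩⟩ (by
          intro h
          apply h3
          apply Finset.Subset.antisymm h1
          apply Finset.insert_subset hvT
          rw [← h]; exact Finset.inter_subset_left)
      simp only [Finset.mem_inter] at ha hbn
      exact ⟨a, ha.1, b, Finset.mem_insert_of_mem hb, fun h => hbn ⟨h, hb⟩, hab⟩
    · exact ⟨v, hvT, u, Finset.mem_insert_of_mem hu, hu1, hsymm _ _ hr⟩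
  · have h1C : T1 ⊆ C := (Finset.subset_insert_iff_of_notMem hvT).1 h1
    by_cases hTC : T1 = C
    · exact ⟨u, hTC ▸ hu, v, Finset.mem_insert_self _ _, hvT, hr⟩
    · obtain ⟨a, ha, b, hb, hbn, hab⟩ := hC.2.2 T1 h1C h2 hTC
      exact ⟨a, ha, b, Finset.mem_insert_of_mem hb, hbn, hab⟩

/-- A set close to a linked set is linked with a larger step. -/
lemma Linked.of_close {V W : Type*} {R : V → V → Prop} {Q : W → V → Prop} {R' : W → W → Prop}
    {C : Finset V} {T : Finset W} (hC : Linked R C)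
    (h1 : ∀ c ∈ C, ∃ τ ∈ T, Q τ c) (h2 : ∀ τ ∈ T, ∃ c ∈ C, Q τ c)
    (h3 : ∀ τ τ' c, Q τ c → Q τ' c → R' τ τ')
    (h4 : ∀ τ τ' c c', Q τ c → Q τ' c' → R c c' → R' τ τ') : Linked R' T := by
  intro T1 hT1 hne hneT
  obtain ⟨τ0, hτ0⟩ := hne
  obtain ⟨τ1, hτ1, hτnot⟩ : ∃ τ1 ∈ T, τ1 ∉ T1 := by
    by_contra h
    push Not at h
    exact hneT (Finset.Subset.antisymm hT1 h)
  by_cases hint : ∃ c ∈ C, ∃ τ ∈ T1, ∃ τ' ∈ T, τ' ∉ T1 ∧ Q τ c ∧ Q τ' c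
  · obtain ⟨c, _, τ, hτ, τ', hτ', hn, q1, q2⟩ := hint
    exact ⟨τ, hτ, τ', hτ', hn, h3 _ _ _ q1 q2⟩
  · obtain ⟨c0, hc0, q0⟩ := h2 τ0 (hT1 hτ0)
    obtain ⟨c1, hc1, q1⟩ := h2 τ1 hτ1
    let C1 := C.filter fun c => ∃ τ ∈ T1, Q τ c
    have hc1n : c1 ∉ C1 := by
      intro h
      obtain ⟨τ, hτ, q⟩ := (Finset.mem_filter.1 h).2
      exact hint ⟨c1, hc1, τ, hτ, τ1, hτ1, hτnot, q, q1⟩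
    obtain ⟨c, hc, c', hc', hcn, hr⟩ := hC C1 (Finset.filter_subset _ _)
      ⟨c0, Finset.mem_filter.2 ⟨hc0, τ0, hτ0, q0⟩⟩ (by
        intro h; exact hc1n (h ▸ hc1))
    obtain ⟨τ, hτ, q⟩ := (Finset.mem_filter.1 hc).2
    obtain ⟨τ', hτ', q'⟩ := h1 c' hc'
    refine ⟨τ, hτ, τ', hτ', ?_, h4 _ _ _ _ q q' hr⟩
    intro h
    exact hcn (Finset.mem_filter.2 ⟨hc', τ', h, q'⟩)

/-! ### Hamming balls in the Boolean lattice -/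

/-- Hamming distance. -/
def hd {n : ℕ} (x y : Finset (Fin n)) : ℕ := (symmDiff x y).card

lemma hd_self {n : ℕ} (x : Finset (Fin n)) : hd x x = 0 := by simp [hd]

lemma hd_comm {n : ℕ} (x y : Finset (Fin n)) : hd x y = hd y x := by
  simp [hd, symmDiff_comm]

lemma hd_triangle {n : ℕ} (x y z : Finset (Fin n)) : hd x z ≤ hd x y + hd y z := by
  unfold hd
  refine le_trans (Finset.card_le_card (symmDiff_triangle x y z)) ?_
  exact Finset.card_union_le _ _

lemma card_small_sets (n r : ℕ) :
    (Finset.univ.filter fun s : Finset (Fin n) => s.card ≤ r).card ≤ (n + 1) ^ r := by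
  induction r with
  | zero =>
    have : (Finset.univ.filter fun s : Finset (Fin n) => s.card ≤ 0) = {∅} := by
      ext s; simp
    rw [this]; simp
  | succ r ih =>
    have hsub : (Finset.univ.filter fun s : Finset (Fin n) => s.card ≤ r + 1) ⊆
        ((Finset.univ.filter fun s : Finset (Fin n) => s.card ≤ r) ×ˢ
          (Finset.univ : Finset (Option (Fin n)))).image
          (fun q => match q.2 with
            | none => q.1
            | some a => insert a q.1) := by
      intro s hs
      simp only [Finset.mem_filter, Finset.mem_univ, true_and] at hs
      rw [Finset.mem_image]
      by_cases h : s.card ≤ r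
      · exact ⟨(s, none), by simp [h], rfl⟩
      · have : s.Nonempty := Finset.card_pos.1 (by omega)
        obtain ⟨a, ha⟩ := this
        refine ⟨(s.erase a, some a), ?_, ?_⟩
        · simp [Finset.card_erase_of_mem ha]; omega
        · simp [Finset.insert_erase ha]
    refine (Finset.card_le_card hsub).trans (Finset.card_image_le.trans ?_)
    rw [Finset.card_product]
    simp only [Finset.card_univ, Fintype.card_option, Fintype.card_fin]
    calc _ ≤ (n + 1) ^ r * (n + 1) := Nat.mul_le_mul_right _ ih
      _ = _ := by ring

lemma card_ball_le {n : ℕ} (x : Finset (Fin n)) (r : ℕ) :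
    (Finset.univ.filter fun y : Finset (Fin n) => hd x y ≤ r).card ≤ (n + 1) ^ r := by
  refine le_trans ?_ (card_small_sets n r)
  refine Finset.card_le_card_of_injOn (fun y => symmDiff x y) ?_ ?_
  · intro y hy
    simp only [Finset.coe_filter, Finset.mem_univ, true_and, Set.mem_setOf_eq] at hy ⊢
    exact hy
  · intro y _ z _ h
    exact symmDiff_right_injective x h

/-- Number of 2-linked families. -/
lemma card_linked_two {n : ℕ} (s : ℕ) (x : Finset (Fin n)) (F : Finset (Finset (Finset (Fin n))))
    (hF : ∀ T ∈ F, Linked (fun u v => hd u v ≤ 2) T ∧ x ∈ T ∧ T.card ≤ s) :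
    F.card ≤ ((n + 1) ^ 2) ^ (2 * (s - 1)) := by
  refine card_linked_le (R := fun u v : Finset (Fin n) => hd u v ≤ 2)
    (nb := fun v => Finset.univ.filter fun y => hd v y ≤ 2) ?_ ?_ (fun v => card_ball_le v 2) s x F hF
  · intro v; simp [hd_self]
  · intro u v h; simp [h, hd_comm v u]

/-- Number of linked labelled families. -/
lemma card_linked_eight {n : ℕ} (s : ℕ) (x : Finset (Fin n) × Fin 7)
    (F : Finset (Finset (Finset (Fin n) × Fin 7)))
    (hF : ∀ T ∈ F, Linked (fun u v => hd u.1 v.1 ≤ 8) T ∧ x ∈ T ∧ T.card ≤ s) :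
    F.card ≤ ((n + 1) ^ 8 * 7) ^ (2 * (s - 1)) := by
  refine card_linked_le (R := fun u v : Finset (Fin n) × Fin 7 => hd u.1 v.1 ≤ 8)
    (nb := fun v => (Finset.univ.filter fun y => hd v.1 y ≤ 8) ×ˢ Finset.univ)
    ?_ ?_ (fun v => ?_) s x F hF
  · intro v; simp [hd_self]
  · intro u v h; simp [h, hd_comm v.1 u.1]
  · rw [Finset.card_product, Finset.card_univ, Fintype.card_fin]
    exact Nat.mul_le_mul_right _ (card_ball_le v.1 8)

/-! ### Biregular bipartite graphs and the container construction -/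

structure BG (V : Type*) [DecidableEq V] where
  X : Finset V
  Y : Finset V
  U : V → Finset V
  M : V → Finset V
  D : ℕ
  b : ℕ
  hU : ∀ x ∈ X, U x ⊆ Y
  hM : ∀ y ∈ Y, M y ⊆ X
  hUM : ∀ x ∈ X, ∀ y ∈ Y, y ∈ U x ↔ x ∈ M y
  cU : ∀ x ∈ X, (U x).card = D
  cM : ∀ y ∈ Y, (M y).card = b
  hbD : b ≤ D

namespace BG

variable {V : Type*} [DecidableEq V] (B : BG V)

lemma dc {A C : Finset V} (hA : A ⊆ B.X) (hC : C ⊆ B.Y) :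
    ∑ x ∈ A, (B.U x ∩ C).card = ∑ y ∈ C, (B.M y ∩ A).card := by
  have h := Finset.sum_card_bipartiteAbove_eq_sum_card_bipartiteBelow (s := A) (t := C)
    (fun x y => y ∈ B.U x)
  convert h using 1
  · refine Finset.sum_congr rfl fun x _ => ?_
    congr 1
    ext y; simp [Finset.bipartiteAbove, and_comm]
  · refine Finset.sum_congr rfl fun y hy => ?_
    congr 1
    ext x
    simp only [Finset.bipartiteBelow, Finset.mem_inter, Finset.mem_filter]
    constructor
    · rintro ⟨h1, h2⟩; exact ⟨h2, (B.hUM x (hA h2) y (hC hy)).2 h1⟩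
    · rintro ⟨h1, h2⟩; exact ⟨(B.hUM x (hA h1) y (hC hy)).1 h2, h1⟩

lemma edge {H G : Finset V} (hH : H ⊆ B.X) (hG : G ⊆ B.Y) (hHG : ∀ x ∈ H, B.U x ⊆ G) :
    ∑ y ∈ G, (B.M y \ H).card + B.D * H.card = B.b * G.card := by
  have h1 : ∑ y ∈ G, (B.M y ∩ H).card = B.D * H.card := by
    rw [← B.dc hH hG]
    rw [Finset.sum_congr rfl (g := fun _ => B.D)]
    · simp [mul_comm]
    · intro x hx
      rw [Finset.inter_eq_left.2 (hHG x hx), B.cU x (hH hx)]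
  rw [← h1, ← Finset.sum_add_distrib]
  rw [Finset.sum_congr rfl (g := fun _ => B.b)]
  · simp [mul_comm]
  · intro y hy
    rw [Finset.card_sdiff_add_card_inter, B.cM y (hG hy)]

lemma edge_le {H G : Finset V} (hH : H ⊆ B.X) (hG : G ⊆ B.Y) (hHG : ∀ x ∈ H, B.U x ⊆ G) :
    B.D * H.card ≤ B.b * G.card := by
  have := B.edge hH hG hHG
  omega

lemma edge_t {H G : Finset V} (hH : H ⊆ B.X) (hG : G ⊆ B.Y) (hHG : ∀ x ∈ H, B.U x ⊆ G)
    {t : ℕ} (ht : G.card = H.card + t) : ∑ y ∈ G, (B.M y \ H).card ≤ B.b * t := by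
  have := B.edge hH hG hHG
  rw [ht, mul_add] at this
  have h2 := Nat.mul_le_mul_right H.card B.hbD
  omega

end BG

lemma sum_weight_disjoint {V : Type*} [DecidableEq V] (G C : Finset V) (hC : C ⊆ G) (p : ℝ) :
    ∑ T ∈ G.powerset with Disjoint C T, p ^ T.card * (1 - p) ^ (G.card - T.card)
      = (1 - p) ^ C.card := by
  have h1 : (G.powerset.filter fun T => Disjoint C T) = (G \ C).powerset := by
    ext T
    simp only [Finset.mem_filter, Finset.mem_powerset, Finset.subset_sdiff]
    constructor
    · rintro ⟨a, b⟩; exact ⟨a, b.symm⟩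
    · rintro ⟨a, b⟩; exact ⟨a, b.symm⟩
  rw [h1]
  have h2 := Finset.sum_pow_mul_eq_add_pow p (1 - p) (G \ C)
  have h3 : ∑ T ∈ (G \ C).powerset, p ^ T.card * (1 - p) ^ (G.card - T.card)
      = ∑ T ∈ (G \ C).powerset, (p ^ T.card * (1 - p) ^ ((G \ C).card - T.card)) *
        (1 - p) ^ C.card := by
    refine Finset.sum_congr rfl fun T hT => ?_
    have hc := Finset.card_le_card (Finset.mem_powerset.1 hT)
    have hc2 := Finset.card_sdiff_add_card_eq_card hC
    rw [mul_assoc, ← pow_add]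
    congr 2
    omega
  rw [h3, ← Finset.sum_mul, h2]
  simp

lemma random_subset {V : Type*} [DecidableEq V] (G G' : Finset V) (w : V → ℝ)
    (Bf : V → Finset V) (hB : ∀ y ∈ G', Bf y ⊆ G) (β : ℕ) (hβ : ∀ y ∈ G', β ≤ (Bf y).card)
    (p : ℝ) (hp : 0 < p) (hp1 : p < 1) :
    ∃ T ⊆ G, (T.card : ℝ) + ∑ y ∈ T, w y + ((G'.filter fun y => Disjoint (Bf y) T).card : ℝ)
      ≤ p * G.card + p * ∑ y ∈ G, w y + G'.card * (1 - p) ^ β := by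
  set ω : Finset V → ℝ := fun T => p ^ T.card * (1 - p) ^ (G.card - T.card) with hω
  have hωpos : ∀ T, 0 < ω T := fun T => by
    have : 0 < 1 - p := by linarith
    positivity
  have htot : ∑ T ∈ G.powerset, ω T = 1 := by
    simp only [hω]
    rw [Finset.sum_pow_mul_eq_add_pow]; simp
  have hmem : ∀ y ∈ G, ∑ T ∈ G.powerset with y ∈ T, ω T = p := by
    intro y hy
    have h1 := sum_weight_disjoint G {y} (by simpa using hy) p
    have h2 := Finset.sum_filter_add_sum_filter_not G.powerset (fun T => y ∈ T) ω
    rw [htot] at h2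
    simp only [Finset.disjoint_singleton_left, Finset.card_singleton, pow_one] at h1
    have h3 : ∑ T ∈ G.powerset with y ∉ T, ω T = 1 - p := h1
    linarith
  set R := p * G.card + p * ∑ y ∈ G, w y + G'.card * (1 - p) ^ β with hR
  set f : Finset V → ℝ := fun T =>
    (T.card : ℝ) + ∑ y ∈ T, w y + ((G'.filter fun y => Disjoint (Bf y) T).card : ℝ) with hf
  have hlin : ∀ c : V → ℝ, ∑ T ∈ G.powerset, ω T * ∑ y ∈ T, c y = p * ∑ y ∈ G, c y := by
    intro c
    have : ∀ T ∈ G.powerset, ω T * ∑ y ∈ T, c y = ∑ y ∈ G, if y ∈ T then ω T * c y else 0 := by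
      intro T hT
      rw [Finset.mul_sum, ← Finset.sum_filter]
      congr 1
      ext y
      simp only [Finset.mem_filter]
      exact ⟨fun h => ⟨Finset.mem_powerset.1 hT h, h⟩, fun h => h.2⟩
    rw [Finset.sum_congr rfl this, Finset.sum_comm, Finset.mul_sum]
    refine Finset.sum_congr rfl fun y hy => ?_
    rw [← Finset.sum_filter, ← Finset.sum_mul, hmem y hy]
  have hdis : ∑ T ∈ G.powerset, ω T * ((G'.filter fun y => Disjoint (Bf y) T).card : ℝ)
      ≤ G'.card * (1 - p) ^ β := by
    have : ∀ T ∈ G.powerset, ω T * ((G'.filter fun y => Disjoint (Bf y) T).card : ℝ)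
        = ∑ y ∈ G', if Disjoint (Bf y) T then ω T else 0 := by
      intro T _
      rw [← Finset.sum_filter, Finset.sum_const, nsmul_eq_mul, mul_comm]
    rw [Finset.sum_congr rfl this, Finset.sum_comm]
    have h2 : ∀ y ∈ G', (∑ T ∈ G.powerset, if Disjoint (Bf y) T then ω T else 0)
        ≤ (1 - p) ^ β := by
      intro y hy
      rw [← Finset.sum_filter, sum_weight_disjoint G _ (hB y hy)]
      exact pow_le_pow_of_le_one (by linarith) (by linarith) (hβ y hy)
    refine (Finset.sum_le_sum h2).trans ?_
    rw [Finset.sum_const, nsmul_eq_mul]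
  have hsum : ∑ T ∈ G.powerset, ω T * f T ≤ ∑ T ∈ G.powerset, ω T * R := by
    rw [← Finset.sum_mul, htot, one_mul]
    simp only [hf, mul_add, Finset.sum_add_distrib]
    rw [hlin w]
    have h1 := hlin (fun _ => 1)
    simp only [Finset.sum_const, nsmul_eq_mul, mul_one] at h1
    rw [h1]
    linarith
  obtain ⟨T, hT, hle⟩ := Finset.exists_le_of_sum_le ⟨∅, by simp⟩ hsum
  exact ⟨T, Finset.mem_powerset.1 hT, le_of_mul_le_mul_left hle (hωpos T)⟩

lemma greedy {V W : Type*} [DecidableEq V] [DecidableEq W] (Hs : Finset V) (N : V → Finset W)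
    (E : Finset W) (ψ : ℕ) (hψ : 1 ≤ ψ) :
    ∃ T ⊆ Hs, ψ * T.card ≤ E.card ∧ ∀ x ∈ Hs, ((N x ∩ E) \ T.biUnion N).card < ψ := by
  let F := Hs.powerset.filter fun T => ψ * T.card ≤ (E ∩ T.biUnion N).card
  have hF : F.Nonempty := ⟨∅, by simp [F]⟩
  obtain ⟨T, hT, hmax⟩ := F.exists_max_image Finset.card hF
  simp only [F, Finset.mem_filter, Finset.mem_powerset] at hT hmax
  refine ⟨T, hT.1, hT.2.trans (Finset.card_le_card Finset.inter_subset_left), ?_⟩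
  intro x hx
  by_contra hcon
  push Not at hcon
  have hxT : x ∉ T := by
    intro hxT
    have : (N x ∩ E) \ T.biUnion N = ∅ := by
      rw [Finset.sdiff_eq_empty_iff_subset]
      exact Finset.inter_subset_left.trans (Finset.subset_biUnion_of_mem N hxT)
    rw [this] at hcon
    simp at hcon
    omega
  have := hmax (insert x T) ⟨Finset.insert_subset hx hT.1, ?_⟩
  · rw [Finset.card_insert_of_notMem hxT] at this; omega
  rw [Finset.card_insert_of_notMem hxT, mul_add, mul_one]
  have hsub : (E ∩ T.biUnion N) ∪ ((N x ∩ E) \ T.biUnion N) ⊆ E ∩ (insert x T).biUnion N := by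
    intro z
    simp only [Finset.mem_union, Finset.mem_inter, Finset.mem_sdiff, Finset.biUnion_insert]
    tauto
  have hdisj : Disjoint (E ∩ T.biUnion N) ((N x ∩ E) \ T.biUnion N) := by
    rw [Finset.disjoint_left]
    intro z
    simp only [Finset.mem_inter, Finset.mem_sdiff]
    tauto
  have h3 := Finset.card_le_card hsub
  rw [Finset.card_union_of_disjoint hdisj] at h3
  omega

namespace BG
variable {V : Type*} [DecidableEq V] (B : BG V)

def Fz (T0 P T0' T2 : Finset V) : Finset V :=
  ((T0.biUnion B.M) \ P).biUnion B.U ∪ T0' ∪ T2.biUnion B.U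

def S0 (ψ : ℕ) (F : Finset V) : Finset V := B.X.filter fun x => (B.U x \ F).card < ψ

def Sf (ψ : ℕ) (F T3 : Finset V) : Finset V := B.S0 ψ F \ T3.biUnion B.M

def F1 (ψ : ℕ) (F T3 : Finset V) : Finset V :=
  F ∪ B.Y.filter fun y => ψ ≤ (B.M y ∩ B.Sf ψ F T3).card

def Hf (F : Finset V) : Finset V := B.X.filter fun x => B.U x ⊆ F

theorem core {H G : Finset V} (hH : H ⊆ B.X) (hG : G ⊆ B.Y) (hHG : ∀ x ∈ H, B.U x ⊆ G)
    {t : ℕ} (ht : G.card = H.card + t) (ψ : ℕ) (hψ : 1 ≤ ψ) (hψD : 2 * ψ ≤ B.D) (hb : 1 ≤ B.b)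
    (p : ℝ) (hp : 0 < p) (hp1 : p < 1) (β : ℕ)
    (hβ : ∀ y ∈ G, B.b ≤ 2 * (B.M y ∩ H).card → β ≤ ((B.M y ∩ H).biUnion B.U).card) :
    ∃ T0 P T0' T2 T3 F : Finset V, F = B.Fz T0 P T0' T2 ∧
      T0 ⊆ G ∧ P ⊆ T0.biUnion B.M ∧ T0' ⊆ G ∧ T2 ⊆ H ∧
      (∀ v ∈ T3, v ∈ B.Y ∧ ∃ x ∈ B.M v, x ∈ B.S0 ψ F) ∧
      F ⊆ G ∧ (∀ x ∈ H, (B.U x \ F).card < ψ) ∧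
      H ⊆ B.Sf ψ F T3 ∧ B.F1 ψ F T3 ⊆ G ∧
      ((T0.card + P.card + T0'.card : ℕ) : ℝ) ≤
        p * G.card + p * (B.b * t) + G.card * (1 - p) ^ β ∧
      ψ * T2.card ≤ 2 * t ∧ ψ * T3.card ≤ 2 * t ∧
      B.D * (B.Sf ψ F T3).card ≤ B.b * (B.F1 ψ F T3).card + 4 * ψ * t := by
  have het := B.edge_t hH hG hHG ht
  -- step 1
  set G' := G.filter fun y => B.b ≤ 2 * (B.M y ∩ H).card with hG'
  have hGs : ∀ y ∈ G', (B.M y ∩ H).biUnion B.U ⊆ G := by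
    intro y _
    refine Finset.biUnion_subset.2 fun x hx => hHG x (Finset.mem_inter.1 hx).2
  obtain ⟨T0, hT0, hT0c⟩ := random_subset G G' (fun y => ((B.M y \ H).card : ℝ))
    (fun y => (B.M y ∩ H).biUnion B.U) hGs β
    (fun y hy => hβ y (Finset.mem_filter.1 hy).1 (Finset.mem_filter.1 hy).2) p hp hp1
  set T0' := G'.filter fun y => Disjoint ((B.M y ∩ H).biUnion B.U) T0 with hT0'
  set P := (T0.biUnion B.M) \ H with hP
  have hMH : (T0.biUnion B.M) \ P = (T0.biUnion B.M) ∩ H := by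
    rw [hP]; exact Finset.sdiff_sdiff_self_left _ _
  set F' := ((T0.biUnion B.M) \ P).biUnion B.U ∪ T0' with hF'
  have hF'G : F' ⊆ G := by
    rw [hF', hMH]
    refine Finset.union_subset (Finset.biUnion_subset.2 fun x hx =>
      hHG x (Finset.mem_inter.1 hx).2) ?_
    exact (Finset.filter_subset _ _).trans (Finset.filter_subset _ _)
  have hG'F : G' ⊆ F' := by
    intro y hy
    by_cases hd : Disjoint ((B.M y ∩ H).biUnion B.U) T0
    · exact Finset.mem_union_right _ (Finset.mem_filter.2 ⟨hy, hd⟩)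
    · rw [Finset.not_disjoint_iff] at hd
      obtain ⟨z, hz, hzT⟩ := hd
      obtain ⟨x, hx, hzx⟩ := Finset.mem_biUnion.1 hz
      obtain ⟨hxy, hxH⟩ := Finset.mem_inter.1 hx
      refine Finset.mem_union_left _ ?_
      rw [hMH]
      refine Finset.mem_biUnion.2 ⟨x, Finset.mem_inter.2 ⟨Finset.mem_biUnion.2 ⟨z, hzT, ?_⟩, hxH⟩, ?_⟩
      · exact (B.hUM x (hH hxH) z (hG (hT0 hzT))).1 hzx
      · exact (B.hUM x (hH hxH) y (hG (Finset.filter_subset _ _ hy))).2 hxy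
  have hmiss : (G \ F').card ≤ 2 * t := by
    have h1 : ∑ y ∈ G \ F', B.b ≤ ∑ y ∈ G \ F', 2 * (B.M y \ H).card := by
      refine Finset.sum_le_sum fun y hy => ?_
      obtain ⟨hyG, hyF⟩ := Finset.mem_sdiff.1 hy
      have : ¬ B.b ≤ 2 * (B.M y ∩ H).card := fun h =>
        hyF (hG'F (Finset.mem_filter.2 ⟨hyG, h⟩))
      have h2 := Finset.card_sdiff_add_card_inter (B.M y) H
      rw [B.cM y (hG hyG)] at h2
      omega
    have h2 : ∑ y ∈ G \ F', 2 * (B.M y \ H).card ≤ 2 * (B.b * t) := by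
      rw [← Finset.mul_sum]
      refine Nat.mul_le_mul_left _ (le_trans ?_ het)
      exact Finset.sum_le_sum_of_subset Finset.sdiff_subset
    rw [Finset.sum_const, smul_eq_mul] at h1
    have h3 : B.b * (G \ F').card ≤ B.b * (2 * t) := by nlinarith
    exact Nat.le_of_mul_le_mul_left h3 hb
  -- step 2
  obtain ⟨T2, hT2, hT2c, hT2p⟩ := greedy H B.U (G \ F') ψ hψ
  set F := B.Fz T0 P T0' T2 with hF
  have hFF : F = F' ∪ T2.biUnion B.U := rfl
  have hFG : F ⊆ G := by
    rw [hFF]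
    exact Finset.union_subset hF'G (Finset.biUnion_subset.2 fun x hx => hHG x (hT2 hx))
  have hcov : ∀ x ∈ H, (B.U x \ F).card < ψ := by
    intro x hx
    refine lt_of_le_of_lt (Finset.card_le_card ?_) (hT2p x hx)
    intro z hz
    rw [hFF] at hz
    simp only [Finset.mem_sdiff, Finset.mem_union, not_or, Finset.mem_inter] at hz ⊢
    exact ⟨⟨hz.1, hHG x hx hz.1, hz.2.1⟩, hz.2.2⟩
  have hHS0 : H ⊆ B.S0 ψ F := fun x hx => Finset.mem_filter.2 ⟨hH hx, hcov x hx⟩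
  have hS0X : B.S0 ψ F ⊆ B.X := Finset.filter_subset _ _
  have hS0H : (B.S0 ψ F \ H).card ≤ 2 * t := by
    have h1 : ∑ x ∈ B.S0 ψ F \ H, B.D ≤ ∑ x ∈ B.S0 ψ F \ H, 2 * (B.U x ∩ G).card := by
      refine Finset.sum_le_sum fun x hx => ?_
      obtain ⟨hx0, _⟩ := Finset.mem_sdiff.1 hx
      have hx1 := (Finset.mem_filter.1 hx0).2
      have h2 := Finset.card_sdiff_add_card_inter (B.U x) F
      rw [B.cU x (hS0X hx0)] at h2
      have h3 : (B.U x ∩ F).card ≤ (B.U x ∩ G).card :=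
        Finset.card_le_card (Finset.inter_subset_inter_left hFG)
      omega
    have h2 : ∑ x ∈ B.S0 ψ F \ H, 2 * (B.U x ∩ G).card ≤ 2 * (B.b * t) := by
      rw [← Finset.mul_sum, B.dc (Finset.sdiff_subset.trans hS0X) hG]
      refine Nat.mul_le_mul_left _ (le_trans ?_ het)
      refine Finset.sum_le_sum fun y _ => Finset.card_le_card ?_
      intro z hz
      simp only [Finset.mem_inter, Finset.mem_sdiff] at hz ⊢
      exact ⟨hz.1, hz.2.2⟩
    rw [Finset.sum_const, smul_eq_mul] at h1
    have h3 : B.D * (B.S0 ψ F \ H).card ≤ B.D * (2 * t) := by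
      have := Nat.mul_le_mul_right (2 * t) B.hbD
      nlinarith
    exact Nat.le_of_mul_le_mul_left h3 (by have := B.hbD; omega)
  -- step 3
  obtain ⟨T3, hT3, hT3c, hT3p⟩ := greedy
    ((B.Y \ G).filter fun v => (B.M v ∩ B.S0 ψ F).Nonempty) B.M (B.S0 ψ F \ H) ψ hψ
  have hMG : ∀ v ∈ B.Y \ G, Disjoint (B.M v) H := by
    intro v hv
    obtain ⟨hvY, hvG⟩ := Finset.mem_sdiff.1 hv
    rw [Finset.disjoint_left]
    intro x hx hxH
    exact hvG (hHG x hxH ((B.hUM x (hH hxH) v hvY).2 hx))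
  have hHS : H ⊆ B.Sf ψ F T3 := by
    intro x hx
    refine Finset.mem_sdiff.2 ⟨hHS0 hx, ?_⟩
    intro h
    obtain ⟨v, hv, hxv⟩ := Finset.mem_biUnion.1 h
    exact Finset.disjoint_left.1 (hMG v (Finset.filter_subset _ _ (hT3 hv))) hxv hx
  have hSX : B.Sf ψ F T3 ⊆ B.X := Finset.sdiff_subset.trans hS0X
  have hout : ∀ y ∈ B.Y \ G, (B.M y ∩ B.Sf ψ F T3).card < ψ := by
    intro y hy
    by_cases hne : (B.M y ∩ B.S0 ψ F).Nonempty
    · refine lt_of_le_of_lt (Finset.card_le_card ?_)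
        (hT3p y (Finset.mem_filter.2 ⟨hy, hne⟩))
      intro z hz
      simp only [Sf, Finset.mem_inter, Finset.mem_sdiff] at hz ⊢
      exact ⟨⟨hz.1, hz.2.1, Finset.disjoint_left.1 (hMG y hy) hz.1⟩, hz.2.2⟩
    · rw [Finset.not_nonempty_iff_eq_empty] at hne
      have : B.M y ∩ B.Sf ψ F T3 = ∅ := by
        apply Finset.subset_empty.1
        rw [← hne]
        exact Finset.inter_subset_inter_left Finset.sdiff_subset
      rw [this]; simp; omega
  have hF1G : B.F1 ψ F T3 ⊆ G := by
    refine Finset.union_subset hFG ?_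
    intro y hy
    obtain ⟨hyY, hyψ⟩ := Finset.mem_filter.1 hy
    by_contra hyG
    have := hout y (Finset.mem_sdiff.2 ⟨hyY, hyG⟩)
    omega
  refine ⟨T0, P, T0', T2, T3, F, rfl, hT0, Finset.sdiff_subset, ?_, hT2, ?_, hFG, hcov, hHS, hF1G,
    ?_, hT2c.trans hmiss, hT3c.trans hS0H, ?_⟩
  · exact (Finset.filter_subset _ _).trans (Finset.filter_subset _ _)
  · intro v hv
    obtain ⟨h1, h2⟩ := Finset.mem_filter.1 (hT3 hv)
    obtain ⟨x, hx⟩ := h2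
    exact ⟨(Finset.mem_sdiff.1 h1).1, x, (Finset.mem_inter.1 hx).1, (Finset.mem_inter.1 hx).2⟩
  · have hPc : (P.card : ℝ) ≤ ∑ y ∈ T0, ((B.M y \ H).card : ℝ) := by
      have : P ⊆ T0.biUnion fun y => B.M y \ H := by
        intro z hz
        simp only [hP, Finset.mem_sdiff, Finset.mem_biUnion] at hz ⊢
        obtain ⟨⟨y, hy, hzy⟩, hzH⟩ := hz
        exact ⟨y, hy, hzy, hzH⟩
      exact_mod_cast (Finset.card_le_card this).trans Finset.card_biUnion_le
    have hw : ∑ y ∈ G, ((B.M y \ H).card : ℝ) ≤ B.b * t := by exact_mod_cast het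
    have hg' : (G'.card : ℝ) ≤ G.card := by
      exact_mod_cast Finset.card_le_card (Finset.filter_subset _ _)
    have hpow : 0 ≤ (1 - p) ^ β := pow_nonneg (by linarith) _
    have e1 := mul_le_mul_of_nonneg_left hw hp.le
    have e2 := mul_le_mul_of_nonneg_right hg' hpow
    push_cast
    linarith
  · have hs : B.D * (B.Sf ψ F T3).card = ∑ x ∈ B.Sf ψ F T3, (B.U x ∩ B.F1 ψ F T3).card
        + (∑ x ∈ B.Sf ψ F T3, (B.U x ∩ (G \ B.F1 ψ F T3)).card
        + ∑ x ∈ B.Sf ψ F T3, (B.U x \ G).card) := by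
      rw [← Finset.sum_add_distrib, ← Finset.sum_add_distrib,
        Finset.sum_congr rfl (g := fun _ => B.D)]
      · simp [mul_comm]
      · intro x hx
        rw [← B.cU x (hSX hx), ← Finset.card_sdiff_add_card_inter (B.U x) G,
          ← Finset.card_sdiff_add_card_inter (B.U x ∩ G) (B.F1 ψ F T3)]
        have e1 : B.U x ∩ G ∩ B.F1 ψ F T3 = B.U x ∩ B.F1 ψ F T3 := by
          rw [Finset.inter_assoc, Finset.inter_eq_right.2 hF1G]
        have e2 : (B.U x ∩ G) \ B.F1 ψ F T3 = B.U x ∩ (G \ B.F1 ψ F T3) :=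
          Finset.inter_sdiff_assoc _ _ _
        rw [e1, e2]
        ring
    have b1 : ∑ x ∈ B.Sf ψ F T3, (B.U x ∩ B.F1 ψ F T3).card ≤ B.b * (B.F1 ψ F T3).card := by
      rw [B.dc hSX (hF1G.trans hG)]
      refine (Finset.sum_le_sum (g := fun _ => B.b) fun y hy => ?_).trans (by simp [mul_comm])
      rw [← B.cM y (hG (hF1G hy))]
      exact Finset.card_le_card Finset.inter_subset_left
    have b2 : ∑ x ∈ B.Sf ψ F T3, (B.U x ∩ (G \ B.F1 ψ F T3)).card ≤ ψ * (2 * t) := by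
      rw [B.dc hSX (Finset.sdiff_subset.trans hG)]
      refine (Finset.sum_le_sum (g := fun _ => ψ) fun y hy => ?_).trans ?_
      · obtain ⟨hyG, hyF⟩ := Finset.mem_sdiff.1 hy
        by_contra hcon
        push Not at hcon
        exact hyF (Finset.mem_union_right _ (Finset.mem_filter.2 ⟨hG hyG, hcon.le⟩))
      · rw [Finset.sum_const, smul_eq_mul, mul_comm]
        refine Nat.mul_le_mul_left _ (le_trans (Finset.card_le_card ?_) hmiss)
        refine Finset.sdiff_subset_sdiff subset_rfl ?_
        exact Finset.subset_union_left.trans (Finset.subset_union_left (s₁ := F))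
    have b3 : ∑ x ∈ B.Sf ψ F T3, (B.U x \ G).card ≤ ψ * (2 * t) := by
      have : ∑ x ∈ B.Sf ψ F T3, (B.U x \ G).card
          = ∑ x ∈ B.Sf ψ F T3 \ H, (B.U x \ G).card := by
        symm
        refine Finset.sum_subset Finset.sdiff_subset ?_
        intro x hx hxn
        have hxH : x ∈ H := by
          by_contra h; exact hxn (Finset.mem_sdiff.2 ⟨hx, h⟩)
        rw [Finset.sdiff_eq_empty_iff_subset.2 (hHG x hxH)]; rfl
      rw [this]
      refine (Finset.sum_le_sum (g := fun _ => ψ) fun x hx => ?_).trans ?_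
      · have hx0 := (Finset.mem_sdiff.1 (Finset.mem_sdiff.1 hx).1).1
        have := (Finset.mem_filter.1 hx0).2
        refine le_trans (Finset.card_le_card ?_) this.le
        exact Finset.sdiff_subset_sdiff subset_rfl hFG
      · rw [Finset.sum_const, smul_eq_mul, mul_comm]
        refine Nat.mul_le_mul_left _ (le_trans (Finset.card_le_card ?_) hS0H)
        exact Finset.sdiff_subset_sdiff Finset.sdiff_subset subset_rfl
    rw [hs]
    nlinarith

end BG

/-! ### Levels of the Boolean lattice -/

def lvl (n j : ℕ) : Finset (Finset (Fin n)) := Finset.powersetCard j Finset.univ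

def up {n : ℕ} (x : Finset (Fin n)) : Finset (Finset (Fin n)) :=
  Finset.univ.filter fun y => x ⊆ y ∧ y.card = x.card + 1

def dn {n : ℕ} (y : Finset (Fin n)) : Finset (Finset (Fin n)) :=
  Finset.univ.filter fun x => x ⊆ y ∧ y.card = x.card + 1

lemma mem_lvl {n j : ℕ} {x : Finset (Fin n)} : x ∈ lvl n j ↔ x.card = j := by
  simp [lvl, Finset.mem_powersetCard]

lemma mem_up {n : ℕ} {x y : Finset (Fin n)} : y ∈ up x ↔ x ⊆ y ∧ y.card = x.card + 1 := by
  simp [up]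

lemma mem_dn {n : ℕ} {x y : Finset (Fin n)} : x ∈ dn y ↔ x ⊆ y ∧ y.card = x.card + 1 := by
  simp [dn]

lemma up_eq {n : ℕ} (x : Finset (Fin n)) : up x = xᶜ.image fun a => insert a x := by
  ext y
  simp only [mem_up, Finset.mem_image, Finset.mem_compl]
  constructor
  · rintro ⟨h1, h2⟩
    have h3 : (y \ x).card = 1 := by rw [Finset.card_sdiff_of_subset h1]; omega
    obtain ⟨a, ha⟩ := Finset.card_eq_one.1 h3
    have haa : a ∈ y \ x := by rw [ha]; simp
    refine ⟨a, (Finset.mem_sdiff.1 haa).2, ?_⟩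
    rw [Finset.insert_eq, ← ha, Finset.sdiff_union_of_subset h1]
  · rintro ⟨a, ha, rfl⟩
    exact ⟨Finset.subset_insert _ _, Finset.card_insert_of_notMem ha⟩

lemma dn_eq {n : ℕ} (y : Finset (Fin n)) : dn y = y.image fun a => y.erase a := by
  ext x
  simp only [mem_dn, Finset.mem_image]
  constructor
  · rintro ⟨h1, h2⟩
    have h3 : (y \ x).card = 1 := by rw [Finset.card_sdiff_of_subset h1]; omega
    obtain ⟨a, ha⟩ := Finset.card_eq_one.1 h3
    have haa : a ∈ y \ x := by rw [ha]; simp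
    refine ⟨a, (Finset.mem_sdiff.1 haa).1, ?_⟩
    rw [Finset.erase_eq, ← ha, Finset.sdiff_sdiff_eq_self h1]
  · rintro ⟨a, ha, rfl⟩
    refine ⟨Finset.erase_subset _ _, ?_⟩
    rw [Finset.card_erase_of_mem ha]
    have := Finset.card_pos.2 ⟨a, ha⟩
    omega

lemma card_up {n : ℕ} (x : Finset (Fin n)) : (up x).card = n - x.card := by
  rw [up_eq, Finset.card_image_of_injOn, Finset.card_compl, Fintype.card_fin]
  intro a ha b hb hab
  have ha' : a ∉ x := by simpa using ha
  have : a ∈ insert b x := by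
    have h : insert a x = insert b x := hab
    rw [← h]; exact Finset.mem_insert_self _ _
  rcases Finset.mem_insert.1 this with h | h
  · exact h
  · exact absurd h ha'

lemma card_dn {n : ℕ} (y : Finset (Fin n)) : (dn y).card = y.card := by
  rw [dn_eq, Finset.card_image_of_injOn]
  intro a ha b hb hab
  by_contra hne
  have h : y.erase a = y.erase b := hab
  have : a ∈ y.erase b := Finset.mem_erase.2 ⟨hne, ha⟩
  rw [← h] at this
  simp at this

lemma hd_of_mem_up {n : ℕ} {x y : Finset (Fin n)} (h : y ∈ up x) : hd x y ≤ 1 := by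
  obtain ⟨h1, h2⟩ := mem_up.1 h
  have : symmDiff x y = y \ x := by
    rw [symmDiff_def]
    simp [Finset.sdiff_eq_empty_iff_subset.2 h1]
  rw [hd, this, Finset.card_sdiff_of_subset h1]
  omega

lemma hd_two_of_common {n : ℕ} {x x' y : Finset (Fin n)} (h : y ∈ up x) (h' : y ∈ up x') :
    hd x x' ≤ 2 := by
  have h1 := hd_of_mem_up h
  have h2 := hd_of_mem_up h'
  have h3 := hd_triangle x y x'
  rw [hd_comm y x'] at h3
  omega

def lb (n j : ℕ) (h : 2 * j + 1 ≤ n) : BG (Finset (Fin n)) where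
  X := lvl n j
  Y := lvl n (j+1)
  U := up
  M := dn
  D := n - j
  b := j + 1
  hU := by
    intro x hx y hy
    rw [mem_lvl] at *
    rw [(mem_up.1 hy).2, hx]
  hM := by
    intro x hx y hy
    rw [mem_lvl] at *
    have := (mem_dn.1 hy).2
    omega
  hUM := by intro x _ y _; rw [mem_up, mem_dn]
  cU := by intro x hx; rw [card_up, mem_lvl.1 hx]
  cM := by intro x hx; rw [card_dn, mem_lvl.1 hx]
  hbD := by omega

lemma up_inter_card {n : ℕ} {x x' : Finset (Fin n)} (hne : x ≠ x') (hc : x.card = x'.card) :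
    (up x ∩ up x').card ≤ 1 := by
  rw [Finset.card_le_one]
  have key : ∀ a ∈ up x ∩ up x', a = x ∪ x' := by
    intro a ha
    obtain ⟨h1, h2⟩ := Finset.mem_inter.1 ha
    obtain ⟨h1, h3⟩ := mem_up.1 h1
    obtain ⟨h2, h4⟩ := mem_up.1 h2
    symm
    apply Finset.eq_of_subset_of_card_le (Finset.union_subset h1 h2)
    rw [h3]
    by_contra hlt
    have h5 : (x ∪ x').card ≤ x.card := by omega
    have h6 := Finset.eq_of_subset_of_card_le (Finset.subset_union_left (s₁ := x) (s₂ := x')) h5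
    have h7 : x' ⊆ x := by rw [h6]; exact Finset.subset_union_right
    exact hne (Finset.eq_of_subset_of_card_le h7 hc.le).symm
  intro a ha b hb
  rw [key a ha, key b hb]

lemma cauchy_bound {n j : ℕ} {C : Finset (Finset (Fin n))} (hC : C ⊆ lvl n j) :
    (n - j)^2 * C.card ≤ (C.biUnion up).card * ((n - j) + C.card) := by
  set G := C.biUnion up with hG
  set D := n - j with hD
  have e1 : ∑ y ∈ G, (C.filter fun x => y ∈ up x).card = D * C.card := by
    have h := Finset.sum_card_bipartiteAbove_eq_sum_card_bipartiteBelow (s := C) (t := G)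
      (fun x y => y ∈ up x)
    simp only [Finset.bipartiteBelow] at h
    rw [← h]
    rw [Finset.sum_congr rfl (g := fun _ => D)]
    · simp [mul_comm]
    · intro x hx
      have : Finset.bipartiteAbove (fun x y => y ∈ up x) G x = up x := by
        ext y
        simp only [Finset.bipartiteAbove, Finset.mem_filter, and_iff_right_iff_imp]
        intro hy
        exact Finset.mem_biUnion.2 ⟨x, hx, hy⟩
      rw [this, card_up, mem_lvl.1 (hC hx)]
  have e2 : ∑ y ∈ G, (C.filter fun x => y ∈ up x).card ^ 2 ≤ C.card * (D + C.card) := by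
    have h1 : ∀ y ∈ G, (C.filter fun x => y ∈ up x).card ^ 2 =
        ∑ x ∈ C, ∑ x' ∈ C, if y ∈ up x ∩ up x' then 1 else 0 := by
      intro y _
      rw [sq, Finset.card_filter, Finset.sum_mul_sum]
      refine Finset.sum_congr rfl fun x _ => Finset.sum_congr rfl fun x' _ => ?_
      by_cases h1 : y ∈ up x <;> by_cases h2 : y ∈ up x' <;> simp [h1, h2]
    rw [Finset.sum_congr rfl h1, Finset.sum_comm]
    calc _ ≤ ∑ x ∈ C, (D + C.card) := ?_
      _ = _ := by simp
    refine Finset.sum_le_sum fun x hx => ?_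
    rw [Finset.sum_comm]
    calc _ ≤ ∑ x' ∈ C, ((if x' = x then D else 0) + 1) := ?_
      _ ≤ _ := by
        rw [Finset.sum_add_distrib]
        simp [hx]
    refine Finset.sum_le_sum fun x' hx' => ?_
    have h2 : ∑ y ∈ G, (if y ∈ up x ∩ up x' then 1 else 0) ≤ (up x ∩ up x').card := by
      rw [← Finset.card_filter]
      refine Finset.card_le_card fun y hy => (Finset.mem_filter.1 hy).2
    refine h2.trans ?_
    by_cases he : x' = x
    · subst he
      simp [card_up, mem_lvl.1 (hC hx), ← hD]
    · rw [if_neg he]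
      refine (up_inter_card (fun h => he h.symm) ?_)
      rw [mem_lvl.1 (hC hx), mem_lvl.1 (hC hx')]
  have e3 := sq_sum_le_card_mul_sum_sq (s := G) (f := fun y => (C.filter fun x => y ∈ up x).card)
  rw [e1, Nat.cast_id] at e3
  rcases Nat.eq_zero_or_pos C.card with h0 | h0
  · simp [h0]
  · have e4 := e3.trans (Nat.mul_le_mul_left _ e2)
    refine Nat.le_of_mul_le_mul_left ?_ h0
    calc _ = (D * C.card)^2 := by ring
      _ ≤ _ := e4
      _ = _ := by ring

lemma tree_bound {n j : ℕ} {y : Finset (Fin n)} (hy : y.card = j + 1) {S : Finset (Finset (Fin n))}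
    (hS : S ⊆ dn y) : S.card * (n - j - 1) ≤ (S.biUnion up).card := by
  have hc : ∀ x ∈ S, x.card = j := by
    intro x hx
    have := (mem_dn.1 (hS hx)).2
    omega
  have hm : ∀ x ∈ S, y ∈ up x := by
    intro x hx
    exact mem_up.2 (mem_dn.1 (hS hx))
  have h1 : (S.biUnion fun x => (up x).erase y).card = ∑ x ∈ S, ((up x).erase y).card := by
    apply Finset.card_biUnion
    intro x hx x' hx' hne
    rw [Function.onFun_apply]
    rw [Finset.disjoint_left]
    intro z hz hz'
    obtain ⟨hz1, hz2⟩ := Finset.mem_erase.1 hz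
    obtain ⟨_, hz3⟩ := Finset.mem_erase.1 hz'
    have := Finset.card_le_one.1 (up_inter_card hne (by rw [hc x hx, hc x' hx'])) z
      (Finset.mem_inter.2 ⟨hz2, hz3⟩) y (Finset.mem_inter.2 ⟨hm x hx, hm x' hx'⟩)
    exact hz1 this
  have h2 : ∑ x ∈ S, ((up x).erase y).card = S.card * (n - j - 1) := by
    rw [Finset.sum_congr rfl (g := fun _ => n - j - 1)]
    · simp
    · intro x hx
      rw [Finset.card_erase_of_mem (hm x hx), card_up, hc x hx]
  rw [← h2, ← h1]
  refine Finset.card_le_card ?_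
  exact Finset.biUnion_mono fun x _ => Finset.erase_subset _ _

lemma upShadow_eq {n : ℕ} (H : Finset (Finset (Fin n))) : Finset.upShadow H = H.biUnion up := by
  ext y
  rw [Finset.mem_upShadow_iff]
  simp only [Finset.mem_biUnion, up_eq, Finset.mem_image, Finset.mem_compl]

lemma kk_bound {n j : ℕ} (hj : 2 ≤ j) (hjn : j + 1 ≤ n) {H : Finset (Finset (Fin n))} (hH : H ⊆ lvl n j)
    (hc : (n - j + 2).choose 2 ≤ H.card) : (n - j + 2).choose 3 ≤ (H.biUnion up).card := by
  have h := Finset.kruskal_katona_lovasz_form (n := n) (i := 1) (r := n - j) (k := n - j + 2)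
    (𝒜 := H.compls) (by omega) (by omega) (by omega) ?_ ?_
  · simp only [Function.iterate_one] at h
    rw [Finset.shadow_compls, Finset.card_compls, upShadow_eq] at h
    refine le_trans (le_of_eq ?_) h
    apply Nat.choose_symm_of_eq_add; omega
  · intro x hx
    have hx' : xᶜ ∈ H := Finset.mem_compls.1 (by exact_mod_cast hx)
    have := mem_lvl.1 (hH hx')
    rw [Finset.card_compl, Fintype.card_fin] at this
    have h2 : x.card ≤ n := by simpa using Finset.card_le_univ x
    omega
  · rw [Finset.card_compls]
    refine le_trans (le_of_eq ?_) hc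
    apply Nat.choose_symm_of_eq_add; omega

lemma t_lower {n j r t : ℕ} (h2 : 2 * j + 1 ≤ n) (hj : 2 ≤ j) (hD : 20 ≤ n - j)
    {H : Finset (Finset (Fin n))} (hH : H ⊆ lvl n j) (hr : (n - j)^2 ≤ 2 * r * H.card)
    (hr1 : 1 ≤ r)
    (ht : (H.biUnion up).card = H.card + t) (hb : j + 1 < n - j) :
    (H.biUnion up).card ≤ (n - j) * t ∧ (n - j)^2 ≤ 12 * r * t := by
  set D := n - j with hDD
  set g := (H.biUnion up).card with hg
  set a := H.card with ha
  have hcau := cauchy_bound hH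
  have hedge := (lb n j h2).edge_le (H := H) (G := H.biUnion up) hH
    (Finset.biUnion_subset.2 fun x hx => (lb n j h2).hU x (hH hx))
    (fun x hx => Finset.subset_biUnion_of_mem up hx)
  change D * a ≤ (j+1) * g at hedge
  change D^2 * a ≤ g * (D + a) at hcau
  have h1 : g ≤ D * t := by
    have : D * a + g ≤ D * g := by
      calc D * a + g ≤ (j+1)*g + g := by omega
        _ = (j+2) * g := by ring
        _ ≤ D * g := Nat.mul_le_mul_right _ (by omega)
    rw [ht, mul_add] at this
    omega
  refine ⟨h1, ?_⟩
  rcases Nat.lt_or_ge a ((D+2).choose 2) with hlt | hge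
  · rw [Nat.choose_two_right] at hlt
    have hlt2 : 2 * a < (D+2)*(D+1) := by
      have : (D+2)*(D+2-1)/2*2 ≤ (D+2)*(D+2-1) := Nat.div_mul_le_self _ _
      simp only [Nat.add_succ_sub_one] at this hlt
      omega
    have h4 : 4 * (D + a) ≤ 3 * D^2 := by nlinarith
    have h5 : 4 * a ≤ 3 * g := by
      have : D^2 * (4 * a) ≤ D^2 * (3 * g) := by
        calc _ = 4 * (D^2 * a) := by ring
          _ ≤ 4 * (g * (D+a)) := by omega
          _ = g * (4 * (D+a)) := by ring
          _ ≤ g * (3 * D^2) := Nat.mul_le_mul_left _ h4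
          _ = _ := by ring
      exact Nat.le_of_mul_le_mul_left this (by positivity)
    have h6 : a ≤ 3 * t := by omega
    calc D^2 ≤ 2 * r * a := hr
      _ ≤ 2 * r * (3 * t) := Nat.mul_le_mul_left _ h6
      _ ≤ _ := by nlinarith [Nat.zero_le (r*t)]
  · by_cases hbig : 12 * a ≤ D^3
    · have h3 := kk_bound hj (by omega) hH hge
      change (D+2).choose 3 ≤ g at h3
      have h4 : 6 * (D+2).choose 3 = (D+2)*(D+1)*D := by
        have := Nat.descFactorial_eq_factorial_mul_choose (D+2) 3
        simp [Nat.descFactorial, Nat.factorial] at this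
        rw [← this]; ring
      have h5 : D^3 ≤ 6 * g := by nlinarith
      have h6 : D^3 ≤ 12 * t := by omega
      have : D^2 ≤ D^3 := Nat.pow_le_pow_right (by omega) (by omega)
      nlinarith
    · have h3 : D * D^2 ≤ D * (12 * t) := by
        have : D^3 ≤ 12 * (D * t) := by omega
        nlinarith
      have := Nat.le_of_mul_le_mul_left h3 (by omega)
      nlinarith


/-! ### Truncated up-sets, cluster weights -/

def R2 {n : ℕ} (u v : Finset (Fin n)) : Prop := hd u v ≤ 2

def bd {n : ℕ} (A : Finset (Finset (Fin n))) : Finset (Finset (Fin n)) := A.biUnion up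

lemma mem_bd {n : ℕ} {A : Finset (Finset (Fin n))} {y : Finset (Fin n)} :
    y ∈ bd A ↔ ∃ x ∈ A, y ∈ up x := by simp [bd]

def IsUpf {n : ℕ} (j : ℕ) (U : Finset (Finset (Fin n))) : Prop :=
  (∀ u ∈ U, u.card ≤ j) ∧ ∀ u ∈ U, ∀ v : Finset (Fin n), u ⊆ v → v.card ≤ j → v ∈ U

def upf (n j : ℕ) : Finset (Finset (Finset (Fin n))) := Finset.univ.filter (IsUpf j)

lemma mem_upf {n j : ℕ} {U : Finset (Finset (Fin n))} : U ∈ upf n j ↔ IsUpf j U := by simp [upf]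

def tp {n : ℕ} (j : ℕ) (U : Finset (Finset (Fin n))) : Finset (Finset (Fin n)) :=
  U.filter fun u => u.card = j

lemma mem_tp {n j : ℕ} {U : Finset (Finset (Fin n))} {u : Finset (Fin n)} :
    u ∈ tp j U ↔ u ∈ U ∧ u.card = j := by simp [tp]

lemma tp_sub {n j : ℕ} (U : Finset (Finset (Fin n))) : tp j U ⊆ lvl n j := by
  intro u hu; exact mem_lvl.2 (mem_tp.1 hu).2

def wt {n : ℕ} (j : ℕ) (U : Finset (Finset (Fin n))) : ℝ := (1/2 : ℝ)^(bd (tp j U)).card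

lemma wt_nonneg {n : ℕ} (j : ℕ) (U : Finset (Finset (Fin n))) : 0 ≤ wt j U := by
  unfold wt; positivity

def Zset (n j : ℕ) (B : Finset (Finset (Fin n))) : Finset (Finset (Finset (Fin n))) :=
  (upf n j).filter fun U => tp j U ⊆ B

def Zs (n j : ℕ) (B : Finset (Finset (Fin n))) : ℝ := ∑ U ∈ Zset n j B, wt j U

def Ws (n j : ℕ) (A : Finset (Finset (Fin n))) : ℕ := (Zset n j A).card

def Cl (n j : ℕ) (x : Finset (Fin n)) : Finset (Finset (Finset (Fin n))) :=
  (upf n j).filter fun U => Linked R2 (tp j U) ∧ x ∈ tp j U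

def sg (n j : ℕ) (x : Finset (Fin n)) : ℝ := ∑ U ∈ Cl n j x, wt j U

def Cl2 (n j : ℕ) (x : Finset (Fin n)) : Finset (Finset (Finset (Fin n))) :=
  (Cl n j x).filter fun U => 2 ≤ (tp j U).card

def sg2 (n j : ℕ) (x : Finset (Fin n)) : ℝ := ∑ U ∈ Cl2 n j x, wt j U

lemma mem_Zset {n j : ℕ} {B U : Finset (Finset (Fin n))} :
    U ∈ Zset n j B ↔ IsUpf j U ∧ tp j U ⊆ B := by simp [Zset, mem_upf]

lemma mem_Cl {n j : ℕ} {U : Finset (Finset (Fin n))} {x : Finset (Fin n)} :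
    U ∈ Cl n j x ↔ IsUpf j U ∧ Linked R2 (tp j U) ∧ x ∈ tp j U := by simp [Cl, mem_upf]

lemma exists_sup {n j : ℕ} (hj : j ≤ n) {u : Finset (Fin n)} (hu : u.card ≤ j) :
    ∃ x, u ⊆ x ∧ x.card = j := by
  obtain ⟨x, h1, _, h2⟩ := Finset.exists_subsuperset_card_eq (Finset.subset_univ u) hu
    (by simpa using hj)
  exact ⟨x, h1, h2⟩

lemma upf_conn {n j : ℕ} {U C : Finset (Finset (Fin n))} (hU : IsUpf j U)
    (hC : ∀ u ∈ C, ∀ v ∈ tp j U, R2 u v → v ∈ C) {u : Finset (Fin n)} (hu : u ∈ U) :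
    ∀ (l : ℕ) (x x' : Finset (Fin n)), u ⊆ x → u ⊆ x' → x.card = j → x'.card = j →
      (x' \ x).card = l → x ∈ C → x' ∈ C := by
  intro l
  induction l with
  | zero =>
    intro x x' _ _ hx hx' h0 hxC
    have h1 : x' ⊆ x := Finset.sdiff_eq_empty_iff_subset.1 (Finset.card_eq_zero.1 h0)
    rw [Finset.eq_of_subset_of_card_le h1 (by omega)]
    exact hxC
  | succ l ih =>
    intro x x' hux hux' hx hx' hl hxC
    obtain ⟨a, ha⟩ : (x' \ x).Nonempty := Finset.card_pos.1 (by omega)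
    have hcc : (x \ x').card = (x' \ x).card := Finset.card_sdiff_comm (by omega)
    obtain ⟨b, hb⟩ : (x \ x').Nonempty := Finset.card_pos.1 (by omega)
    rw [Finset.mem_sdiff] at ha hb
    have hay : a ∉ x.erase b := fun h => ha.2 (Finset.mem_of_mem_erase h)
    have hc1 : (insert a (x.erase b)).card = j := by
      rw [Finset.card_insert_of_notMem hay, Finset.card_erase_of_mem hb.1]
      have := Finset.card_pos.2 ⟨b, hb.1⟩
      omega
    have hu1 : u ⊆ insert a (x.erase b) := by
      intro z hz
      refine Finset.mem_insert_of_mem (Finset.mem_erase.2 ⟨?_, hux hz⟩)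
      rintro rfl
      exact hb.2 (hux' hz)
    refine ih (insert a (x.erase b)) x' hu1 hux' hc1 hx' ?_ ?_
    · have : x' \ insert a (x.erase b) = (x' \ x).erase a := by
        ext z
        simp only [Finset.mem_sdiff, Finset.mem_insert, Finset.mem_erase]
        constructor
        · rintro ⟨h1, h2⟩
          push Not at h2
          refine ⟨h2.1, h1, h2.2 ?_⟩
          rintro rfl
          exact hb.2 h1
        · rintro ⟨h1, h2, h3⟩
          refine ⟨h2, ?_⟩
          push Not
          exact ⟨h1, fun _ => h3⟩
      rw [this, Finset.card_erase_of_mem (Finset.mem_sdiff.2 ha)]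
      omega
    · refine hC x hxC _ (mem_tp.2 ⟨hU.2 u hu _ hu1 hc1.le, hc1⟩) ?_
      have hab : a ≠ b := by rintro rfl; exact ha.2 hb.1
      refine hd_two_of_common (y := insert a x) ?_ ?_
      · exact mem_up.2 ⟨Finset.subset_insert _ _, Finset.card_insert_of_notMem ha.2⟩
      · refine mem_up.2 ⟨Finset.insert_subset_insert _ (Finset.erase_subset _ _), ?_⟩
        rw [hc1, Finset.card_insert_of_notMem ha.2, hx]

lemma exists_split {n j : ℕ} (hj : j ≤ n) {U : Finset (Finset (Fin n))} (hU : IsUpf j U)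
    {x : Finset (Fin n)} (hx : x ∈ tp j U) :
    ∃ U1 ⊆ U, U1 ∈ Cl n j x ∧ IsUpf j (U \ U1) ∧ tp j (U \ U1) = tp j U \ tp j U1 ∧
      (∀ u ∈ tp j U1, ∀ v ∈ tp j U, R2 u v → v ∈ tp j U1) ∧
      Disjoint (bd (tp j U1)) (bd (tp j (U \ U1))) := by
  obtain ⟨C, hCU, hxC, hlink, hcl⟩ := exists_component (R := R2 (n := n))
    (fun u v h => by unfold R2 at *; rwa [hd_comm]) (tp j U) hx
  have htp : tp j (U.filter fun u => ∃ c ∈ C, u ⊆ c) = C := by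
    ext c
    simp only [mem_tp, Finset.mem_filter]
    constructor
    · rintro ⟨⟨h1, c', hc', hs⟩, h2⟩
      have : c = c' := Finset.eq_of_subset_of_card_le hs (by rw [(mem_tp.1 (hCU hc')).2, h2])
      rwa [this]
    · intro hc
      obtain ⟨h1, h2⟩ := mem_tp.1 (hCU hc)
      exact ⟨⟨h1, c, hc, subset_rfl⟩, h2⟩
  have hup1 : IsUpf j (U.filter fun u => ∃ c ∈ C, u ⊆ c) := by
    refine ⟨fun u hu => hU.1 u (Finset.mem_filter.1 hu).1, ?_⟩
    intro u hu v huv hv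
    obtain ⟨huU, c, hc, huc⟩ := Finset.mem_filter.1 hu
    obtain ⟨x', hvx, hx'⟩ := exists_sup hj hv
    refine Finset.mem_filter.2 ⟨hU.2 u huU v huv hv, x', ?_, hvx⟩
    exact upf_conn hU hcl huU _ c x' huc (huv.trans hvx) (mem_tp.1 (hCU hc)).2 hx' rfl hc
  have htd : tp j (U \ U.filter fun u => ∃ c ∈ C, u ⊆ c) = tp j U \ C := by
    conv_rhs => rw [← htp]
    ext c
    simp only [mem_tp, Finset.mem_sdiff]
    tauto
  refine ⟨U.filter fun u => ∃ c ∈ C, u ⊆ c, Finset.filter_subset _ _, ?_, ?_, ?_, ?_, ?_⟩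
  · rw [mem_Cl, htp]
    exact ⟨hup1, hlink, hxC⟩
  · refine ⟨fun u hu => hU.1 u (Finset.mem_sdiff.1 hu).1, ?_⟩
    intro u hu v huv hv
    obtain ⟨h1, h2⟩ := Finset.mem_sdiff.1 hu
    refine Finset.mem_sdiff.2 ⟨hU.2 u h1 v huv hv, fun h3 => h2 ?_⟩
    obtain ⟨_, c, hc, hvc⟩ := Finset.mem_filter.1 h3
    exact Finset.mem_filter.2 ⟨h1, c, hc, huv.trans hvc⟩
  · rw [htd, htp]
  · rw [htp]; exact hcl
  · rw [htd, htp, Finset.disjoint_left]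
    intro y hy hy'
    obtain ⟨c, hc, hyc⟩ := mem_bd.1 hy
    obtain ⟨c', hc', hyc'⟩ := mem_bd.1 hy'
    obtain ⟨h1, h2⟩ := Finset.mem_sdiff.1 hc'
    exact h2 (hcl c hc c' h1 (hd_two_of_common hyc hyc'))

/-- a chosen component part -/
def cp {n : ℕ} (j : ℕ) (x : Finset (Fin n)) (U : Finset (Finset (Fin n))) : Finset (Finset (Fin n)) :=
  if h : j ≤ n ∧ IsUpf j U ∧ x ∈ tp j U then (exists_split h.1 h.2.1 h.2.2).choose else ∅

lemma cp_spec {n j : ℕ} (hj : j ≤ n) {U : Finset (Finset (Fin n))} (hU : IsUpf j U)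
    {x : Finset (Fin n)} (hx : x ∈ tp j U) :
    cp j x U ⊆ U ∧ cp j x U ∈ Cl n j x ∧ IsUpf j (U \ cp j x U) ∧
      tp j (U \ cp j x U) = tp j U \ tp j (cp j x U) ∧
      (∀ u ∈ tp j (cp j x U), ∀ v ∈ tp j U, R2 u v → v ∈ tp j (cp j x U)) ∧
      Disjoint (bd (tp j (cp j x U))) (bd (tp j (U \ cp j x U))) := by
  have h : j ≤ n ∧ IsUpf j U ∧ x ∈ tp j U := ⟨hj, hU, hx⟩
  unfold cp
  rw [dif_pos h]
  exact (exists_split h.1 h.2.1 h.2.2).choose_spec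

lemma tp_mono {n j : ℕ} {U U' : Finset (Finset (Fin n))} (h : U ⊆ U') : tp j U ⊆ tp j U' :=
  Finset.filter_subset_filter _ h

lemma wt_split {n j : ℕ} (hj : j ≤ n) {U : Finset (Finset (Fin n))} (hU : IsUpf j U)
    {x : Finset (Fin n)} (hx : x ∈ tp j U) :
    wt j U = wt j (cp j x U) * wt j (U \ cp j x U) := by
  obtain ⟨h1, _, _, h4, _, h6⟩ := cp_spec hj hU hx
  unfold wt
  rw [← pow_add, ← Finset.card_union_of_disjoint h6]
  congr 2
  rw [h4]
  ext y
  simp only [Finset.mem_union, mem_bd]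
  constructor
  · rintro ⟨c, hc, hy⟩
    by_cases hcc : c ∈ tp j (cp j x U)
    · exact Or.inl ⟨c, hcc, hy⟩
    · exact Or.inr ⟨c, Finset.mem_sdiff.2 ⟨hc, hcc⟩, hy⟩
  · rintro (⟨c, hc, hy⟩ | ⟨c, hc, hy⟩)
    · exact ⟨c, tp_mono h1 hc, hy⟩
    · exact ⟨c, (Finset.mem_sdiff.1 hc).1, hy⟩

lemma Zs_step {n j : ℕ} (hj : j ≤ n) (B : Finset (Finset (Fin n))) (x : Finset (Fin n)) :
    Zs n j B ≤ Zs n j (B.erase x) + ∑ U1 ∈ Cl n j x, wt j U1 * Zs n j (B.erase x \ tp j U1) := by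
  unfold Zs
  rw [← Finset.sum_filter_add_sum_filter_not (Zset n j B) (fun U => x ∉ tp j U)]
  refine add_le_add ?_ ?_
  · refine Finset.sum_le_sum_of_subset_of_nonneg ?_ fun U _ _ => wt_nonneg j U
    intro U hU
    obtain ⟨h1, h2⟩ := Finset.mem_filter.1 hU
    rw [mem_Zset] at *
    exact ⟨h1.1, Finset.subset_erase.2 ⟨h1.2, h2⟩⟩
  · have hmem : ∀ U ∈ (Zset n j B).filter (fun U => ¬ x ∉ tp j U), IsUpf j U ∧ tp j U ⊆ B ∧ x ∈ tp j U := by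
      intro U hU
      obtain ⟨h1, h2⟩ := Finset.mem_filter.1 hU
      rw [mem_Zset] at h1
      exact ⟨h1.1, h1.2, not_not.1 h2⟩
    simp only [Finset.mul_sum]
    rw [Finset.sum_sigma' (Cl n j x) (fun U1 => Zset n j (B.erase x \ tp j U1))
      (fun U1 U2 => wt j U1 * wt j U2)]
    let e : Finset (Finset (Fin n)) → (Σ _ : Finset (Finset (Fin n)), Finset (Finset (Fin n))) :=
      fun U => ⟨cp j x U, U \ cp j x U⟩
    have hinj : Set.InjOn e ((Zset n j B).filter (fun U => ¬ x ∉ tp j U) : Finset _) := by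
      intro U hU U' hU' h
      obtain ⟨a1, _, a2⟩ := hmem U hU
      obtain ⟨b1, _, b2⟩ := hmem U' hU'
      have h1 : cp j x U = cp j x U' := congrArg Sigma.fst h
      have h2 : U \ cp j x U = U' \ cp j x U' := congrArg Sigma.snd h
      rw [← Finset.sdiff_union_of_subset (cp_spec hj a1 a2).1, h2, h1,
        Finset.sdiff_union_of_subset (cp_spec hj b1 b2).1]
    calc _ = ∑ U ∈ (Zset n j B).filter (fun U => ¬ x ∉ tp j U), wt j (e U).1 * wt j (e U).2 := by
          refine Finset.sum_congr rfl fun U hU => ?_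
          obtain ⟨a1, _, a2⟩ := hmem U hU
          exact wt_split hj a1 a2
      _ = ∑ q ∈ ((Zset n j B).filter (fun U => ¬ x ∉ tp j U)).image e, wt j q.1 * wt j q.2 := by
          rw [Finset.sum_image hinj]
      _ ≤ _ := by
          refine Finset.sum_le_sum_of_subset_of_nonneg ?_ fun q _ _ =>
            mul_nonneg (wt_nonneg _ _) (wt_nonneg _ _)
          intro q hq
          obtain ⟨U, hU, rfl⟩ := Finset.mem_image.1 hq
          obtain ⟨a1, a3, a2⟩ := hmem U hU
          obtain ⟨s1, s2, s3, s4, s5, s6⟩ := cp_spec hj a1 a2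
          rw [Finset.mem_sigma]
          refine ⟨s2, ?_⟩
          rw [mem_Zset]
          refine ⟨s3, ?_⟩
          change tp j (U \ cp j x U) ⊆ _
          rw [s4]
          intro z hz
          obtain ⟨z1, z2⟩ := Finset.mem_sdiff.1 hz
          refine Finset.mem_sdiff.2 ⟨Finset.mem_erase.2 ⟨?_, a3 z1⟩, z2⟩
          rintro rfl
          exact z2 (mem_Cl.1 s2).2.2

lemma Zs_le {n j : ℕ} (hj : j ≤ n) {σ : ℝ} (hσ0 : 0 ≤ σ) (hσ : ∀ x, sg n j x ≤ σ) :
    ∀ (m : ℕ) (B : Finset (Finset (Fin n))), B.card ≤ m → Zs n j B ≤ (1 + σ)^m := by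
  intro m
  induction m with
  | zero =>
    intro B hB
    have hB0 : B = ∅ := Finset.card_eq_zero.1 (by omega)
    subst hB0
    have : Zset n j ∅ ⊆ {∅} := by
      intro U hU
      rw [mem_Zset] at hU
      rw [Finset.mem_singleton, Finset.eq_empty_iff_forall_notMem]
      intro u hu
      obtain ⟨x, hux, hx⟩ := exists_sup hj (hU.1.1 u hu)
      have := hU.2 (mem_tp.2 ⟨hU.1.2 u hu x hux hx.le, hx⟩)
      simp at this
    calc Zs n j ∅ ≤ ∑ U ∈ ({∅} : Finset (Finset (Finset (Fin n)))), wt j U :=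
          Finset.sum_le_sum_of_subset_of_nonneg this fun U _ _ => wt_nonneg j U
      _ ≤ _ := by simp [wt, tp, bd]
  | succ m ih =>
    intro B hB
    rcases B.eq_empty_or_nonempty with rfl | ⟨x, hx⟩
    · refine (ih ∅ (by simp)).trans ?_
      exact pow_le_pow_right₀ (by linarith) (by omega)
    · have hc : (B.erase x).card ≤ m := by rw [Finset.card_erase_of_mem hx]; omega
      calc Zs n j B ≤ Zs n j (B.erase x) + ∑ U1 ∈ Cl n j x, wt j U1 * Zs n j (B.erase x \ tp j U1) :=
            Zs_step hj B x
        _ ≤ (1+σ)^m + ∑ U1 ∈ Cl n j x, wt j U1 * (1+σ)^m := by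
            refine add_le_add (ih _ hc) (Finset.sum_le_sum fun U1 _ => ?_)
            refine mul_le_mul_of_nonneg_left (ih _ ?_) (wt_nonneg _ _)
            exact (Finset.card_le_card Finset.sdiff_subset).trans hc
        _ = (1+σ)^m + sg n j x * (1+σ)^m := by rw [← Finset.sum_mul]; rfl
        _ ≤ (1+σ)^m + σ * (1+σ)^m := by
            have := mul_le_mul_of_nonneg_right (hσ x) (pow_nonneg (by linarith : (0:ℝ) ≤ 1 + σ) m)
            linarith
        _ = _ := by ring

lemma Ws_succ {n j : ℕ} (A : Finset (Finset (Fin n))) :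
    (Ws n (j+1) A : ℝ) ≤ 2^A.card * Zs n j ((lvl n j).filter fun w => up w ⊆ A) := by
  set Am := (lvl n j).filter fun w => up w ⊆ A with hAm
  have hbd : ∀ U ∈ Zset n j Am, bd (tp j U) ⊆ A := by
    intro U hU y hy
    obtain ⟨x, hx, hyx⟩ := mem_bd.1 hy
    exact (Finset.mem_filter.1 ((mem_Zset.1 hU).2 hx)).2 hyx
  have h1 : (Zset n (j+1) A).card ≤ ((Zset n j Am).sigma fun U => (A \ bd (tp j U)).powerset).card := by
    let e : Finset (Finset (Fin n)) → (Σ _ : Finset (Finset (Fin n)), Finset (Finset (Fin n))) :=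
      fun U => ⟨U.filter fun u => u.card ≤ j, tp (j+1) U \ bd (tp j (U.filter fun u => u.card ≤ j))⟩
    have hsub : ∀ U ∈ Zset n (j+1) A, bd (tp j (U.filter fun u => u.card ≤ j)) ⊆ tp (j+1) U := by
      intro U hU y hy
      rw [mem_Zset] at hU
      obtain ⟨x, hx, hyx⟩ := mem_bd.1 hy
      obtain ⟨h1, h2⟩ := mem_tp.1 hx
      obtain ⟨h3, h4⟩ := mem_up.1 hyx
      exact mem_tp.2 ⟨hU.1.2 x (Finset.mem_filter.1 h1).1 y h3 (by omega), by omega⟩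
    apply Finset.card_le_card_of_injOn e
    · intro U hU
      have hU0 : U ∈ Zset n (j+1) A := hU
      have hs := hsub U hU0
      rw [mem_Zset] at hU0
      refine Finset.mem_sigma.2 ⟨?_, ?_⟩
      · rw [mem_Zset]
        refine ⟨⟨fun u hu => (Finset.mem_filter.1 hu).2, ?_⟩, ?_⟩
        · intro u hu v huv hv
          exact Finset.mem_filter.2 ⟨hU0.1.2 u (Finset.mem_filter.1 hu).1 v huv (by omega), hv⟩
        · intro w hw
          refine Finset.mem_filter.2 ⟨tp_sub _ hw, ?_⟩
          intro y hy
          exact hU0.2 (hs (mem_bd.2 ⟨w, hw, hy⟩))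
      · rw [Finset.mem_powerset]
        exact Finset.sdiff_subset_sdiff hU0.2 subset_rfl
    · intro U hU U' hU' h
      have hU0 : U ∈ Zset n (j+1) A := hU
      have hU0' : U' ∈ Zset n (j+1) A := hU'
      have e1 : (U.filter fun u => u.card ≤ j) = (U'.filter fun u => u.card ≤ j) := congrArg Sigma.fst h
      have e2 : tp (j+1) U \ bd (tp j (U.filter fun u => u.card ≤ j)) =
        tp (j+1) U' \ bd (tp j (U'.filter fun u => u.card ≤ j)) := congrArg Sigma.snd h
      have e3 : tp (j+1) U = tp (j+1) U' := by
        rw [← Finset.sdiff_union_of_subset (hsub U hU0), e2, e1,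
          Finset.sdiff_union_of_subset (hsub U' hU0')]
      have key : ∀ V ∈ Zset n (j+1) A, V = (V.filter fun u => u.card ≤ j) ∪ tp (j+1) V := by
        intro V hV
        rw [mem_Zset] at hV
        ext u
        simp only [Finset.mem_union, Finset.mem_filter, mem_tp]
        constructor
        · intro hu
          have := hV.1.1 u hu
          rcases Nat.lt_or_ge u.card (j+1) with h | h
          · exact Or.inl ⟨hu, by omega⟩
          · exact Or.inr ⟨hu, by omega⟩
        · rintro (h | h) <;> exact h.1
      rw [key U hU0, key U' hU0', e1, e3]
  have h2 : (((Zset n j Am).sigma fun U => (A \ bd (tp j U)).powerset).card : ℝ) = 2^A.card * Zs n j Am := by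
    rw [Finset.card_sigma]
    push_cast
    unfold Zs
    rw [Finset.mul_sum]
    refine Finset.sum_congr rfl fun U hU => ?_
    rw [Finset.card_powerset, Finset.card_sdiff_of_subset (hbd U hU)]
    have hle := Finset.card_le_card (hbd U hU)
    unfold wt
    push_cast
    rw [one_div, inv_pow, ← div_eq_mul_inv, eq_div_iff (by positivity), ← pow_add]
    congr 1
    omega
  rw [← h2]
  exact_mod_cast h1

lemma Ws_zero {n : ℕ} (A : Finset (Finset (Fin n))) : Ws n 0 A ≤ 2^A.card := by
  rw [← Finset.card_powerset]
  refine Finset.card_le_card fun U hU => ?_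
  rw [mem_Zset] at hU
  rw [Finset.mem_powerset]
  intro u hu
  exact hU.2 (mem_tp.2 ⟨hu, by have := hU.1.1 u hu; omega⟩)

lemma Ws_le {n j : ℕ} (hj : 2 * j + 1 ≤ n) {σ : ℝ} (hσ0 : 0 ≤ σ) (hσ : ∀ x, sg n j x ≤ σ)
    {A : Finset (Finset (Fin n))} (hA : A ⊆ lvl n (j+1)) :
    (Ws n (j+1) A : ℝ) ≤ (2 * (1 + σ))^A.card := by
  rw [mul_pow]
  refine (Ws_succ A).trans (mul_le_mul_of_nonneg_left ?_ (by positivity))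
  refine Zs_le (by omega) hσ0 hσ _ _ ?_
  have := (lb n j hj).edge_le (H := (lvl n j).filter fun w => up w ⊆ A) (G := A)
    (Finset.filter_subset _ _) hA (fun x hx => (Finset.mem_filter.1 hx).2)
  have h2 : (lb n j hj).b * A.card ≤ (lb n j hj).D * A.card := Nat.mul_le_mul_right _ (lb n j hj).hbD
  refine Nat.le_of_mul_le_mul_left (this.trans h2) ?_
  change 0 < n - j
  omega


/-! ### Fingerprints -/

def lab {n : ℕ} (i : Fin 7) (T : Finset (Finset (Fin n) × Fin 7)) : Finset (Finset (Fin n)) :=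
  (T.filter fun q => q.2 = i).image Prod.fst

lemma mem_lab {n : ℕ} {i : Fin 7} {T : Finset (Finset (Fin n) × Fin 7)} {x : Finset (Fin n)} :
    x ∈ lab i T ↔ (x, i) ∈ T := by
  simp only [lab, Finset.mem_image, Finset.mem_filter, Prod.exists]
  constructor
  · rintro ⟨a, b, ⟨h, rfl⟩, rfl⟩; exact h
  · intro h; exact ⟨x, i, ⟨h, rfl⟩, rfl⟩

def mkT {n : ℕ} (f : Fin 7 → Finset (Finset (Fin n))) : Finset (Finset (Fin n) × Fin 7) :=
  Finset.univ.filter fun q => q.1 ∈ f q.2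

lemma mem_mkT {n : ℕ} {f : Fin 7 → Finset (Finset (Fin n))} {q : Finset (Fin n) × Fin 7} :
    q ∈ mkT f ↔ q.1 ∈ f q.2 := by simp [mkT]

lemma lab_mkT {n : ℕ} (f : Fin 7 → Finset (Finset (Fin n))) (i : Fin 7) : lab i (mkT f) = f i := by
  ext x; rw [mem_lab, mem_mkT]

lemma card_mkT {n : ℕ} (f : Fin 7 → Finset (Finset (Fin n))) : (mkT f).card = ∑ i, (f i).card := by
  have : mkT f = Finset.univ.biUnion fun i => (f i).image fun x => (x, i) := by
    ext q
    simp only [mem_mkT, Finset.mem_biUnion, Finset.mem_image, Finset.mem_univ, true_and]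
    constructor
    · intro h; exact ⟨q.2, q.1, h, rfl⟩
    · rintro ⟨i, x, hx, rfl⟩; exact hx
  rw [this, Finset.card_biUnion]
  · refine Finset.sum_congr rfl fun i _ => Finset.card_image_of_injective _ ?_
    intro a b h
    exact (Prod.ext_iff.1 h).1
  · intro i _ i' _ hne
    rw [Function.onFun_apply, Finset.disjoint_left]
    intro q hq hq'
    obtain ⟨x, _, rfl⟩ := Finset.mem_image.1 hq
    obtain ⟨x', _, h⟩ := Finset.mem_image.1 hq'
    exact hne (Prod.ext_iff.1 h).2.symm

def contF {n : ℕ} (B : BG (Finset (Fin n))) (T : Finset (Finset (Fin n) × Fin 7)) :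
    Finset (Finset (Fin n)) := B.Fz (lab 0 T) (lab 1 T) (lab 2 T) (lab 3 T)

def contA {n : ℕ} (B : BG (Finset (Fin n))) (ψ : ℕ) (T : Finset (Finset (Fin n) × Fin 7)) :
    Finset (Finset (Fin n)) := B.Sf ψ (contF B T) (lab 4 T)

def contB {n : ℕ} (B : BG (Finset (Fin n))) (ψ : ℕ) (T : Finset (Finset (Fin n) × Fin 7)) :
    Finset (Finset (Fin n)) := B.Hf (B.F1 ψ (contF B T) (lab 4 T) ∪ lab 5 T)

def R8 {n : ℕ} (u v : Finset (Fin n) × Fin 7) : Prop := hd u.1 v.1 ≤ 8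

def clos {n : ℕ} (j : ℕ) (C : Finset (Finset (Fin n))) : Finset (Finset (Fin n)) :=
  (lvl n j).filter fun x => up x ⊆ bd C

lemma count_container {n j s : ℕ} (x0 : Finset (Fin n)) (w : ℝ) (hw : 0 ≤ w)
    (cont : Finset (Finset (Fin n) × Fin 7) → Finset (Finset (Fin n)))
    (F : Finset (Finset (Finset (Fin n))))
    (hF : ∀ U ∈ F, IsUpf j U ∧ ∃ T, Linked R8 T ∧ (x0, 6) ∈ T ∧ T.card ≤ s ∧
      (Ws n j (cont T) : ℝ) ≤ w ∧ tp j U ⊆ cont T) :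
    (F.card : ℝ) ≤ (((n+1)^8*7)^(2*(s-1)) : ℕ) * w := by
  set L : Finset (Finset (Finset (Fin n) × Fin 7)) := Finset.univ.filter fun T =>
    Linked R8 T ∧ (x0, 6) ∈ T ∧ T.card ≤ s ∧ (Ws n j (cont T) : ℝ) ≤ w with hL
  have hLc : L.card ≤ ((n+1)^8*7)^(2*(s-1)) := by
    refine card_linked_eight s (x0, 6) L ?_
    intro T hT
    obtain ⟨-, h1, h2, h3, -⟩ := Finset.mem_filter.1 hT
    exact ⟨h1, h2, h3⟩
  have hsub : F ⊆ L.biUnion fun T => Zset n j (cont T) := by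
    intro U hU
    obtain ⟨h0, T, h1, h2, h3, h4, h5⟩ := hF U hU
    exact Finset.mem_biUnion.2 ⟨T, Finset.mem_filter.2 ⟨Finset.mem_univ _, h1, h2, h3, h4⟩,
      mem_Zset.2 ⟨h0, h5⟩⟩
  have h1 : F.card ≤ ∑ T ∈ L, Ws n j (cont T) :=
    (Finset.card_le_card hsub).trans Finset.card_biUnion_le
  calc (F.card : ℝ) ≤ ((∑ T ∈ L, Ws n j (cont T) : ℕ) : ℝ) := by exact_mod_cast h1
    _ = ∑ T ∈ L, (Ws n j (cont T) : ℝ) := by push_cast; rfl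
    _ ≤ ∑ T ∈ L, w := Finset.sum_le_sum fun T hT => (Finset.mem_filter.1 hT).2.2.2.2
    _ = L.card * w := by simp
    _ ≤ _ := by
      refine mul_le_mul_of_nonneg_right ?_ hw
      exact_mod_cast hLc

lemma hd3 {n : ℕ} {a b c d : Finset (Fin n)} (h1 : hd a b ≤ 1) (h2 : hd b c ≤ 1) (h3 : hd c d ≤ 1) :
    hd a d ≤ 3 := by
  have := hd_triangle a b d
  have := hd_triangle b c d
  omega

lemma hd2 {n : ℕ} {a b c : Finset (Fin n)} (h1 : hd a b ≤ 1) (h2 : hd b c ≤ 1) : hd a c ≤ 3 := by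
  have := hd_triangle a b c
  omega

lemma hd_up {n : ℕ} {x y : Finset (Fin n)} (h : y ∈ up x) : hd x y ≤ 1 := hd_of_mem_up h
lemma hd_up' {n : ℕ} {x y : Finset (Fin n)} (h : y ∈ up x) : hd y x ≤ 1 := by
  rw [hd_comm]; exact hd_of_mem_up h
lemma hd_dn {n : ℕ} {x y : Finset (Fin n)} (h : x ∈ dn y) : hd y x ≤ 1 :=
  hd_up' (mem_up.2 (mem_dn.1 h))
lemma hd_dn' {n : ℕ} {x y : Finset (Fin n)} (h : x ∈ dn y) : hd x y ≤ 1 :=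
  hd_up (mem_up.2 (mem_dn.1 h))

theorem fingerprint {n j : ℕ} (h2 : 2 * j + 1 ≤ n) {C : Finset (Finset (Fin n))}
    (hC : C ⊆ lvl n j) (hlink : Linked R2 C) {x0 : Finset (Fin n)} (hx0 : x0 ∈ C) {t : ℕ}
    (ht : (bd C).card = (clos j C).card + t) (ψ : ℕ) (hψ : 1 ≤ ψ) (hψD : 2 * ψ ≤ n - j)
    (p : ℝ) (hp : 0 < p) (hp1 : p < 1) (β : ℕ) (hβ : 2 * β ≤ (j + 1) * (n - j - 1)) :
    ∃ (s0 s2 s3 e : ℕ) (TA TB : Finset (Finset (Fin n) × Fin 7)),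
      (s0 : ℝ) ≤ p * (bd C).card + p * ((j+1 : ℕ) * t) + (bd C).card * (1 - p)^β ∧
      ψ * s2 ≤ 2 * t ∧ ψ * s3 ≤ 2 * t ∧ e ≤ (bd C).card ∧
      Linked R8 TA ∧ (x0, 6) ∈ TA ∧ TA.card = s0 + s2 + s3 + 1 ∧ C ⊆ contA (lb n j h2) ψ TA ∧
      (n - j) * (contA (lb n j h2) ψ TA).card ≤ (j+1) * ((bd C).card - e) + 4 * ψ * t ∧
      Linked R8 TB ∧ (x0, 6) ∈ TB ∧ TB.card = s0 + s2 + s3 + e + 1 ∧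
      contB (lb n j h2) ψ TB = clos j C ∧ C ⊆ clos j C := by
  have hCclos : C ⊆ clos j C := by
    intro c hc
    exact Finset.mem_filter.2 ⟨hC hc, fun y hy => mem_bd.2 ⟨c, hc, hy⟩⟩
  have hGY : bd C ⊆ lvl n (j+1) := by
    intro y hy
    obtain ⟨c, hc, hy⟩ := mem_bd.1 hy
    rw [mem_lvl, (mem_up.1 hy).2, mem_lvl.1 (hC hc)]
  obtain ⟨T0, P, T0', T2, T3, F, hF, hT0, hP, hT0', hT2, hT3, hFG, hmiss, hHS, hF1, hs0, hs2, hs3,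
    hedge⟩ := (lb n j h2).core (H := clos j C) (G := bd C) (Finset.filter_subset _ _) hGY
    (fun x hx => (Finset.mem_filter.1 hx).2) ht ψ hψ hψD (by change 1 ≤ j+1; omega) p hp hp1 β (by
      intro y hy hb
      change j + 1 ≤ 2 * (dn y ∩ clos j C).card at hb
      have := tree_bound (n := n) (j := j) (mem_lvl.1 (hGY hy)) (S := dn y ∩ clos j C)
        Finset.inter_subset_left
      change β ≤ ((dn y ∩ clos j C).biUnion up).card
      refine le_trans ?_ this
      have h3 := Nat.mul_le_mul_right (n - j - 1) hb
      have : 2 * β ≤ 2 * ((dn y ∩ clos j C).card * (n - j - 1)) := by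
        rw [← mul_assoc]; exact hβ.trans h3
      omega)
  set B := lb n j h2 with hB
  -- closeness facts
  have hGC : ∀ y ∈ bd C, ∃ c ∈ C, hd y c ≤ 1 := by
    intro y hy
    obtain ⟨c, hc, hy⟩ := mem_bd.1 hy
    exact ⟨c, hc, hd_up' hy⟩
  have main : ∀ T4 : Finset (Finset (Fin n)), T4 ⊆ bd C →
      Linked R8 (mkT ![T0, P, T0', T2, T3, T4, {x0}]) := by
    intro T4 hT4
    refine Linked.of_close (R := R2) (Q := fun τ c => hd τ.1 c ≤ 3) hlink ?_ ?_ ?_ ?_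
    · intro c hc
      have h1 := hmiss c (hCclos hc)
      change (up c \ F).card < ψ at h1
      have h2' : (up c).card = n - j := by rw [card_up, mem_lvl.1 (hC hc)]
      have h3 : ∃ y ∈ up c, y ∈ F := by
        by_contra hcon
        push Not at hcon
        rw [Finset.sdiff_eq_self_of_disjoint (Finset.disjoint_left.2 hcon), h2'] at h1
        omega
      obtain ⟨y, hyc, hyF⟩ := h3
      rw [hF] at hyF
      rcases Finset.mem_union.1 hyF with h | h
      · rcases Finset.mem_union.1 h with h | h
        · obtain ⟨x, hx, hyx⟩ := Finset.mem_biUnion.1 h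
          obtain ⟨z, hz, hxz⟩ := Finset.mem_biUnion.1 (Finset.mem_sdiff.1 hx).1
          refine ⟨(z, 0), mem_mkT.2 hz, ?_⟩
          exact hd3 (hd_dn hxz) (hd_up hyx) (hd_up' hyc)
        · refine ⟨(y, 2), mem_mkT.2 h, ?_⟩
          have := hd_up' hyc
          change hd y c ≤ 3
          omega
      · obtain ⟨x, hx, hyx⟩ := Finset.mem_biUnion.1 h
        refine ⟨(x, 3), mem_mkT.2 hx, ?_⟩
        exact hd2 (hd_up hyx) (hd_up' hyc)
    · rintro ⟨x, i⟩ hτ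
      have hτ' := mem_mkT.1 hτ
      have cl1 : x ∈ bd C → ∃ c ∈ C, hd x c ≤ 3 := by
        intro hx
        obtain ⟨c, hc, h⟩ := hGC x hx
        exact ⟨c, hc, by omega⟩
      fin_cases i
      · exact cl1 (hT0 hτ')
      · obtain ⟨y, hy, hxy⟩ := Finset.mem_biUnion.1 (hP hτ')
        obtain ⟨c, hc, h⟩ := hGC y (hT0 hy)
        exact ⟨c, hc, hd2 (hd_dn' hxy) h⟩
      · exact cl1 (hT0' hτ')
      · have hx : x ∈ clos j C := hT2 hτ'
        have hne : (up x).Nonempty := by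
          rw [← Finset.card_pos, card_up, mem_lvl.1 (Finset.mem_filter.1 hx).1]; omega
        obtain ⟨y, hy⟩ := hne
        obtain ⟨c, hc, h⟩ := hGC y ((Finset.mem_filter.1 hx).2 hy)
        exact ⟨c, hc, hd2 (hd_up hy) h⟩
      · obtain ⟨hxY, z, hzx, hz⟩ := hT3 x hτ'
        obtain ⟨hzX, hzc⟩ := Finset.mem_filter.1 hz
        change (up z \ F).card < ψ at hzc
        have h2' : (up z).card = n - j := by rw [card_up, mem_lvl.1 hzX]
        have h3 : ∃ y ∈ up z, y ∈ F := by
          by_contra hcon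
          push Not at hcon
          rw [Finset.sdiff_eq_self_of_disjoint (Finset.disjoint_left.2 hcon), h2'] at hzc
          omega
        obtain ⟨y, hyz, hyF⟩ := h3
        obtain ⟨c, hc, h⟩ := hGC y (hFG hyF)
        exact ⟨c, hc, hd3 (hd_dn hzx) (hd_up hyz) h⟩
      · exact cl1 (hT4 hτ')
      · have : x = x0 := Finset.mem_singleton.1 hτ'
        subst this
        exact ⟨x, hx0, by change hd x x ≤ 3; rw [hd_self]; omega⟩
    · intro τ τ' c h1 h2
      have := hd_triangle τ.1 c τ'.1
      rw [hd_comm c τ'.1] at this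
      change hd τ.1 τ'.1 ≤ 8
      omega
    · intro τ τ' c c' h1 h2 h3
      have e1 := hd_triangle τ.1 c τ'.1
      have e2 := hd_triangle c c' τ'.1
      rw [hd_comm c' τ'.1] at e2
      unfold R2 at h3
      change hd τ.1 τ'.1 ≤ 8
      omega
  have hcont : ∀ T4 : Finset (Finset (Fin n)), contF B (mkT ![T0, P, T0', T2, T3, T4, {x0}]) = F := by
    intro T4
    unfold contF
    rw [lab_mkT, lab_mkT, lab_mkT, lab_mkT, hF]
    rfl
  have hcard : ∀ T4 : Finset (Finset (Fin n)), (mkT ![T0, P, T0', T2, T3, T4, {x0}]).card =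
      (T0.card + P.card + T0'.card) + T2.card + T3.card + T4.card + 1 := by
    intro T4
    rw [card_mkT]
    simp [Fin.sum_univ_succ]
    ring
  refine ⟨T0.card + P.card + T0'.card, T2.card, T3.card, (bd C \ B.F1 ψ F T3).card,
    mkT ![T0, P, T0', T2, T3, ∅, {x0}], mkT ![T0, P, T0', T2, T3, bd C \ B.F1 ψ F T3, {x0}],
    hs0, hs2, hs3, Finset.card_le_card Finset.sdiff_subset, main ∅ (by simp), ?_, ?_, ?_, ?_,
    main _ Finset.sdiff_subset, ?_, ?_, ?_, hCclos⟩
  · exact mem_mkT.2 (Finset.mem_singleton_self x0)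
  · rw [hcard]; simp
  · unfold contA
    rw [hcont, lab_mkT]
    exact hCclos.trans hHS
  · unfold contA
    rw [hcont, lab_mkT]
    have : (bd C).card - (bd C \ B.F1 ψ F T3).card = (B.F1 ψ F T3).card := by
      rw [Finset.card_sdiff_of_subset hF1]
      have := Finset.card_le_card hF1
      omega
    rw [this]
    exact hedge
  · exact mem_mkT.2 (Finset.mem_singleton_self x0)
  · rw [hcard]
  · unfold contB
    rw [hcont, lab_mkT, lab_mkT]
    change B.Hf (B.F1 ψ F T3 ∪ (bd C \ B.F1 ψ F T3)) = clos j C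
    rw [Finset.union_sdiff_of_subset hF1]
    rfl


/-! ### Estimating clusters with small boundary -/

structure Par (k r l : ℕ) : Prop where
  h1 : 7 * (2*k+1)^8 ≤ 2^l
  h2 : 16 * l ≤ r
  h3 : 1024 * r^4 ≤ k

namespace Par

lemma l_pos {k r l : ℕ} (q : Par k r l) : 1 ≤ l := by
  by_contra h
  have : l = 0 := by omega
  have h1 := q.h1
  rw [this] at h1
  have : 1 ≤ (2*k+1)^8 := Nat.one_le_pow _ _ (by omega)
  simp at h1; omega

lemma r_pos {k r l : ℕ} (q : Par k r l) : 16 ≤ r := by have := q.l_pos; have := q.h2; omega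

lemma r_pow2 {k r l : ℕ} (q : Par k r l) : 1024 * 256 * r^2 ≤ k := by
  have := q.h3
  have h := q.r_pos
  have : 256 ≤ r^2 := by nlinarith
  nlinarith

lemma r_pow3 {k r l : ℕ} (q : Par k r l) : 1024 * 16 * r^3 ≤ k := by
  have := q.h3
  have h := q.r_pos
  have : 16 * r^3 ≤ r^4 := by rw [pow_succ r 3, mul_comm]; exact Nat.mul_le_mul_left _ h
  omega

lemma k_big {k r l : ℕ} (q : Par k r l) : 1024 * 256 * r ≤ k := by
  have := q.r_pow2
  have h := q.r_pos
  nlinarith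

lemma l_le_k {k r l : ℕ} (q : Par k r l) : l ≤ k := by have := q.k_big; have := q.h2; omega

lemma two_l {k r l : ℕ} (q : Par k r l) : 8 * k * r^2 ≤ 2^l := by
  refine le_trans ?_ q.h1
  have h := q.r_pow2
  have h1 : 8 * k * r^2 ≤ 8 * k * k := Nat.mul_le_mul_left _ (by omega)
  have h2 : (2*k+1)^2 ≤ (2*k+1)^8 := Nat.pow_le_pow_right (by omega) (by omega)
  nlinarith

lemma two_k {k r l : ℕ} (q : Par k r l) : 96 * k * r ≤ 2^k := by
  have h1 : 2^l ≤ 2^k := Nat.pow_le_pow_right (by omega) q.l_le_k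
  have h2 := q.two_l
  have h3 := q.r_pos
  have : 96 * k * r ≤ 8 * k * r^2 := by nlinarith [Nat.mul_le_mul_left (8*k*r) (show 12 ≤ r by omega)]
  omega

end Par

lemma rpow_W {σ : ℝ} (hσ : 0 ≤ σ) (m : ℕ) : (2 * (1 + σ))^m ≤ (2:ℝ)^((1 + 2*σ) * m) := by
  rw [Real.rpow_mul (by norm_num), Real.rpow_natCast]
  refine pow_le_pow_left₀ (by positivity) ?_ m
  rw [Real.rpow_add (by norm_num), Real.rpow_one]
  refine mul_le_mul_of_nonneg_left ?_ (by norm_num)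
  calc 1 + σ ≤ Real.exp σ := by linarith [Real.add_one_le_exp σ]
    _ ≤ Real.exp (Real.log 2 * (2*σ)) := by
      apply Real.exp_le_exp.2
      have := Real.log_two_gt_d9
      nlinarith
    _ = _ := by rw [Real.rpow_def_of_pos (by norm_num)]

lemma clos_facts {n j : ℕ} {C : Finset (Finset (Fin n))} (hC : C ⊆ lvl n j) :
    clos j C ⊆ lvl n j ∧ C ⊆ clos j C ∧ (clos j C).biUnion up = bd C := by
  have h1 : C ⊆ clos j C := by
    intro c hc
    exact Finset.mem_filter.2 ⟨hC hc, fun y hy => mem_bd.2 ⟨c, hc, hy⟩⟩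
  refine ⟨Finset.filter_subset _ _, h1, ?_⟩
  apply Finset.Subset.antisymm
  · exact Finset.biUnion_subset.2 fun x hx => (Finset.mem_filter.1 hx).2
  · exact Finset.biUnion_subset_biUnion_of_subset_left _ h1

lemma caseII_facts {k r l j : ℕ} (q : Par k r l) (hj : j + 1 ≤ k) {C : Finset (Finset (Fin (2*k)))}
    (hC : C ⊆ lvl (2*k) j) (hne : C.Nonempty) (hg : (bd C).card < r * C.card) :
    k ≤ r * (j+1) ∧ ∃ t, (bd C).card = (clos j C).card + t ∧ (bd C).card ≤ 2 * k * t ∧ k^2 ≤ 12 * r * t := by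
  obtain ⟨c1, c2, c3⟩ := clos_facts hC
  have hm : 0 < C.card := Finset.card_pos.2 hne
  have hb := (lb (2*k) j (by omega)).edge_le (H := C) (G := bd C) hC
    (by
      intro y hy
      obtain ⟨c, hc, hy⟩ := mem_bd.1 hy
      exact (lb (2*k) j (by omega)).hU c (hC hc) hy)
    (fun x hx => Finset.subset_biUnion_of_mem up hx)
  change (2*k - j) * C.card ≤ (j+1) * (bd C).card at hb
  have hDr : 2*k - j < (j+1) * r := by
    have : (2*k - j) * C.card < ((j+1) * r) * C.card := by
      calc _ ≤ (j+1) * (bd C).card := hb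
        _ < (j+1) * (r * C.card) := Nat.mul_lt_mul_of_pos_left hg (by omega)
        _ = _ := by ring
    exact Nat.lt_of_mul_lt_mul_right this
  have hkb := q.k_big
  have hr := q.r_pos
  refine ⟨by rw [mul_comm]; omega, ?_⟩
  have hcau := cauchy_bound hC
  set D := 2*k - j with hD
  change D^2 * C.card ≤ (bd C).card * (D + C.card) at hcau
  have h1 : D^2 ≤ r * (D + C.card) := by
    have : D^2 * C.card ≤ (r * (D + C.card)) * C.card := by
      calc _ ≤ _ := hcau
        _ ≤ (r * C.card) * (D + C.card) := Nat.mul_le_mul_right _ hg.le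
        _ = _ := by ring
    exact Nat.le_of_mul_le_mul_right this hm
  have h2 : D^2 ≤ 2 * r * (clos j C).card := by
    have h3 := Finset.card_le_card c2
    have h4 : 2 * r * D ≤ D^2 := by
      have : 2 * r ≤ D := by omega
      nlinarith
    nlinarith
  have hj2 : 2 ≤ j := by
    by_contra hcon
    have : (j+1) * r ≤ 2 * r := Nat.mul_le_mul_right _ (by omega)
    omega
  have hbH := (lb (2*k) j (by omega)).edge_le (H := clos j C) (G := bd C) c1
    (by
      intro y hy
      obtain ⟨c, hc, hy⟩ := mem_bd.1 hy
      exact (lb (2*k) j (by omega)).hU c (hC hc) hy)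
    (fun x hx => (Finset.mem_filter.1 hx).2)
  change D * (clos j C).card ≤ (j+1) * (bd C).card at hbH
  have hle : (clos j C).card ≤ (bd C).card := by
    have : D * (clos j C).card ≤ D * (bd C).card :=
      hbH.trans (Nat.mul_le_mul_right _ (by omega))
    exact Nat.le_of_mul_le_mul_left this (by omega)
  obtain ⟨t, ht⟩ := Nat.exists_eq_add_of_le hle
  have ht' : ((clos j C).biUnion up).card = (clos j C).card + t := by rw [c3, ht]
  obtain ⟨k1, k2⟩ := t_lower (n := 2*k) (j := j) (r := r) (by omega) hj2 (by omega) c1 h2 (by omega) ht'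
    (by omega)
  rw [c3] at k1
  refine ⟨t, ht, k1.trans (Nat.mul_le_mul_right _ (by omega)), le_trans ?_ k2⟩
  exact Nat.pow_le_pow_left (by omega) 2

lemma fp_size {k r l j t g s0 s2 s3 : ℕ} (q : Par k r l) (hj : j + 1 ≤ k) (hg : g ≤ 2 * k * t)
    (h0 : (s0 : ℝ) ≤ (1/(24*k*r^2)) * g + (1/(24*k*r^2)) * ((j+1 : ℕ) * t)
      + g * (1 - (1/(24*k*r^2)))^(24*k*r^2*l))
    (h2 : 32 * r^2 * s2 ≤ 2 * t) (h3 : 32 * r^2 * s3 ≤ 2 * t) :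
    s0 + s2 + s3 ≤ t / (2 * r^2) := by
  have hr := q.r_pos
  have hk := q.k_big
  rw [Nat.le_div_iff_mul_le (by positivity)]
  have hr' : (0:ℝ) < r := by exact_mod_cast (by omega : 0 < r)
  have hk' : (0:ℝ) < k := by exact_mod_cast (by omega : 0 < k)
  have hp0 : (0:ℝ) < 24*k*r^2 := by positivity
  have hp1 : (1/(24*k*r^2) : ℝ) ≤ 1 := by
    rw [div_le_one hp0]
    have hk0 : 0 < k := by omega
    have : 1 ≤ 24*k*r^2 := Nat.one_le_iff_ne_zero.2 (by positivity)
    exact_mod_cast this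
  have hexp : (1 - (1/(24*k*r^2)) : ℝ)^(24*k*r^2*l) ≤ (1/2)^l := by
    calc (1 - (1/(24*k*r^2)) : ℝ)^(24*k*r^2*l) ≤ (Real.exp (-(1/(24*k*r^2))))^(24*k*r^2*l) := by
          refine pow_le_pow_left₀ (by linarith) ?_ _
          exact Real.one_sub_le_exp_neg _
      _ = Real.exp (-1)^l := by
          rw [← Real.exp_nat_mul, ← Real.exp_nat_mul]
          congr 1
          push_cast
          field_simp
      _ ≤ (1/2)^l := by
          refine pow_le_pow_left₀ (Real.exp_pos _).le ?_ _
          rw [Real.exp_neg, one_div]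
          refine inv_anti₀ (by norm_num) ?_
          linarith [Real.add_one_le_exp (1:ℝ)]
  have h2l : (8 * k * r^2 : ℝ) ≤ 2^l := by exact_mod_cast q.two_l
  have hg' : (g:ℝ) ≤ 2 * k * t := by exact_mod_cast hg
  have hj' : ((j+1 : ℕ):ℝ) ≤ k := by exact_mod_cast hj
  have ht : (0:ℝ) ≤ t := Nat.cast_nonneg t
  have hA : (s0 : ℝ) * (8 * r^2) ≤ 3 * t := by
    have e1 : (1/(24*k*r^2) : ℝ) * g ≤ (1/(24*k*r^2)) * (2 * k * t) :=
      mul_le_mul_of_nonneg_left hg' (by positivity)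
    have e2 : (1/(24*k*r^2) : ℝ) * ((j+1 : ℕ) * t) ≤ (1/(24*k*r^2)) * (k * t) :=
      mul_le_mul_of_nonneg_left (mul_le_mul_of_nonneg_right hj' ht) (by positivity)
    have e3 : (g:ℝ) * (1 - (1/(24*k*r^2)))^(24*k*r^2*l) ≤ (2*k*t) * (1/(8 * k * r^2)) := by
      refine mul_le_mul hg' (hexp.trans ?_) (pow_nonneg (by linarith) _) (by positivity)
      rw [one_div, inv_pow, one_div]
      exact inv_anti₀ (by positivity) h2l
    have e4 : (1/(24*k*r^2) : ℝ) * (2 * k * t) + (1/(24*k*r^2)) * (k * t) + (2*k*t) * (1/(8 * k * r^2)) =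
      3 * t / (8 * r^2) := by field_simp; ring
    have e5 : (s0:ℝ) ≤ 3 * t / (8 * r^2) := by linarith
    rwa [le_div_iff₀ (by positivity)] at e5
  have hA' : s0 * (8 * r^2) ≤ 3 * t := by exact_mod_cast hA
  nlinarith

theorem caseII {k r l j g a : ℕ} (q : Par k r l) (hj : j + 1 ≤ k) (x0 : Finset (Fin (2*k)))
    (hW : ∀ A ⊆ lvl (2*k) j, (Ws (2*k) j A : ℝ) ≤ (2 * (1 + 3 * (1/2:ℝ)^k))^A.card)
    (F : Finset (Finset (Finset (Fin (2*k)))))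
    (hF : ∀ U ∈ F, U ∈ Cl (2*k) j x0 ∧ (bd (tp j U)).card = g ∧ (clos j (tp j U)).card = a ∧
      g < r * (tp j U).card) :
    (F.card : ℝ) * (1/2)^g ≤ 2 * (1/2)^(7*k) := by
  rcases F.eq_empty_or_nonempty with rfl | ⟨U0, hU0⟩
  · simp
  have hr := q.r_pos
  have hk := q.k_big
  have hr3 := q.r_pow3
  have hr2 := q.r_pow2
  have h16 := q.h2
  have hrR : (0:ℝ) < r := by exact_mod_cast (by omega : 0 < r)
  have hkR : (0:ℝ) < k := by exact_mod_cast (by omega : 0 < k)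
  -- facts
  have facts : ∀ U ∈ F, k ≤ r * (j+1) ∧ ∃ t, g = a + t ∧ g ≤ 2 * k * t ∧ k^2 ≤ 12 * r * t := by
    intro U hU
    obtain ⟨h1, h2, h3, h4⟩ := hF U hU
    have := caseII_facts q hj (tp_sub U) ⟨x0, (mem_Cl.1 h1).2.2⟩ (by rw [h2]; exact h4)
    rw [h2, h3] at this
    exact this
  obtain ⟨hbr, t, hgt, hg2, hkt⟩ := facts U0 hU0
  have htR : (0:ℝ) ≤ t := Nat.cast_nonneg t
  set σ : ℝ := 3 * (1/2:ℝ)^k with hσ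
  have hσ0 : 0 ≤ σ := by positivity
  -- σ is negligible
  have hneg : ∀ m : ℕ, m ≤ 2 * k * t → 2 * σ * m ≤ t / (8 * r) := by
    intro m hm
    have hm' : (m:ℝ) ≤ 2 * k * t := by exact_mod_cast hm
    have h2k : (96 * k * r : ℝ) ≤ 2^k := by exact_mod_cast q.two_k
    rw [le_div_iff₀ (by positivity), hσ, one_div, inv_pow]
    have h2p : (0:ℝ) < 2^k := by positivity
    have : 2 * (3 * ((2:ℝ)^k)⁻¹) * m * (8 * r) = (48 * r * m) / 2^k := by field_simp; ring
    rw [this, div_le_iff₀ h2p]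
    calc (48 * r * m : ℝ) ≤ 48 * r * (2 * k * t) := mul_le_mul_of_nonneg_left hm' (by positivity)
      _ = (96 * k * r) * t := by ring
      _ ≤ 2^k * t := mul_le_mul_of_nonneg_right h2k htR
      _ = _ := by ring
  -- dichotomy
  set B := lb (2*k) j (by omega) with hB
  set wA : ℝ := (2:ℝ)^((g:ℝ) - 3 * t / (4 * r)) with hwA
  set wB : ℝ := (2:ℝ)^((g:ℝ) - 7 * t / 8) with hwB
  have dich : ∀ U ∈ F, IsUpf j U ∧
      ((∃ T, Linked R8 T ∧ (x0, 6) ∈ T ∧ T.card ≤ t / (2*r^2) + 1 ∧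
        (Ws (2*k) j (contA B (32*r^2) T) : ℝ) ≤ wA ∧ tp j U ⊆ contA B (32*r^2) T) ∨
       (∃ T, Linked R8 T ∧ (x0, 6) ∈ T ∧ T.card ≤ t / (2*r^2) + t / r + 1 ∧
        (Ws (2*k) j (contB B (32*r^2) T) : ℝ) ≤ wB ∧ tp j U ⊆ contB B (32*r^2) T)) := by
    intro U hU
    obtain ⟨h1, h2, h3, h4⟩ := hF U hU
    obtain ⟨hup, hlink, hx0⟩ := mem_Cl.1 h1
    refine ⟨hup, ?_⟩
    obtain ⟨s0, s2, s3, e, TA, TB, f1, f2, f3, f4, a1, a2, a3, a4, a5, b1, b2, b3, b4, b5⟩ :=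
      fingerprint (n := 2*k) (j := j) (by omega) (tp_sub U) hlink hx0 (t := t) (by rw [h2, h3, hgt])
        (32 * r^2) (Nat.one_le_iff_ne_zero.2 (by positivity)) (by omega)
        (1/(24*k*r^2)) (by positivity) (by
          rw [div_lt_one (by positivity)]
          have : 1 < 24*k*r^2 := by
            have : 1 ≤ r^2 := Nat.one_le_pow _ _ (by omega)
            nlinarith
          exact_mod_cast this) (24*k*r^2*l) (by
          have e1 : k * k ≤ (r * (j+1)) * (2*k - j - 1) := Nat.mul_le_mul hbr (by omega)
          have e2 : r * (2 * (24*k*r^2*l)) ≤ k * k := by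
            calc r * (2 * (24*k*r^2*l)) = (48 * r^3 * l) * k := by ring
              _ ≤ (48 * r^3 * r) * k := by
                refine Nat.mul_le_mul_right _ (Nat.mul_le_mul_left _ (by omega))
              _ ≤ k * k := by
                refine Nat.mul_le_mul_right _ ?_
                have := q.h3
                calc 48 * r^3 * r = 48 * r^4 := by ring
                  _ ≤ k := by omega
          refine Nat.le_of_mul_le_mul_left (e2.trans (e1.trans (le_of_eq ?_))) (by omega : 0 < r)
          ring)
    rw [h2] at f1 f4 a5
    have hs := fp_size q hj hg2 f1 f2 f3
    by_cases he : t ≤ r * e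
    · left
      refine ⟨TA, a1, a2, by omega, ?_, a4⟩
      have hSl : contA B (32*r^2) TA ⊆ lvl (2*k) j :=
        Finset.sdiff_subset.trans (Finset.filter_subset _ _)
      refine (hW _ hSl).trans ((rpow_W hσ0 _).trans ?_)
      refine Real.rpow_le_rpow_of_exponent_le (by norm_num) ?_
      set S := (contA B (32*r^2) TA).card with hS
      change (2*k - j) * S ≤ _ at a5
      have a6 : (2*k - j) * S ≤ (2*k-j) * (g - e) + 4 * (32*r^2) * t := by
        refine a5.trans (Nat.add_le_add_right (Nat.mul_le_mul_right _ (by omega)) _)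
      have hDk : k ≤ 2*k - j := by omega
      set D := 2*k - j with hD
      have a7 : (D:ℝ) * S ≤ D * (g - e) + 128 * r^2 * t := by
        have : ((D * S : ℕ):ℝ) ≤ ((D * (g - e) + 4 * (32*r^2) * t : ℕ) : ℝ) := by exact_mod_cast a6
        push_cast [Nat.cast_sub f4] at this
        linarith
      have hDR : (1024 * r^3 : ℝ) ≤ D := by
        have : 1024 * r^3 ≤ D := by omega
        exact_mod_cast this
      have hD0 : (0:ℝ) < D := by exact_mod_cast (by omega : 0 < D)
      have heR : (t:ℝ) / r ≤ e := by
        rw [div_le_iff₀ hrR, mul_comm]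
        exact_mod_cast he
      have a8 : (128 * r^2 * t : ℝ) ≤ D * (t / (8*r)) := by
        calc (128 * r^2 * t : ℝ) = (1024 * r^3) * (t / (8*r)) := by field_simp; ring
          _ ≤ _ := mul_le_mul_of_nonneg_right hDR (by positivity)
      have a9 : (S:ℝ) ≤ g - t / r + t / (8*r) := by
        have : (D:ℝ) * S ≤ D * (g - t / r + t / (8*r)) := by
          have : (D:ℝ) * (g - e) ≤ D * (g - t/r) := mul_le_mul_of_nonneg_left (by linarith) hD0.le
          calc (D:ℝ) * S ≤ D * (g - t/r) + D * (t / (8*r)) := by linarith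
            _ = _ := by ring
        exact le_of_mul_le_mul_left this hD0
      have e8 : (t:ℝ) / (8*r) = t / r / 8 := by field_simp
      have e4 : 3 * (t:ℝ) / (4*r) = 3 * (t / r) / 4 := by field_simp
      have e0 : (0:ℝ) ≤ t / r := by positivity
      have a10 : S ≤ g := by
        have : (S:ℝ) ≤ g := by rw [e8] at a9; linarith
        exact_mod_cast this
      have a11 := hneg S (a10.trans hg2)
      rw [e8] at a11 a9
      rw [e4]
      linarith
    · right
      push Not at he
      have he' : e ≤ t / r := by
        rw [Nat.le_div_iff_mul_le (by omega), mul_comm]; exact he.le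
      refine ⟨TB, b1, b2, by omega, ?_, by rw [b4]; exact b5⟩
      rw [b4]
      refine (hW _ (clos_facts (tp_sub U)).1).trans ((rpow_W hσ0 _).trans ?_)
      refine Real.rpow_le_rpow_of_exponent_le (by norm_num) ?_
      rw [h3]
      have a11 := hneg a (by omega)
      have hgR : (g:ℝ) = a + t := by exact_mod_cast hgt
      have : (t:ℝ) / (8 * r) ≤ t / 8 := by
        refine div_le_div_of_nonneg_left htR (by norm_num) ?_
        have : (1:ℝ) ≤ r := by exact_mod_cast (by omega : 1 ≤ r)
        linarith
      rw [hgR]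
      linarith
  -- counting
  set FA := F.filter fun U => ∃ T, Linked R8 T ∧ (x0, 6) ∈ T ∧ T.card ≤ t / (2*r^2) + 1 ∧
        (Ws (2*k) j (contA B (32*r^2) T) : ℝ) ≤ wA ∧ tp j U ⊆ contA B (32*r^2) T with hFA
  have cA : (FA.card : ℝ) ≤ (((2*k+1)^8*7)^(2*(t / (2*r^2) + 1 - 1)) : ℕ) * wA := by
    refine count_container (j := j) x0 wA (by positivity) (contA B (32*r^2)) FA ?_
    intro U hU
    obtain ⟨h1, h2⟩ := Finset.mem_filter.1 hU
    exact ⟨(dich U h1).1, h2⟩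
  have cB : ((F \ FA).card : ℝ) ≤ (((2*k+1)^8*7)^(2*(t / (2*r^2) + t / r + 1 - 1)) : ℕ) * wB := by
    refine count_container (j := j) x0 wB (by positivity) (contB B (32*r^2)) (F \ FA) ?_
    intro U hU
    obtain ⟨h1, h2⟩ := Finset.mem_sdiff.1 hU
    refine ⟨(dich U h1).1, ?_⟩
    rcases (dich U h1).2 with h | h
    · exact absurd (Finset.mem_filter.2 ⟨h1, h⟩) h2
    · exact h
  have base : ∀ s : ℕ, ((((2*k+1)^8*7)^(2*s) : ℕ) : ℝ) ≤ (2:ℝ)^((2 * l * s : ℕ) : ℝ) := by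
    intro s
    rw [Real.rpow_natCast]
    have : ((2*k+1)^8*7)^(2*s) ≤ 2^(2*l*s) := by
      calc ((2*k+1)^8*7)^(2*s) ≤ (2^l)^(2*s) := Nat.pow_le_pow_left (by have := q.h1; omega) _
        _ = 2^(2*l*s) := by rw [← pow_mul]; congr 1; ring
    exact_mod_cast this
  have hl : (16 * l : ℝ) ≤ r := by exact_mod_cast q.h2
  have hd1 : ((t / (2*r^2) : ℕ):ℝ) ≤ t / (2*r^2) := by
    have := @Nat.cast_div_le ℝ _ _ _ t (2*r^2)
    push_cast at this
    exact this
  have hd2 : ((t / r : ℕ):ℝ) ≤ t / r := Nat.cast_div_le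
  have e0 : (0:ℝ) ≤ t / r := by positivity
  have hl1 : (2 * l : ℝ) * (t / (2*r^2)) ≤ t / r / 16 := by
    calc (2 * l : ℝ) * (t / (2*r^2)) = ((16 * l : ℝ)) * ((t:ℝ) / (16 * r^2)) := by field_simp
      _ ≤ r * ((t:ℝ) / (16 * r^2)) := mul_le_mul_of_nonneg_right hl (by positivity)
      _ = _ := by field_simp
  have hl2 : (2 * l : ℝ) * (t / r) ≤ t / 8 := by
    calc (2 * l : ℝ) * (t / r) = (16 * l : ℝ) * ((t:ℝ) / (8 * r)) := by field_simp; ring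
      _ ≤ r * ((t:ℝ) / (8 * r)) := mul_le_mul_of_nonneg_right hl (by positivity)
      _ = _ := by field_simp
  have htr : (t:ℝ) / r ≤ t := by
    refine div_le_self htR ?_
    exact_mod_cast (by omega : 1 ≤ r)
  have hbig : (7 * k : ℝ) ≤ 11 * (t / r) / 16 := by
    have h1 : (k:ℝ)^2 ≤ 12 * r * t := by exact_mod_cast hkt
    have h2 : (1024 * 256 * r^2 : ℝ) ≤ k := by exact_mod_cast hr2
    have h3 : (1024 * 256 * r^2 : ℝ) * k ≤ (12 * r^2) * (t / r) := by
      calc (1024 * 256 * r^2 : ℝ) * k ≤ k * k := mul_le_mul_of_nonneg_right h2 hkR.le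
        _ = k^2 := by ring
        _ ≤ _ := h1
        _ = _ := by field_simp
    have h4 : (12 * r^2 : ℝ) * (21845 * k) ≤ (12 * r^2) * (t / r) := by
      refine le_trans ?_ h3
      have : (0:ℝ) ≤ r^2 * k := by positivity
      nlinarith
    have h5 := le_of_mul_le_mul_left h4 (by positivity)
    linarith
  have half : ∀ N : ℕ, ((1/2:ℝ))^N = (2:ℝ)^(-(N:ℝ)) := by
    intro N
    rw [Real.rpow_neg (by norm_num), Real.rpow_natCast, one_div, inv_pow]
  have fA : (FA.card : ℝ) ≤ (2:ℝ)^((g:ℝ) - 7 * k) := by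
    refine cA.trans ((mul_le_mul_of_nonneg_right (base _) (by positivity)).trans ?_)
    rw [hwA, ← Real.rpow_add (by norm_num)]
    refine Real.rpow_le_rpow_of_exponent_le (by norm_num) ?_
    rw [Nat.add_sub_cancel]
    push_cast
    have e4 : 3 * (t:ℝ) / (4*r) = 3 * (t / r) / 4 := by field_simp
    have := mul_le_mul_of_nonneg_left hd1 (by positivity : (0:ℝ) ≤ 2 * l)
    rw [e4]
    linarith
  have fB : ((F \ FA).card : ℝ) ≤ (2:ℝ)^((g:ℝ) - 7 * k) := by
    refine cB.trans ((mul_le_mul_of_nonneg_right (base _) (by positivity)).trans ?_)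
    rw [hwB, ← Real.rpow_add (by norm_num)]
    refine Real.rpow_le_rpow_of_exponent_le (by norm_num) ?_
    rw [Nat.add_sub_cancel]
    push_cast
    have := mul_le_mul_of_nonneg_left hd1 (by positivity : (0:ℝ) ≤ 2 * l)
    have := mul_le_mul_of_nonneg_left hd2 (by positivity : (0:ℝ) ≤ 2 * l)
    rw [mul_add]
    linarith
  have hcard : (F.card : ℝ) = FA.card + (F \ FA).card := by
    have := Finset.card_sdiff_add_card_eq_card (Finset.filter_subset (fun U => ∃ T, Linked R8 T ∧ (x0, 6) ∈ T ∧ T.card ≤ t / (2*r^2) + 1 ∧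
        (Ws (2*k) j (contA B (32*r^2) T) : ℝ) ≤ wA ∧ tp j U ⊆ contA B (32*r^2) T) F)
    rw [← hFA] at this
    rw [← this]; push_cast; ring
  have hfin : (2:ℝ)^((g:ℝ) - 7 * k) * (1/2)^g = (1/2)^(7*k) := by
    rw [half, half, ← Real.rpow_add (by norm_num)]
    congr 1
    push_cast
    ring
  calc (F.card : ℝ) * (1/2)^g ≤ (2 * (2:ℝ)^((g:ℝ) - 7 * k)) * (1/2)^g := by
        refine mul_le_mul_of_nonneg_right ?_ (by positivity)
        linarith
    _ = _ := by rw [mul_assoc, hfin]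


/-! ### Cluster sums -/

lemma bd_two {n j : ℕ} {C : Finset (Finset (Fin n))} (hC : C ⊆ lvl n j) (h2 : 2 ≤ C.card) :
    2 * (n - j) ≤ (bd C).card + 1 := by
  obtain ⟨x, hx, x', hx', hne⟩ := Finset.one_lt_card.1 (by omega : 1 < C.card)
  have h1 := Finset.card_union_add_card_inter (up x) (up x')
  have h3 := up_inter_card hne (by rw [mem_lvl.1 (hC hx), mem_lvl.1 (hC hx')])
  rw [card_up, card_up, mem_lvl.1 (hC hx), mem_lvl.1 (hC hx')] at h1
  have h4 : (up x ∪ up x').card ≤ (bd C).card := by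
    refine Finset.card_le_card (Finset.union_subset ?_ ?_)
    · exact fun y hy => mem_bd.2 ⟨x, hx, hy⟩
    · exact fun y hy => mem_bd.2 ⟨x', hx', hy⟩
  omega

lemma sigma_le_one {k r l : ℕ} (q : Par k r l) : (3 * (1/2:ℝ)^k) ≤ 1 := by
  have : (1/2:ℝ)^k ≤ (1/2)^2 :=
    pow_le_pow_of_le_one (by norm_num) (by norm_num) (by have := q.k_big; have := q.r_pos; omega)
  linarith

theorem partI {k r l j : ℕ} (q : Par k r l) (hj : j + 1 ≤ k) (x0 : Finset (Fin (2*k)))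
    (hW : ∀ A ⊆ lvl (2*k) j, (Ws (2*k) j A : ℝ) ≤ (2 * (1 + 3 * (1/2:ℝ)^k))^A.card) :
    ∑ U ∈ (Cl2 (2*k) j x0).filter (fun U => r * (tp j U).card ≤ (bd (tp j U)).card), wt j U ≤
      (1/2)^(k+l) := by
  set S1 := (Cl2 (2*k) j x0).filter (fun U => r * (tp j U).card ≤ (bd (tp j U)).card) with hS1
  set N := Fintype.card (Finset (Fin (2*k))) with hN
  have hmaps : ∀ U ∈ S1, (tp j U).card - 2 ∈ Finset.range (N+1) := by
    intro U _
    have : (tp j U).card ≤ N := Finset.card_le_univ _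
    rw [Finset.mem_range]; omega
  rw [← Finset.sum_fiberwise_of_maps_to hmaps]
  have hl := q.l_pos
  have key : ∀ i ∈ Finset.range (N+1),
      ∑ U ∈ S1.filter (fun U => (tp j U).card - 2 = i), wt j U ≤ (1/2)^(k+l+1) * (1/2)^i := by
    intro i _
    set Fi := S1.filter (fun U => (tp j U).card - 2 = i) with hFi
    have hmem : ∀ U ∈ Fi, IsUpf j U ∧ Linked R2 (tp j U) ∧ x0 ∈ tp j U ∧ (tp j U).card = i + 2 ∧
        r * (i+2) ≤ (bd (tp j U)).card := by
      intro U hU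
      obtain ⟨h1, h2⟩ := Finset.mem_filter.1 hU
      obtain ⟨h3, h4⟩ := Finset.mem_filter.1 h1
      obtain ⟨h5, h6⟩ := Finset.mem_filter.1 h3
      obtain ⟨h7, h8, h9⟩ := mem_Cl.1 h5
      have : (tp j U).card = i + 2 := by omega
      rw [this] at h4
      exact ⟨h7, h8, h9, this, h4⟩
    have hwt : ∀ U ∈ Fi, wt j U ≤ (1/2)^(8 * l * (i+2) + k) := by
      intro U hU
      obtain ⟨h1, h2, h3, h4, h5⟩ := hmem U hU
      refine pow_le_pow_of_le_one (by norm_num) (by norm_num) ?_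
      have h6 := bd_two (tp_sub U) (by omega : 2 ≤ (tp j U).card)
      have h7 : 16 * l * (i+2) ≤ r * (i+2) := Nat.mul_le_mul_right _ q.h2
      have h8 : 16 * l * (i+2) = 2 * (8 * l * (i+2)) := by ring
      omega
    have hcount : (Fi.card : ℝ) ≤ (2:ℝ)^(l*(i+2)) * 4^(i+2) := by
      have hT : (Fi.image (tp j)).card ≤ (((2*k)+1)^2)^(2*((i+2)-1)) := by
        refine card_linked_two (i+2) x0 _ ?_
        intro C hC
        obtain ⟨U, hU, rfl⟩ := Finset.mem_image.1 hC
        obtain ⟨h1, h2, h3, h4, h5⟩ := hmem U hU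
        exact ⟨h2, h3, h4.le⟩
      have hT2 : (((2*k)+1)^2)^(2*((i+2)-1)) ≤ 2^(l*(i+2)) := by
        calc (((2*k)+1)^2)^(2*((i+2)-1)) = ((2*k+1)^4)^(i+1) := by
              rw [← pow_mul, ← pow_mul]; congr 1; simp; ring
          _ ≤ (2^l)^(i+1) := by
              refine Nat.pow_le_pow_left (le_trans ?_ q.h1) _
              have : (2*k+1)^4 ≤ (2*k+1)^8 := Nat.pow_le_pow_right (by omega) (by omega)
              omega
          _ ≤ (2^l)^(i+2) := Nat.pow_le_pow_right (Nat.one_le_two_pow) (by omega)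
          _ = _ := by rw [← pow_mul]
      have hsub : Fi ⊆ (Fi.image (tp j)).biUnion fun C => Zset (2*k) j C := by
        intro U hU
        exact Finset.mem_biUnion.2 ⟨tp j U, Finset.mem_image_of_mem _ hU,
          mem_Zset.2 ⟨(hmem U hU).1, subset_rfl⟩⟩
      have h1 : Fi.card ≤ ∑ C ∈ Fi.image (tp j), Ws (2*k) j C :=
        (Finset.card_le_card hsub).trans Finset.card_biUnion_le
      calc (Fi.card : ℝ) ≤ ((∑ C ∈ Fi.image (tp j), Ws (2*k) j C : ℕ) : ℝ) := by exact_mod_cast h1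
        _ = ∑ C ∈ Fi.image (tp j), (Ws (2*k) j C : ℝ) := by push_cast; rfl
        _ ≤ ∑ C ∈ Fi.image (tp j), (4:ℝ)^(i+2) := by
            refine Finset.sum_le_sum fun C hC => ?_
            obtain ⟨U, hU, rfl⟩ := Finset.mem_image.1 hC
            refine (hW _ (tp_sub U)).trans ?_
            rw [(hmem U hU).2.2.2.1]
            refine pow_le_pow_left₀ (by positivity) ?_ _
            have := sigma_le_one q
            linarith
        _ = (Fi.image (tp j)).card * (4:ℝ)^(i+2) := by simp
        _ ≤ _ := by
            refine mul_le_mul_of_nonneg_right ?_ (by positivity)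
            exact_mod_cast hT.trans hT2
    calc ∑ U ∈ Fi, wt j U ≤ ∑ U ∈ Fi, (1/2:ℝ)^(8 * l * (i+2) + k) := Finset.sum_le_sum hwt
      _ = Fi.card * (1/2:ℝ)^(8 * l * (i+2) + k) := by simp
      _ ≤ ((2:ℝ)^(l*(i+2)) * 4^(i+2)) * (1/2:ℝ)^(8 * l * (i+2) + k) :=
          mul_le_mul_of_nonneg_right hcount (by positivity)
      _ = (2:ℝ)^((l+2)*(i+2)) * (1/2:ℝ)^((l+2)*(i+2) + ((7*l-2)*(i+2) + k)) := by
          congr 1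
          · rw [show (4:ℝ) = 2^2 by norm_num, ← pow_mul, ← pow_add]
            congr 1; ring
          · congr 1
            have : 7 * l = (7*l-2) + 2 := by omega
            calc 8 * l * (i+2) + k = (l + 7 * l) * (i+2) + k := by ring
              _ = (l + ((7*l-2) + 2)) * (i+2) + k := by rw [← this]
              _ = _ := by ring
      _ = (1/2:ℝ)^((7*l-2)*(i+2) + k) := by
          rw [pow_add (1/2:ℝ) ((l+2)*(i+2)), ← mul_assoc, ← mul_pow]
          norm_num
      _ ≤ (1/2:ℝ)^(k+l+1+i) := by
          refine pow_le_pow_of_le_one (by norm_num) (by norm_num) ?_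
          have : (5 * l) * (i+2) ≤ (7*l-2)*(i+2) := Nat.mul_le_mul_right _ (by omega)
          have : 5 * (i+2) * 1 ≤ 5 * (i+2) * l := Nat.mul_le_mul_left _ hl
          have e : 5 * l * (i+2) = 5 * (i * l) + 10 * l := by ring
          have : i ≤ i * l := Nat.le_mul_of_pos_right _ hl
          omega
      _ = _ := by rw [pow_add]
  refine (Finset.sum_le_sum key).trans ?_
  rw [← Finset.mul_sum]
  have := sum_geometric_two_le (N+1)
  calc (1/2:ℝ)^(k+l+1) * ∑ i ∈ Finset.range (N+1), (1/2:ℝ)^i ≤ (1/2:ℝ)^(k+l+1) * 2 :=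
        mul_le_mul_of_nonneg_left this (by positivity)
    _ = _ := by rw [pow_succ]; ring

theorem partII {k r l j : ℕ} (q : Par k r l) (hj : j + 1 ≤ k) (x0 : Finset (Fin (2*k)))
    (hW : ∀ A ⊆ lvl (2*k) j, (Ws (2*k) j A : ℝ) ≤ (2 * (1 + 3 * (1/2:ℝ)^k))^A.card) :
    ∑ U ∈ (Cl2 (2*k) j x0).filter (fun U => ¬ r * (tp j U).card ≤ (bd (tp j U)).card), wt j U ≤
      (1/2)^(k+l) := by
  set S2 := (Cl2 (2*k) j x0).filter (fun U => ¬ r * (tp j U).card ≤ (bd (tp j U)).card) with hS2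
  set N := Fintype.card (Finset (Fin (2*k))) with hN
  have hN2 : N = 2^(2*k) := by simp [hN]
  have hmaps : ∀ U ∈ S2, ((bd (tp j U)).card, (clos j (tp j U)).card) ∈
      Finset.range (N+1) ×ˢ Finset.range (N+1) := by
    intro U _
    have h1 : (bd (tp j U)).card ≤ N := Finset.card_le_univ _
    have h2 : (clos j (tp j U)).card ≤ N := Finset.card_le_univ _
    rw [Finset.mem_product, Finset.mem_range, Finset.mem_range]
    exact ⟨by simp only []; omega, by simp only []; omega⟩
  rw [← Finset.sum_fiberwise_of_maps_to hmaps]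
  have key : ∀ ga ∈ Finset.range (N+1) ×ˢ Finset.range (N+1),
      ∑ U ∈ S2.filter (fun U => ((bd (tp j U)).card, (clos j (tp j U)).card) = ga), wt j U ≤
        2 * (1/2:ℝ)^(7*k) := by
    rintro ⟨g, a⟩ _
    set F := S2.filter (fun U => ((bd (tp j U)).card, (clos j (tp j U)).card) = (g, a)) with hF
    have hmem : ∀ U ∈ F, U ∈ Cl (2*k) j x0 ∧ (bd (tp j U)).card = g ∧ (clos j (tp j U)).card = a ∧
      g < r * (tp j U).card := by
      intro U hU
      obtain ⟨h1, h2⟩ := Finset.mem_filter.1 hU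
      obtain ⟨h3, h4⟩ := Finset.mem_filter.1 h1
      rw [Prod.mk.injEq] at h2
      refine ⟨(Finset.mem_filter.1 h3).1, h2.1, h2.2, ?_⟩
      rw [← h2.1]; omega
    calc ∑ U ∈ F, wt j U = ∑ U ∈ F, (1/2:ℝ)^g := by
          refine Finset.sum_congr rfl fun U hU => ?_
          unfold wt
          rw [(hmem U hU).2.1]
      _ = F.card * (1/2:ℝ)^g := by simp
      _ ≤ _ := caseII q hj x0 hW F hmem
  refine (Finset.sum_le_sum key).trans ?_
  rw [Finset.sum_const, Finset.card_product, Finset.card_range, nsmul_eq_mul]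
  have h1 : (N + 1) * (N+1) ≤ 2^(4*k+2) := by
    have : N + 1 ≤ 2^(2*k+1) := by
      rw [hN2, pow_succ]
      have : 1 ≤ 2^(2*k) := Nat.one_le_two_pow
      omega
    calc (N+1)*(N+1) ≤ 2^(2*k+1) * 2^(2*k+1) := Nat.mul_le_mul this this
      _ = _ := by rw [← pow_add]; congr 1; ring
  have h1' : (((N + 1) * (N+1) : ℕ) : ℝ) ≤ 2^(4*k+2) := by exact_mod_cast h1
  calc (((N + 1) * (N+1) : ℕ) : ℝ) * (2 * (1/2:ℝ)^(7*k)) ≤ 2^(4*k+2) * (2 * (1/2:ℝ)^(7*k)) :=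
        mul_le_mul_of_nonneg_right h1' (by positivity)
    _ = 2^(4*k+3) * (1/2:ℝ)^((4*k+3) + (3*k-3)) := by
        have : 7 * k = (4*k+3) + (3*k-3) := by have := q.k_big; have := q.r_pos; omega
        rw [← this, pow_succ (2:ℝ) (4*k+2)]; ring
    _ = (1/2:ℝ)^(3*k-3) := by
        rw [pow_add (1/2:ℝ), ← mul_assoc, ← mul_pow]; norm_num
    _ ≤ _ := by
        refine pow_le_pow_of_le_one (by norm_num) (by norm_num) ?_
        have := q.l_le_k
        have := q.k_big; have := q.r_pos; omega

lemma sg2_bound {k r l j : ℕ} (q : Par k r l) (hj : j + 1 ≤ k) (x0 : Finset (Fin (2*k)))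
    (hW : ∀ A ⊆ lvl (2*k) j, (Ws (2*k) j A : ℝ) ≤ (2 * (1 + 3 * (1/2:ℝ)^k))^A.card) :
    sg2 (2*k) j x0 ≤ 2 * (1/2)^(k+l) := by
  unfold sg2
  rw [← Finset.sum_filter_add_sum_filter_not (Cl2 (2*k) j x0)
    (fun U => r * (tp j U).card ≤ (bd (tp j U)).card)]
  have := partI q hj x0 hW
  have := partII q hj x0 hW
  linarith

lemma sg_bound {k r l j : ℕ} (q : Par k r l) (hj : j + 1 ≤ k) (x0 : Finset (Fin (2*k)))
    (hW : ∀ A ⊆ lvl (2*k) j, (Ws (2*k) j A : ℝ) ≤ (2 * (1 + 3 * (1/2:ℝ)^k))^A.card) :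
    sg (2*k) j x0 ≤ 3 * (1/2)^k := by
  unfold sg
  rw [← Finset.sum_filter_add_sum_filter_not (Cl (2*k) j x0) (fun U => 2 ≤ (tp j U).card)]
  have h1 : ∑ U ∈ (Cl (2*k) j x0).filter (fun U => 2 ≤ (tp j U).card), wt j U ≤ 2 * (1/2)^(k+l) :=
    sg2_bound q hj x0 hW
  have h2 : ∑ U ∈ (Cl (2*k) j x0).filter (fun U => ¬ 2 ≤ (tp j U).card), wt j U ≤ 2 * (1/2)^k := by
    set F := (Cl (2*k) j x0).filter (fun U => ¬ 2 ≤ (tp j U).card) with hF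
    have hmem : ∀ U ∈ F, IsUpf j U ∧ tp j U = {x0} := by
      intro U hU
      obtain ⟨h1, h2⟩ := Finset.mem_filter.1 hU
      obtain ⟨h3, h4, h5⟩ := mem_Cl.1 h1
      refine ⟨h3, ?_⟩
      have : (tp j U).card = 1 := by
        have := Finset.card_pos.2 ⟨x0, h5⟩
        omega
      obtain ⟨y, hy⟩ := Finset.card_eq_one.1 this
      rw [hy, Finset.mem_singleton] at h5
      rw [hy, h5]
    rcases F.eq_empty_or_nonempty with hE | ⟨U0, hU0⟩
    · rw [hE]; simp
    have hx0 : x0.card = j := by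
      have : x0 ∈ tp j U0 := by rw [(hmem U0 hU0).2]; simp
      exact (mem_tp.1 this).2
    have hc : (F.card : ℝ) ≤ 4 := by
      have h1 : F.card ≤ Ws (2*k) j {x0} := by
        refine Finset.card_le_card fun U hU => ?_
        rw [mem_Zset]
        exact ⟨(hmem U hU).1, (hmem U hU).2.le⟩
      have h2 := hW {x0} (by intro y hy; rw [Finset.mem_singleton] at hy; rw [hy, mem_lvl, hx0])
      simp only [Finset.card_singleton, pow_one] at h2
      have h3 : (F.card : ℝ) ≤ (Ws (2*k) j {x0} : ℝ) := by exact_mod_cast h1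
      have := sigma_le_one q
      linarith
    have hw : ∀ U ∈ F, wt j U ≤ (1/2)^(k+1) := by
      intro U hU
      unfold wt
      rw [(hmem U hU).2]
      refine pow_le_pow_of_le_one (by norm_num) (by norm_num) ?_
      simp only [bd, Finset.singleton_biUnion, card_up, hx0]
      omega
    calc ∑ U ∈ F, wt j U ≤ ∑ U ∈ F, (1/2:ℝ)^(k+1) := Finset.sum_le_sum hw
      _ = F.card * (1/2:ℝ)^(k+1) := by simp
      _ ≤ 4 * (1/2:ℝ)^(k+1) := mul_le_mul_of_nonneg_right hc (by positivity)
      _ = _ := by rw [pow_succ]; ring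
  have h3 : 2 * (1/2:ℝ)^(k+l) ≤ (1/2)^k := by
    rw [pow_add]
    have : (1/2:ℝ)^l ≤ (1/2)^1 := pow_le_pow_of_le_one (by norm_num) (by norm_num) q.l_pos
    have h4 : (0:ℝ) ≤ (1/2)^k := by positivity
    nlinarith
  linarith

theorem cluster {k r l : ℕ} (q : Par k r l) : ∀ j : ℕ, j + 1 ≤ k →
    (∀ x, sg (2*k) j x ≤ 3 * (1/2)^k) ∧ (∀ x, sg2 (2*k) j x ≤ 2 * (1/2)^(k+l)) := by
  intro j
  induction j with
  | zero =>
    intro hj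
    have hW : ∀ A ⊆ lvl (2*k) 0, (Ws (2*k) 0 A : ℝ) ≤ (2 * (1 + 3 * (1/2:ℝ)^k))^A.card := by
      intro A _
      have h1 : (Ws (2*k) 0 A : ℝ) ≤ 2^A.card := by exact_mod_cast Ws_zero A
      refine h1.trans (pow_le_pow_left₀ (by norm_num) ?_ _)
      have : (0:ℝ) ≤ (1/2)^k := by positivity
      linarith
    exact ⟨fun x => sg_bound q hj x hW, fun x => sg2_bound q hj x hW⟩
  | succ j ih =>
    intro hj
    obtain ⟨h1, _⟩ := ih (by omega)
    have hW : ∀ A ⊆ lvl (2*k) (j+1), (Ws (2*k) (j+1) A : ℝ) ≤ (2 * (1 + 3 * (1/2:ℝ)^k))^A.card := by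
      intro A hA
      exact Ws_le (by omega) (by positivity) h1 hA
    exact ⟨fun x => sg_bound q hj x hW, fun x => sg2_bound q hj x hW⟩

lemma exists_par_aux (c : ℕ) (hc0 : 0 < c) : ∃ K : ℕ, ∀ k ≥ K, ∃ l, 7 * (2*k+1)^8 ≤ 2^l ∧ c * l^4 ≤ k := by
  have h := tendsto_pow_const_div_const_pow_of_one_lt 32 (by norm_num : (1:ℝ) < 2)
  obtain ⟨M, hM⟩ : ∃ M : ℕ, M = 7 * (2 * c)^8 := ⟨_, rfl⟩
  have hM0 : 0 < M := by rw [hM]; positivity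
  have hM0' : (0:ℝ) < M := by exact_mod_cast hM0
  have hpos : (0:ℝ) < 1 / (2 * M) := by positivity
  obtain ⟨L, hL⟩ := Filter.eventually_atTop.1 (h.eventually (gt_mem_nhds hpos))
  clear h
  refine ⟨c * L^4, fun k hk => ?_⟩
  obtain ⟨s, hs⟩ : ∃ s, s = Nat.sqrt (k / c) := ⟨_, rfl⟩
  obtain ⟨l, hl⟩ : ∃ l, l = Nat.sqrt s := ⟨_, rfl⟩
  have h1 : l * l ≤ s := by rw [hl]; exact Nat.sqrt_le _
  have h2 : s * s ≤ k / c := by rw [hs]; exact Nat.sqrt_le _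
  have h3 : s < (l+1) * (l+1) := by rw [hl]; exact Nat.lt_succ_sqrt _
  have h4 : k / c < (s + 1) * (s + 1) := by rw [hs]; exact Nat.lt_succ_sqrt _
  have h5 : l^4 ≤ k / c := by
    calc l^4 = (l*l)*(l*l) := by ring
      _ ≤ _ := Nat.mul_le_mul h1 h1
      _ ≤ _ := h2
  have h6 : c * l^4 ≤ k := by
    rw [mul_comm]; exact (Nat.le_div_iff_mul_le hc0).1 h5
  have h7 : k < c * (l+1)^4 := by
    have : k / c < (l+1)^4 := by
      calc k / c < _ := h4
        _ ≤ ((l+1)*(l+1)) * ((l+1)*(l+1)) := Nat.mul_le_mul (by omega) (by omega)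
        _ = _ := by ring
    rw [mul_comm]; exact (Nat.div_lt_iff_lt_mul hc0).1 this
  have h8 : L ≤ l + 1 := by
    by_contra hcon
    have : (l+1)^4 ≤ L^4 := Nat.pow_le_pow_left (by omega) 4
    have := Nat.mul_le_mul_left c this
    omega
  have h9 := hL (l+1) h8
  refine ⟨l, ?_, h6⟩
  have e1 : 7 * (2*k+1)^8 ≤ M * (l+1)^32 := by
    calc 7 * (2*k+1)^8 ≤ 7 * (2 * (c * (l+1)^4))^8 :=
          Nat.mul_le_mul_left _ (Nat.pow_le_pow_left (by omega) 8)
      _ = _ := by rw [hM, ← mul_assoc 2 c, mul_pow (2*c), ← pow_mul, mul_assoc]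
  refine e1.trans ?_
  generalize hA : l + 1 = a at *
  have e2 : (M:ℝ) * (a:ℝ)^32 ≤ 2^l := by
    have : (2:ℝ)^a = 2 * 2^l := by rw [← hA, pow_succ, mul_comm]
    rw [div_lt_div_iff₀ (by positivity) (by positivity), this] at h9
    generalize (a:ℝ)^32 = y at *
    generalize (2:ℝ)^l = z at *
    nlinarith
  have e3 : ((M * a^32 : ℕ) : ℝ) ≤ ((2^l : ℕ) : ℝ) := by
    rw [Nat.cast_mul, Nat.cast_pow, Nat.cast_pow]; exact e2
  exact Nat.cast_le.1 e3

lemma exists_par : ∃ K : ℕ, ∀ k ≥ K, ∃ r l, Par k r l := by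
  obtain ⟨K, hK⟩ := exists_par_aux (1024 * 65536) (by norm_num)
  refine ⟨K, fun k hk => ?_⟩
  obtain ⟨l, h1, h2⟩ := hK k hk
  refine ⟨16 * l, l, h1, le_rfl, ?_⟩
  rw [mul_pow]
  have : (16:ℕ)^4 = 65536 := by norm_num
  rw [this, ← mul_assoc]; exact h2

/-! ### Peierls argument for down-sets -/

def IsDs {n : ℕ} (D : Finset (Finset (Fin n))) : Prop := ∀ x ∈ D, ∀ y, y ⊆ x → y ∈ D

def dsets (n : ℕ) : Finset (Finset (Finset (Fin n))) := Finset.univ.filter IsDs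

lemma mem_dsets {n : ℕ} {D : Finset (Finset (Fin n))} : D ∈ dsets n ↔ IsDs D := by simp [dsets]

def nf {n : ℕ} (j : ℕ) (D : Finset (Finset (Fin n))) : Finset (Finset (Fin n)) :=
  Finset.univ.filter fun u => u.card ≤ j ∧ u ∉ D

lemma mem_nf {n j : ℕ} {D : Finset (Finset (Fin n))} {u : Finset (Fin n)} :
    u ∈ nf j D ↔ u.card ≤ j ∧ u ∉ D := by simp [nf]

lemma nf_isUpf {n j : ℕ} {D : Finset (Finset (Fin n))} (hD : IsDs D) : IsUpf j (nf j D) := by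
  refine ⟨fun u hu => (mem_nf.1 hu).1, fun u hu v huv hv => mem_nf.2 ⟨hv, fun h => ?_⟩⟩
  exact (mem_nf.1 hu).2 (hD v h u huv)

lemma peierls_ds {n j : ℕ} (hj : j ≤ n) {x : Finset (Fin n)} {D : Finset (Finset (Fin n))}
    (hD : IsDs D) (hx : x.card = j) (hxD : x ∉ D) {S : Finset (Finset (Fin n))}
    (hS : S ⊆ bd (tp j (cp j x (nf j D)))) : IsDs (D ∪ cp j x (nf j D) ∪ S) := by
  obtain ⟨c1, c2, c3, c4, c5, c6⟩ := cp_spec hj (nf_isUpf (j := j) hD)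
    (mem_tp.2 ⟨mem_nf.2 ⟨hx.le, hxD⟩, hx⟩)
  set U := nf j D
  set U1 := cp j x U
  intro z hz v hv
  simp only [Finset.mem_union] at hz ⊢
  rcases hz with (hz | hz) | hz
  · exact Or.inl (Or.inl (hD z hz v hv))
  · by_contra hcon
    push Not at hcon
    have hzc := (mem_nf.1 (c1 hz)).1
    have hvU : v ∈ U := mem_nf.2 ⟨(Finset.card_le_card hv).trans hzc, hcon.1.1⟩
    have := c3.2 v (Finset.mem_sdiff.2 ⟨hvU, hcon.1.2⟩) z hv hzc
    exact (Finset.mem_sdiff.1 this).2 hz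
  · by_contra hcon
    push Not at hcon
    obtain ⟨c, hc, hcz⟩ := mem_bd.1 (hS hz)
    have hzc : z.card = j + 1 := by rw [(mem_up.1 hcz).2, (mem_tp.1 hc).2]
    have hvz : v ≠ z := by rintro rfl; exact hcon.2 hz
    have hvc : v.card ≤ j := by
      have := Finset.card_lt_card (hv.ssubset_of_ne hvz)
      omega
    have hvU : v ∈ U := mem_nf.2 ⟨hvc, hcon.1.1⟩
    obtain ⟨v', h1, h2, h3⟩ := Finset.exists_subsuperset_card_eq hv hvc (by omega)
    have h4 := c3.2 v (Finset.mem_sdiff.2 ⟨hvU, hcon.1.2⟩) v' h1 h3.le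
    exact Finset.disjoint_left.1 c6 (hS hz)
      (mem_bd.2 ⟨v', mem_tp.2 ⟨h4, h3⟩, mem_up.2 ⟨h2, by omega⟩⟩)

lemma union_recover {V : Type*} [DecidableEq V] {D D' U B S S' : Finset V}
    (a1 : ∀ u ∈ U, u ∉ D) (a2 : ∀ u ∈ B, u ∉ D) (a3 : ∀ u ∈ B, u ∉ U)
    (b1 : ∀ u ∈ U, u ∉ D') (b2 : ∀ u ∈ B, u ∉ D') (h2 : S ⊆ B) (h2' : S' ⊆ B)
    (heq : D ∪ U ∪ S = D' ∪ U ∪ S') : D = D' ∧ S = S' := by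
  have e : ∀ u, (u ∈ D ∨ u ∈ U ∨ u ∈ S) ↔ (u ∈ D' ∨ u ∈ U ∨ u ∈ S') := by
    intro u
    have := congrArg (fun T => u ∈ T) heq
    simpa using this
  constructor
  · ext u
    have := e u; have := a1 u; have := a2 u; have := b1 u; have := b2 u
    have := @h2 u; have := @h2' u
    grind
  · ext u
    have := e u; have := a1 u; have := a2 u; have := b1 u; have := b2 u; have := a3 u
    have := @h2 u; have := @h2' u
    grind

lemma peierls_fiber {n j : ℕ} (hj : j ≤ n) {x : Finset (Fin n)} (hx : x.card = j)
    (U1 : Finset (Finset (Fin n))) :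
    (((dsets n).filter fun D => x ∉ D ∧ cp j x (nf j D) = U1).card : ℝ) ≤
      wt j U1 * (dsets n).card := by
  set F := (dsets n).filter fun D => x ∉ D ∧ cp j x (nf j D) = U1 with hF
  have key : (F ×ˢ (bd (tp j U1)).powerset).card ≤ (dsets n).card := by
    have disj : ∀ D ∈ F, (∀ u ∈ U1, u ∉ D) ∧ (∀ u ∈ bd (tp j U1), u ∉ D) ∧
        (∀ u ∈ bd (tp j U1), u ∉ U1) := by
      intro D hDF
      obtain ⟨hD, hxD, rfl⟩ := Finset.mem_filter.1 hDF
      rw [mem_dsets] at hD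
      obtain ⟨c1, -⟩ := cp_spec hj (nf_isUpf (j := j) hD)
        (mem_tp.2 ⟨mem_nf.2 ⟨hx.le, hxD⟩, hx⟩)
      refine ⟨fun u hu => (mem_nf.1 (c1 hu)).2, fun u hu h => ?_, fun u hu h => ?_⟩
      · obtain ⟨c, hc, hcu⟩ := mem_bd.1 hu
        exact (mem_nf.1 (c1 (mem_tp.1 hc).1)).2 (hD u h c (mem_up.1 hcu).1)
      · obtain ⟨c, hc, hcu⟩ := mem_bd.1 hu
        have h1 := (mem_nf.1 (c1 h)).1
        have h2 := (mem_up.1 hcu).2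
        have h3 := (mem_tp.1 hc).2
        omega
    refine Finset.card_le_card_of_injOn (fun p => p.1 ∪ U1 ∪ p.2) ?_ ?_
    · rintro ⟨D, S⟩ hp
      obtain ⟨h1, h2⟩ := Finset.mem_product.1 hp
      obtain ⟨hD, hxD, hU⟩ := Finset.mem_filter.1 h1
      have := peierls_ds hj (mem_dsets.1 hD) hx hxD (S := S)
        (by rw [hU]; exact Finset.mem_powerset.1 h2)
      rw [hU] at this
      exact mem_dsets.2 this
    · rintro ⟨D, S⟩ hp ⟨D', S'⟩ hp' heq
      obtain ⟨h1, h2⟩ := Finset.mem_product.1 hp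
      obtain ⟨h1', h2'⟩ := Finset.mem_product.1 hp'
      obtain ⟨a1, a2, a3⟩ := disj D h1
      obtain ⟨b1, b2, b3⟩ := disj D' h1'
      simp only [Finset.mem_powerset] at h2 h2'
      simp only at heq
      obtain ⟨eD, eS⟩ := union_recover a1 a2 a3 b1 b2 h2 h2' heq
      rw [eS, eD]
  rw [Finset.card_product, Finset.card_powerset] at key
  have key' : (F.card : ℝ) * 2^(bd (tp j U1)).card ≤ (dsets n).card := by exact_mod_cast key
  unfold wt
  rw [one_div, inv_pow, ← div_eq_inv_mul, le_div_iff₀ (by positivity)]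
  exact key'

lemma peierls_sum {n j : ℕ} (hj : j ≤ n) {x : Finset (Fin n)} (hx : x.card = j)
    (G T : Finset (Finset (Finset (Fin n)))) (hG : ∀ D ∈ G, IsDs D ∧ x ∉ D)
    (hT : ∀ D ∈ G, cp j x (nf j D) ∈ T) :
    (G.card : ℝ) ≤ (∑ U ∈ T, wt j U) * (dsets n).card := by
  rw [Finset.card_eq_sum_card_fiberwise (f := fun D => cp j x (nf j D)) (t := T) (fun D hD => hT D hD)]
  push_cast
  rw [Finset.sum_mul]
  refine Finset.sum_le_sum fun U _ => le_trans ?_ (peierls_fiber hj hx U)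
  norm_cast
  refine Finset.card_le_card fun D hD => ?_
  obtain ⟨h1, h2⟩ := Finset.mem_filter.1 hD
  exact Finset.mem_filter.2 ⟨mem_dsets.2 (hG D h1).1, (hG D h1).2, h2⟩

lemma peierls_one {n j : ℕ} (hj : j ≤ n) {x : Finset (Fin n)} (hx : x.card = j) :
    (((dsets n).filter fun D => x ∉ D).card : ℝ) ≤ sg n j x * (dsets n).card := by
  refine peierls_sum hj hx _ _ (fun D hD => ?_) (fun D hD => ?_)
  · obtain ⟨h1, h2⟩ := Finset.mem_filter.1 hD
    exact ⟨mem_dsets.1 h1, h2⟩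
  · obtain ⟨h1, h2⟩ := Finset.mem_filter.1 hD
    exact (cp_spec hj (nf_isUpf (j := j) (mem_dsets.1 h1)) (mem_tp.2 ⟨mem_nf.2 ⟨hx.le, h2⟩, hx⟩)).2.1

lemma peierls_two {n j : ℕ} (hj : j < n) {w : Finset (Fin n)} (hw : w.card < j) :
    ∃ x : Finset (Fin n), (((dsets n).filter fun D => w ∉ D).card : ℝ) ≤
      sg2 n j x * (dsets n).card := by
  obtain ⟨x, hwx, hx⟩ := exists_sup (n := n) hj.le hw.le
  refine ⟨x, peierls_sum hj.le hx _ _ (fun D hD => ?_) (fun D hD => ?_)⟩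
  · obtain ⟨h1, h2⟩ := Finset.mem_filter.1 hD
    exact ⟨mem_dsets.1 h1, fun h => h2 (mem_dsets.1 h1 x h w hwx)⟩
  · obtain ⟨h1, h2⟩ := Finset.mem_filter.1 hD
    rw [mem_dsets] at h1
    have hxU : x ∈ tp j (nf j D) := mem_tp.2 ⟨mem_nf.2 ⟨hx.le, fun h => h2 (h1 x h w hwx)⟩, hx⟩
    obtain ⟨-, c2, -, -, c5, -⟩ := cp_spec hj.le (nf_isUpf (j := j) h1) hxU
    refine Finset.mem_filter.2 ⟨c2, ?_⟩
    have hxC := (mem_Cl.1 c2).2.2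
    -- another superset
    obtain ⟨b, hb, hbw⟩ : ∃ b ∈ x, b ∉ w := by
      by_contra hcon
      push Not at hcon
      have := Finset.card_le_card (show x ⊆ w from hcon)
      omega
    obtain ⟨a, ha⟩ : ∃ a, a ∉ x := by
      by_contra hcon
      push Not at hcon
      have : x = Finset.univ := Finset.eq_univ_iff_forall.2 hcon
      rw [this] at hx
      simp at hx; omega
    have hax : a ∉ x.erase b := fun h => ha (Finset.mem_of_mem_erase h)
    have hc1 : (insert a (x.erase b)).card = j := by
      rw [Finset.card_insert_of_notMem hax, Finset.card_erase_of_mem hb]; omega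
    have hu1 : w ⊆ insert a (x.erase b) := by
      intro z hz
      refine Finset.mem_insert_of_mem (Finset.mem_erase.2 ⟨?_, hwx hz⟩)
      rintro rfl
      exact hbw hz
    have hm := upf_conn (nf_isUpf (j := j) h1) c5 (mem_nf.2 ⟨hw.le, h2⟩) _ x _ hwx hu1 hx hc1 rfl hxC
    have hne : x ≠ insert a (x.erase b) := fun h => ha (by rw [h]; exact Finset.mem_insert_self _ _)
    exact Finset.one_lt_card.2 ⟨x, hxC, _, hm, hne⟩

/-! ### First moment bounds -/

lemma sum_nf_le {k r l : ℕ} (q : Par k r l) (hk : 1 ≤ k) :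
    ∑ D ∈ dsets (2*k), ((nf (k-1) D).card : ℝ) ≤
      (((2*k).choose (k-1) : ℝ) * (3 * (1/2)^k) + 4^k * (2 * (1/2)^(k+l))) * (dsets (2*k)).card := by
  obtain ⟨hs1, hs2⟩ := cluster q (k-1) (by omega)
  set N : ℝ := ((dsets (2*k)).card : ℝ) with hN
  have hN0 : 0 ≤ N := by positivity
  have e1 : ∑ D ∈ dsets (2*k), ((nf (k-1) D).card : ℝ) =
      ∑ u ∈ (Finset.univ.filter fun u : Finset (Fin (2*k)) => u.card ≤ k-1),
        (((dsets (2*k)).filter fun D => u ∉ D).card : ℝ) := by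
    simp only [nf, Finset.card_filter, Nat.cast_sum, Finset.sum_filter]
    rw [Finset.sum_comm]
    refine Finset.sum_congr rfl fun u _ => ?_
    by_cases h : u.card ≤ k-1
    · simp [h]
    · simp [h]
  rw [e1]
  calc ∑ u ∈ (Finset.univ.filter fun u : Finset (Fin (2*k)) => u.card ≤ k-1),
        (((dsets (2*k)).filter fun D => u ∉ D).card : ℝ)
      ≤ ∑ u ∈ (Finset.univ : Finset (Finset (Fin (2*k)))),
        ((if u.card = k-1 then 3 * (1/2)^k * N else 0) + 2 * (1/2)^(k+l) * N) := by
        rw [Finset.sum_filter]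
        refine Finset.sum_le_sum fun u _ => ?_
        have p1 : 0 ≤ 2 * (1/2:ℝ)^(k+l) * N := by positivity
        have p2 : 0 ≤ 3 * (1/2:ℝ)^k * N := by positivity
        split_ifs with h1 h2 h2
        · have := peierls_one (n := 2*k) (j := k-1) (by omega) h2
          have := this.trans (mul_le_mul_of_nonneg_right (hs1 u) hN0)
          linarith
        · obtain ⟨x, hx⟩ := peierls_two (n := 2*k) (j := k-1) (w := u) (by omega) (by omega)
          have := hx.trans (mul_le_mul_of_nonneg_right (hs2 x) hN0)
          linarith
        · linarith
        · linarith
    _ = _ := by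
        rw [Finset.sum_add_distrib, ← Finset.sum_filter, Finset.sum_const, Finset.sum_const]
        have c1 : (Finset.univ.filter fun u : Finset (Fin (2*k)) => u.card = k-1).card =
            (2*k).choose (k-1) := by
          have : (Finset.univ.filter fun u : Finset (Fin (2*k)) => u.card = k-1) =
              Finset.powersetCard (k-1) Finset.univ := by
            ext u; simp [Finset.mem_powersetCard]
          rw [this, Finset.card_powersetCard]; simp
        have c2 : (Finset.univ : Finset (Finset (Fin (2*k)))).card = 4^k := by
          simp [pow_mul]
        rw [c1, c2]
        simp only [nsmul_eq_mul]
        push_cast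
        ring

def hi {n : ℕ} (k : ℕ) (D : Finset (Finset (Fin n))) : Finset (Finset (Fin n)) :=
  D.filter fun u => k + 1 ≤ u.card

def dual {n : ℕ} (D : Finset (Finset (Fin n))) : Finset (Finset (Fin n)) :=
  Finset.univ.filter fun u => uᶜ ∉ D

lemma mem_dual {n : ℕ} {D : Finset (Finset (Fin n))} {u : Finset (Fin n)} :
    u ∈ dual D ↔ uᶜ ∉ D := by simp [dual]

lemma dual_dual {n : ℕ} (D : Finset (Finset (Fin n))) : dual (dual D) = D := by
  ext u; simp [mem_dual]

lemma dual_ds {n : ℕ} {D : Finset (Finset (Fin n))} (h : IsDs D) : IsDs (dual D) := by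
  intro x hx y hy
  rw [mem_dual] at *
  exact fun h' => hx (h _ h' _ (Finset.compl_subset_compl.2 hy))

lemma card_hi {k : ℕ} (hk : 1 ≤ k) (D : Finset (Finset (Fin (2*k)))) :
    (hi k D).card = (nf (k-1) (dual D)).card := by
  have hc : ∀ u : Finset (Fin (2*k)), u.card ≤ 2*k := fun u => by
    simpa using Finset.card_le_univ u
  refine Finset.card_bij (fun u _ => uᶜ) ?_ ?_ ?_
  · intro u hu
    obtain ⟨h1, h2⟩ := Finset.mem_filter.1 hu
    refine mem_nf.2 ⟨?_, ?_⟩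
    · rw [Finset.card_compl, Fintype.card_fin]; omega
    · rw [mem_dual, compl_compl]; exact fun h => h h1
  · intro u _ v _ h
    exact compl_injective h
  · intro v hv
    obtain ⟨h1, h2⟩ := mem_nf.1 hv
    refine ⟨vᶜ, Finset.mem_filter.2 ⟨?_, ?_⟩, compl_compl v⟩
    · rw [mem_dual] at h2; exact not_not.1 h2
    · rw [Finset.card_compl, Fintype.card_fin]; have := hc v; omega

lemma sum_hi {k : ℕ} (hk : 1 ≤ k) :
    ∑ D ∈ dsets (2*k), ((hi k D).card : ℝ) = ∑ D ∈ dsets (2*k), ((nf (k-1) D).card : ℝ) := by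
  refine Finset.sum_bij' (fun D _ => dual D) (fun D _ => dual D) ?_ ?_ ?_ ?_ ?_
  · intro D hD; exact mem_dsets.2 (dual_ds (mem_dsets.1 hD))
  · intro D hD; exact mem_dsets.2 (dual_ds (mem_dsets.1 hD))
  · intro D _; exact dual_dual D
  · intro D _; exact dual_dual D
  · intro D _; rw [card_hi hk]

/-! ### Second moment -/

def flp {n : ℕ} (D : Finset (Finset (Fin n))) (y : Finset (Fin n)) : Prop :=
  (∀ z, z ⊂ y → z ∈ D) ∧ ∀ z, y ⊂ z → z ∉ D

def eps {n : ℕ} (D : Finset (Finset (Fin n))) (y : Finset (Fin n)) : ℝ :=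
  if flp D y then (if y ∈ D then 1 else -1) else 0

def tog {n : ℕ} (y : Finset (Fin n)) (D : Finset (Finset (Fin n))) : Finset (Finset (Fin n)) :=
  if flp D y then (if y ∈ D then D.erase y else insert y D) else D

lemma mem_tog_ne {n : ℕ} {y z : Finset (Fin n)} {D : Finset (Finset (Fin n))} (h : z ≠ y) :
    z ∈ tog y D ↔ z ∈ D := by
  unfold tog; split_ifs <;> simp [h]

lemma mem_tog_self {n : ℕ} {y : Finset (Fin n)} {D : Finset (Finset (Fin n))} (h : flp D y) :
    y ∈ tog y D ↔ y ∉ D := by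
  unfold tog; rw [if_pos h]; split_ifs with h1 <;> simp [h1]

lemma flp_tog {n : ℕ} {y z : Finset (Fin n)} {D : Finset (Finset (Fin n))} (h : z.card = y.card) :
    flp (tog y D) z ↔ flp D z := by
  unfold flp
  have h1 : ∀ w, w ⊂ z → w ≠ y := by
    rintro w hw rfl
    have := Finset.card_lt_card hw; omega
  have h2 : ∀ w, z ⊂ w → w ≠ y := by
    rintro w hw rfl
    have := Finset.card_lt_card hw; omega
  constructor
  · rintro ⟨a, b⟩
    exact ⟨fun w hw => (mem_tog_ne (h1 w hw)).1 (a w hw),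
      fun w hw h => b w hw ((mem_tog_ne (h2 w hw)).2 h)⟩
  · rintro ⟨a, b⟩
    exact ⟨fun w hw => (mem_tog_ne (h1 w hw)).2 (a w hw),
      fun w hw h => b w hw ((mem_tog_ne (h2 w hw)).1 h)⟩

lemma tog_tog {n : ℕ} (y : Finset (Fin n)) (D : Finset (Finset (Fin n))) : tog y (tog y D) = D := by
  by_cases hf : flp D y
  · ext z
    by_cases h : z = y
    · subst h
      rw [mem_tog_self ((flp_tog rfl).2 hf), mem_tog_self hf, not_not]
    · rw [mem_tog_ne h, mem_tog_ne h]
  · have : tog y D = D := by unfold tog; rw [if_neg hf]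
    rw [this, this]

lemma tog_ds {n : ℕ} (y : Finset (Fin n)) {D : Finset (Finset (Fin n))} (hD : IsDs D) :
    IsDs (tog y D) := by
  by_cases hf : flp D y
  · intro x hx z hz
    by_cases hzx : z = x
    · rwa [hzx]
    have hss := hz.ssubset_of_ne hzx
    by_cases hxy : x = y
    · subst hxy
      rw [mem_tog_ne hzx]; exact hf.1 z hss
    · rw [mem_tog_ne hxy] at hx
      by_cases hzy : z = y
      · subst hzy
        exact absurd hx (hf.2 x hss)
      · rw [mem_tog_ne hzy]; exact hD x hx z hz
  · have : tog y D = D := by unfold tog; rw [if_neg hf]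
    rwa [this]

lemma eps_tog_self {n : ℕ} (y : Finset (Fin n)) (D : Finset (Finset (Fin n))) :
    eps (tog y D) y = - eps D y := by
  unfold eps
  rw [flp_tog rfl]
  by_cases hf : flp D y
  · rw [if_pos hf, if_pos hf]
    have := mem_tog_self hf
    by_cases h : y ∈ D
    · rw [if_neg (by tauto), if_pos h]
    · rw [if_pos (by tauto), if_neg h]; norm_num
  · rw [if_neg hf, if_neg hf]; norm_num

lemma eps_tog_ne {n : ℕ} {y z : Finset (Fin n)} (D : Finset (Finset (Fin n)))
    (hc : z.card = y.card) (hne : z ≠ y) : eps (tog y D) z = eps D z := by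
  unfold eps
  simp only [flp_tog hc, mem_tog_ne hne]

lemma eps_orth {n : ℕ} {y z : Finset (Fin n)} (hc : z.card = y.card) (hne : z ≠ y) :
    ∑ D ∈ dsets n, eps D y * eps D z = 0 := by
  have h : ∑ D ∈ dsets n, eps D y * eps D z = ∑ D ∈ dsets n, -(eps D y * eps D z) := by
    refine Finset.sum_bij' (fun D _ => tog y D) (fun D _ => tog y D) ?_ ?_ ?_ ?_ ?_
    · intro D hD; exact mem_dsets.2 (tog_ds y (mem_dsets.1 hD))
    · intro D hD; exact mem_dsets.2 (tog_ds y (mem_dsets.1 hD))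
    · intro D _; exact tog_tog y D
    · intro D _; exact tog_tog y D
    · intro D _; rw [eps_tog_self, eps_tog_ne D hc hne]; ring
  rw [Finset.sum_neg_distrib] at h
  linarith

lemma eps_sq {n : ℕ} (y : Finset (Fin n)) (D : Finset (Finset (Fin n))) : eps D y * eps D y ≤ 1 := by
  unfold eps; split_ifs <;> norm_num

lemma second_moment (n k : ℕ) :
    ∑ D ∈ dsets n, (∑ y ∈ lvl n k, eps D y)^2 ≤ (n.choose k : ℝ) * (dsets n).card := by
  have e : ∑ D ∈ dsets n, (∑ y ∈ lvl n k, eps D y)^2 =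
      ∑ y ∈ lvl n k, ∑ z ∈ lvl n k, ∑ D ∈ dsets n, eps D y * eps D z := by
    simp only [sq, Finset.sum_mul_sum]
    rw [Finset.sum_comm]
    refine Finset.sum_congr rfl fun y _ => ?_
    rw [Finset.sum_comm]
  rw [e]
  have e2 : ∀ y ∈ lvl n k, ∑ z ∈ lvl n k, ∑ D ∈ dsets n, eps D y * eps D z ≤ (dsets n).card := by
    intro y hy
    rw [Finset.sum_eq_single_of_mem y hy]
    · calc _ ≤ ∑ D ∈ dsets n, (1:ℝ) := Finset.sum_le_sum fun D _ => eps_sq y D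
        _ = _ := by simp
    · intro z hz hne
      exact eps_orth (by rw [mem_lvl.1 hz, mem_lvl.1 hy]) hne
  calc _ ≤ ∑ y ∈ lvl n k, ((dsets n).card : ℝ) := Finset.sum_le_sum e2
    _ = _ := by
      rw [Finset.sum_const, nsmul_eq_mul]
      congr 2
      simp [lvl]

/-! ### Deterministic bound -/

lemma nonflip_card {k : ℕ} (hk : 1 ≤ k) (D : Finset (Finset (Fin (2*k)))) (hD : IsDs D) :
    ((lvl (2*k) k).filter fun y => ¬ flp D y).card ≤ (k+1) * ((nf (k-1) D).card + (hi k D).card) := by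
  have hsub : ((lvl (2*k) k).filter fun y => ¬ flp D y) ⊆
      (tp (k-1) (nf (k-1) D)).biUnion up ∪ (tp (k+1) (hi k D)).biUnion dn := by
    intro y hy
    obtain ⟨h1, h2⟩ := Finset.mem_filter.1 hy
    rw [mem_lvl] at h1
    rw [Finset.mem_union, Finset.mem_biUnion, Finset.mem_biUnion]
    unfold flp at h2
    rw [not_and_or] at h2
    rcases h2 with h2 | h2
    · push Not at h2
      obtain ⟨z, hz, hzD⟩ := h2
      have := Finset.card_lt_card hz
      obtain ⟨z', a1, a2, a3⟩ := Finset.exists_subsuperset_card_eq hz.1 (n := k-1) (by omega) (by omega)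
      exact Or.inl ⟨z', mem_tp.2 ⟨mem_nf.2 ⟨a3.le, fun h => hzD (hD z' h z a1)⟩, a3⟩,
        mem_up.2 ⟨a2, by omega⟩⟩
    · push Not at h2
      obtain ⟨z, hz, hzD⟩ := h2
      have := Finset.card_lt_card hz
      obtain ⟨z', a1, a2, a3⟩ := Finset.exists_subsuperset_card_eq hz.1 (n := k+1) (by omega) (by omega)
      exact Or.inr ⟨z', mem_tp.2 ⟨Finset.mem_filter.2 ⟨hD z hzD z' a2, a3.ge⟩, a3⟩,
        mem_dn.2 ⟨a1, by omega⟩⟩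
  have c1 : ((tp (k-1) (nf (k-1) D)).biUnion up).card ≤ (nf (k-1) D).card * (k+1) := by
    refine (Finset.card_biUnion_le_card_mul _ _ (k+1) fun x hx => ?_).trans
      (Nat.mul_le_mul_right _ (Finset.card_le_card (Finset.filter_subset _ _)))
    rw [card_up, (mem_tp.1 hx).2]; omega
  have c2 : ((tp (k+1) (hi k D)).biUnion dn).card ≤ (hi k D).card * (k+1) := by
    refine (Finset.card_biUnion_le_card_mul _ _ (k+1) fun x hx => ?_).trans
      (Nat.mul_le_mul_right _ (Finset.card_le_card (Finset.filter_subset _ _)))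
    rw [card_dn, (mem_tp.1 hx).2]
  have := (Finset.card_le_card hsub).trans (Finset.card_union_le _ _)
  nlinarith

lemma alt_half {k : ℕ} (hk : 1 ≤ k) :
    2 * ∑ x ∈ (Finset.univ : Finset (Finset (Fin (2*k)))).filter (fun x => x.card < k), (-1:ℝ)^x.card
      + (-1)^k * (lvl (2*k) k).card = 0 := by
  have hc : ∀ u : Finset (Fin (2*k)), u.card ≤ 2*k := fun u => by
    simpa using Finset.card_le_univ u
  have e0 : ∑ x : Finset (Fin (2*k)), (-1:ℝ)^x.card = 0 := by
    have h := Finset.sum_powerset_neg_one_pow_card (x := (Finset.univ : Finset (Fin (2*k))))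
    rw [Finset.powerset_univ, if_neg] at h
    · exact_mod_cast h
    · have : (Finset.univ : Finset (Fin (2*k))).card ≠ 0 := by simp; omega
      rintro h; rw [h] at this; simp at this
  have e1 : ∑ x ∈ (Finset.univ : Finset (Finset (Fin (2*k)))).filter (fun x => k < x.card), (-1:ℝ)^x.card
      = ∑ x ∈ (Finset.univ : Finset (Finset (Fin (2*k)))).filter (fun x => x.card < k), (-1:ℝ)^x.card := by
    refine Finset.sum_bij' (fun x _ => xᶜ) (fun x _ => xᶜ) ?_ ?_ ?_ ?_ ?_
    · intro x hx
      have := (Finset.mem_filter.1 hx).2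
      refine Finset.mem_filter.2 ⟨Finset.mem_univ _, ?_⟩
      rw [Finset.card_compl, Fintype.card_fin]; omega
    · intro x hx
      have := (Finset.mem_filter.1 hx).2
      refine Finset.mem_filter.2 ⟨Finset.mem_univ _, ?_⟩
      rw [Finset.card_compl, Fintype.card_fin]; omega
    · intro x _; exact compl_compl x
    · intro x _; exact compl_compl x
    · intro x _
      rw [Finset.card_compl, Fintype.card_fin]
      have h2 : (-1:ℝ)^(2*k - x.card) * (-1)^x.card = 1 := by
        rw [← pow_add, Nat.sub_add_cancel (hc x), pow_mul]; norm_num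
      have h3 : (-1:ℝ)^x.card * (-1)^x.card = 1 := by
        rw [← mul_pow]; norm_num
      have h4 : (-1:ℝ)^x.card ≠ 0 := by positivity
      exact mul_right_cancel₀ h4 (h3.trans h2.symm)
  have e2 : ∑ x ∈ lvl (2*k) k, (-1:ℝ)^x.card = (-1)^k * (lvl (2*k) k).card := by
    rw [Finset.sum_congr rfl (fun x hx => by rw [mem_lvl.1 hx]), Finset.sum_const, nsmul_eq_mul,
      mul_comm]
  have e3 : lvl (2*k) k = (Finset.univ : Finset (Finset (Fin (2*k)))).filter (fun x => x.card = k) := by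
    ext x; simp [mem_lvl]
  rw [← e2, two_mul]
  nth_rewrite 2 [← e1]
  rw [e3, ← e0]
  simp only [Finset.sum_filter]
  rw [← Finset.sum_add_distrib, ← Finset.sum_add_distrib]
  refine Finset.sum_congr rfl fun x _ => ?_
  rcases lt_trichotomy x.card k with h | h | h
  · rw [if_pos h, if_neg (by omega), if_neg (by omega)]; ring
  · rw [if_neg (by omega), if_neg (by omega), if_pos h]; ring
  · rw [if_neg (by omega), if_pos h, if_neg (by omega)]; ring

lemma det_bound {k : ℕ} (hk : 1 ≤ k) (D : Finset (Finset (Fin (2*k)))) (hD : IsDs D) :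
    2 * |∑ x ∈ D, (-1:ℝ)^x.card| ≤ |∑ y ∈ lvl (2*k) k, eps D y| +
      (k+3) * (((nf (k-1) D).card : ℝ) + (hi k D).card) := by
  have hA := alt_half hk
  set A := ∑ x ∈ (Finset.univ : Finset (Finset (Fin (2*k)))).filter (fun x => x.card < k), (-1:ℝ)^x.card
  have sgn_bd : ∀ S : Finset (Finset (Fin (2*k))), |∑ x ∈ S, (-1:ℝ)^x.card| ≤ S.card := by
    intro S
    refine (Finset.abs_sum_le_sum_abs _ _).trans ?_
    simp
  have e1 : ∑ x ∈ D, (-1:ℝ)^x.card = A - ∑ x ∈ nf (k-1) D, (-1:ℝ)^x.card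
      + ∑ x ∈ hi k D, (-1:ℝ)^x.card
      + (-1)^k * ((lvl (2*k) k).filter (fun y => y ∈ D)).card := by
    have : (-1:ℝ)^k * ((lvl (2*k) k).filter (fun y => y ∈ D)).card =
        ∑ x ∈ (lvl (2*k) k).filter (fun y => y ∈ D), (-1:ℝ)^x.card := by
      rw [Finset.sum_congr rfl (fun x hx => by rw [mem_lvl.1 (Finset.mem_filter.1 hx).1]),
        Finset.sum_const, nsmul_eq_mul, mul_comm]
    rw [this]
    have e3 : (lvl (2*k) k).filter (fun y => y ∈ D) =
      (Finset.univ : Finset (Finset (Fin (2*k)))).filter (fun x => x.card = k ∧ x ∈ D) := by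
      ext x; simp [mem_lvl]
    have e4 : hi k D = (Finset.univ : Finset (Finset (Fin (2*k)))).filter (fun x => k < x.card ∧ x ∈ D) := by
      ext x; simp only [hi, Finset.mem_filter, Finset.mem_univ, true_and]
      rw [and_comm]; rfl
    have e5 : D = (Finset.univ : Finset (Finset (Fin (2*k)))).filter (fun x => x ∈ D) := by
      ext x; simp
    have e6 : nf (k-1) D = (Finset.univ : Finset (Finset (Fin (2*k)))).filter (fun x => x.card < k ∧ x ∉ D) := by
      ext x; rw [mem_nf]; simp only [Finset.mem_filter, Finset.mem_univ, true_and]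
      exact and_congr_left fun _ => by omega
    rw [e3, e4, e6]
    conv_lhs => rw [e5]
    simp only [A, Finset.sum_filter]
    rw [← Finset.sum_sub_distrib, ← Finset.sum_add_distrib, ← Finset.sum_add_distrib]
    refine Finset.sum_congr rfl fun x _ => ?_
    by_cases hx : x ∈ D
    · rcases lt_trichotomy x.card k with h | h | h
      · simp [hx, h, h.not_gt, h.ne]
      · simp [hx, h]
      · simp [hx, h, h.not_gt, h.ne']
    · by_cases h : x.card < k
      · simp [hx, h]
      · simp [hx, h]
  have e2 : 2 * (((lvl (2*k) k).filter (fun y => y ∈ D)).card : ℝ) - (lvl (2*k) k).card =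
      ∑ y ∈ lvl (2*k) k, eps D y +
      ∑ y ∈ (lvl (2*k) k).filter (fun y => ¬ flp D y), (if y ∈ D then (1:ℝ) else -1) := by
    rw [Finset.card_eq_sum_ones (lvl (2*k) k), Finset.card_filter]
    push_cast
    rw [Finset.mul_sum, ← Finset.sum_sub_distrib, Finset.sum_filter, ← Finset.sum_add_distrib]
    refine Finset.sum_congr rfl fun y _ => ?_
    unfold eps
    split_ifs <;> norm_num
  have b1 : |∑ y ∈ (lvl (2*k) k).filter (fun y => ¬ flp D y), (if y ∈ D then (1:ℝ) else -1)| ≤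
      (k+1) * (((nf (k-1) D).card : ℝ) + (hi k D).card) := by
    refine (Finset.abs_sum_le_sum_abs _ _).trans ?_
    have : ∑ y ∈ (lvl (2*k) k).filter (fun y => ¬ flp D y), |(if y ∈ D then (1:ℝ) else -1)| =
        ((lvl (2*k) k).filter (fun y => ¬ flp D y)).card := by
      rw [Finset.card_eq_sum_ones]
      push_cast
      refine Finset.sum_congr rfl fun y _ => ?_
      split_ifs <;> norm_num
    rw [this]
    exact_mod_cast nonflip_card hk D hD
  have b2 := sgn_bd (nf (k-1) D)
  have b3 := sgn_bd (hi k D)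
  set E := ∑ y ∈ lvl (2*k) k, eps D y
  set F := ∑ y ∈ (lvl (2*k) k).filter (fun y => ¬ flp D y), (if y ∈ D then (1:ℝ) else -1)
  set p := ∑ x ∈ nf (k-1) D, (-1:ℝ)^x.card
  set q := ∑ x ∈ hi k D, (-1:ℝ)^x.card
  have e7 : 2 * ∑ x ∈ D, (-1:ℝ)^x.card = (-1)^k * (E + F) - 2 * p + 2 * q := by
    rw [← e2, e1]; linarith
  have b4 : |(-1:ℝ)^k * (E + F)| ≤ |E| + |F| := by
    rw [abs_mul, abs_pow, abs_neg, abs_one, one_pow, one_mul]; exact abs_add_le _ _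
  have b5 : 2 * |∑ x ∈ D, (-1:ℝ)^x.card| = |2 * ∑ x ∈ D, (-1:ℝ)^x.card| := by
    rw [abs_mul]; norm_num
  rw [b5, e7]
  have b6 : |(-1:ℝ)^k * (E + F) - 2 * p + 2 * q| ≤ |(-1:ℝ)^k * (E + F)| + 2 * |p| + 2 * |q| := by
    have t1 := abs_add_le ((-1:ℝ)^k * (E + F) - 2 * p) (2 * q)
    have t2 := abs_sub ((-1:ℝ)^k * (E + F)) (2 * p)
    have t3 : |2 * p| = 2 * |p| := by rw [abs_mul]; norm_num
    have t4 : |2 * q| = 2 * |q| := by rw [abs_mul]; norm_num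
    linarith
  linarith

lemma central_sq (k : ℕ) : (Nat.centralBinom k)^2 * (2*k+1) ≤ 16^k := by
  induction k with
  | zero => simp
  | succ k ih =>
    have h := Nat.succ_mul_centralBinom_succ k
    set a := Nat.centralBinom k
    set b := Nat.centralBinom (k+1)
    have h2 : (k+1)^2 * (b^2 * (2*(k+1)+1)) ≤ (k+1)^2 * 16^(k+1) := by
      calc (k+1)^2 * (b^2 * (2*(k+1)+1)) = ((k+1)*b)^2 * (2*k+3) := by ring
        _ = (a^2 * (2*k+1)) * (4 * (2*k+1) * (2*k+3)) := by rw [h]; ring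
        _ ≤ 16^k * (4 * (2*k+1) * (2*k+3)) := Nat.mul_le_mul_right _ ih
        _ ≤ 16^k * (16 * (k+1)^2) := Nat.mul_le_mul_left _ (by nlinarith)
        _ = _ := by ring
    exact Nat.le_of_mul_le_mul_left h2 (by positivity)

lemma choose_le_sqrt {k : ℕ} (hk : 1 ≤ k) : ((2*k).choose (k-1) : ℝ) ≤ 4^k / Real.sqrt k := by
  have h1 : (2*k).choose (k-1) ≤ Nat.centralBinom k := Nat.choose_le_centralBinom _ _
  have h2 : ((2*k).choose (k-1) : ℝ) ≤ Nat.centralBinom k := by exact_mod_cast h1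
  refine h2.trans ?_
  have hk0 : (0:ℝ) < k := by exact_mod_cast hk
  rw [le_div_iff₀ (Real.sqrt_pos.2 hk0)]
  have h3 : ((Nat.centralBinom k : ℝ))^2 * (2*k+1) ≤ 16^k := by exact_mod_cast central_sq k
  refine le_of_sq_le_sq ?_ (by positivity)
  rw [mul_pow, Real.sq_sqrt hk0.le, ← pow_mul, mul_comm k 2, pow_mul]
  norm_num
  nlinarith [sq_nonneg (Nat.centralBinom k : ℝ)]
/-! ### Assembling -/

lemma markov_card {V : Type*} (s : Finset V) (f : V → ℝ) (hf : ∀ v ∈ s, 0 ≤ f v) (t B : ℝ)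
    (hB : ∑ v ∈ s, f v ≤ B) : t * ((s.filter fun v => t < f v).card : ℝ) ≤ B := by
  calc t * ((s.filter fun v => t < f v).card : ℝ) = ∑ v ∈ s.filter (fun v => t < f v), t := by
        rw [Finset.sum_const, nsmul_eq_mul, mul_comm]
    _ ≤ ∑ v ∈ s.filter (fun v => t < f v), f v :=
        Finset.sum_le_sum fun v hv => (Finset.mem_filter.1 hv).2.le
    _ ≤ ∑ v ∈ s, f v := Finset.sum_le_sum_of_subset_of_nonneg (Finset.filter_subset _ _)
        (fun v hv _ => hf v hv)
    _ ≤ B := hB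

def badD (k : ℕ) : Finset (Finset (Finset (Fin (2*k)))) :=
  (dsets (2*k)).filter fun D => 3 * (k:ℝ) * 2^k < |∑ x ∈ D, (-1:ℝ)^x.card|

lemma badD_card {k r l : ℕ} (q : Par k r l) (hk : 1 ≤ k) :
    ((badD k).card : ℝ) ≤ 11 / Real.sqrt k * (dsets (2*k)).card := by
  set N : ℝ := ((dsets (2*k)).card : ℝ) with hN
  have hN0 : 0 ≤ N := by positivity
  have hk1 : (1:ℝ) ≤ k := by exact_mod_cast hk
  have hk0 : (0:ℝ) < k := by linarith
  set s := Real.sqrt k with hs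
  have hs1 : 1 ≤ s := by rw [hs]; exact Real.one_le_sqrt.2 hk1
  have hs0 : 0 < s := by linarith
  have hss : s * s = k := Real.mul_self_sqrt hk0.le
  set T : Finset (Finset (Fin (2*k))) → ℝ := fun D => ((nf (k-1) D).card : ℝ) + (hi k D).card with hT
  set E : Finset (Finset (Fin (2*k))) → ℝ := fun D => ∑ y ∈ lvl (2*k) k, eps D y with hE
  have hsub : badD k ⊆ ((dsets (2*k)).filter fun D => (2:ℝ)^k < T D) ∪
      ((dsets (2*k)).filter fun D => (k:ℝ)^2 * 4^k < (E D)^2) := by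
    intro D hD
    obtain ⟨h1, h2⟩ := Finset.mem_filter.1 hD
    rw [Finset.mem_union, Finset.mem_filter, Finset.mem_filter]
    by_contra hcon
    rw [not_or, not_and_or, not_and_or] at hcon
    have t1 : T D ≤ 2^k := by
      rcases hcon.1 with h | h
      · exact absurd h1 h
      · exact not_lt.1 h
    have t2 : (E D)^2 ≤ (k:ℝ)^2 * 4^k := by
      rcases hcon.2 with h | h
      · exact absurd h1 h
      · exact not_lt.1 h
    have t3 : |E D| ≤ k * 2^k := by
      refine abs_le_of_sq_le_sq ?_ (by positivity)
      rw [mul_pow, ← pow_mul, mul_comm k 2, pow_mul]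
      norm_num
      exact t2
    have t4 := det_bound hk D (mem_dsets.1 h1)
    have t5 : (k+3:ℝ) * T D ≤ (k+3) * 2^k := mul_le_mul_of_nonneg_left t1 (by linarith)
    have t6 : (0:ℝ) < 2^k := by positivity
    have t7 : (2:ℝ)^k ≤ k * 2^k := by nlinarith
    have t4' : 2 * |∑ x ∈ D, (-1:ℝ)^x.card| ≤ |E D| + (k+3) * T D := t4
    nlinarith
  have hlow := sum_nf_le q hk
  have hhi := (sum_hi hk).trans_le hlow
  have hsumT : ∑ D ∈ dsets (2*k), T D ≤
      2 * ((((2*k).choose (k-1) : ℝ) * (3 * (1/2)^k) + 4^k * (2 * (1/2)^(k+l))) * N) := by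
    rw [hT, Finset.sum_add_distrib]; linarith
  have hP : (0:ℝ) < 2^k := by positivity
  have h4 : (4:ℝ)^k = 2^k * 2^k := by rw [← mul_pow]; norm_num
  have hinv : (2:ℝ)^k * (1/2)^k = 1 := by rw [← mul_pow]; norm_num
  have hl : (1/2:ℝ)^l ≤ 1 / s := by
    have q1 : (7 * (2*k+1)^8 : ℝ) ≤ 2^l := by exact_mod_cast q.h1
    have q2 : (2*k+1 : ℝ) ≤ (2*k+1)^8 := le_self_pow₀ (by linarith) (by norm_num)
    rw [one_div, inv_pow, one_div]
    refine inv_anti₀ hs0 ?_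
    nlinarith
  have m1 := markov_card (dsets (2*k)) T (fun D _ => by rw [hT]; positivity) (2^k) _ hsumT
  have m2 := markov_card (dsets (2*k)) (fun D => (E D)^2) (fun D _ => sq_nonneg _) ((k:ℝ)^2 * 4^k) _
    (second_moment (2*k) k)
  have hch := choose_le_sqrt hk
  have hch2 : ((2*k).choose k : ℝ) ≤ 4^k := by
    have : (2*k).choose k ≤ 2^(2*k) := Nat.choose_le_two_pow _ _
    rw [pow_mul] at this
    exact_mod_cast this
  set X : ℝ := (((dsets (2*k)).filter fun D => (2:ℝ)^k < T D).card : ℝ)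
  set Y : ℝ := (((dsets (2*k)).filter fun D => (k:ℝ)^2 * 4^k < (E D)^2).card : ℝ)
  have hX : X ≤ 10 / s * N := by
    have g : ((2*k).choose (k-1) : ℝ) * (3 * (1/2)^k) + 4^k * (2 * (1/2)^(k+l)) ≤ 2^k * (5 / s) := by
      have g1 : ((2*k).choose (k-1) : ℝ) * (3 * (1/2)^k) ≤ (4^k / s) * (3 * (1/2)^k) :=
        mul_le_mul_of_nonneg_right hch (by positivity)
      have g2 : ((4:ℝ)^k / s) * (3 * (1/2)^k) = 2^k * (3 / s) := by
        rw [h4]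
        calc (2:ℝ)^k * 2^k / s * (3 * (1/2)^k) = 2^k * (3 / s) * (2^k * (1/2)^k) := by ring
          _ = _ := by rw [hinv, mul_one]
      have g3 : (4:ℝ)^k * (2 * (1/2)^(k+l)) = 2^k * (2 * (1/2)^l) := by
        rw [h4, pow_add]
        calc (2:ℝ)^k * 2^k * (2 * ((1/2)^k * (1/2)^l)) = 2^k * (2 * (1/2)^l) * (2^k * (1/2)^k) := by ring
          _ = _ := by rw [hinv, mul_one]
      have g4 : (2:ℝ)^k * (2 * (1/2)^l) ≤ 2^k * (2 * (1/s)) := by gcongr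
      calc _ ≤ (2:ℝ)^k * (3 / s) + 2^k * (2 * (1/s)) := by linarith
        _ = _ := by ring
    have g5 := mul_le_mul_of_nonneg_right g hN0
    have : 2^k * X ≤ 2^k * (10 / s * N) := by
      calc _ ≤ _ := m1
        _ ≤ 2 * (2^k * (5/s) * N) := by linarith
        _ = _ := by ring
    exact le_of_mul_le_mul_left this hP
  have hY : Y ≤ 1 / s * N := by
    have h4p : (0:ℝ) < 4^k := by positivity
    have y1 : (4:ℝ)^k * ((k:ℝ)^2 * Y) ≤ 4^k * N := by
      calc _ = (k:ℝ)^2 * 4^k * Y := by ring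
        _ ≤ _ := m2
        _ ≤ _ := mul_le_mul_of_nonneg_right hch2 hN0
    have y2 := le_of_mul_le_mul_left y1 h4p
    have hY0 : 0 ≤ Y := by positivity
    have y3 : s ≤ (k:ℝ)^2 := by nlinarith
    rw [one_div, ← div_eq_inv_mul, le_div_iff₀ hs0]
    nlinarith
  have hc : ((badD k).card : ℝ) ≤ X + Y := by
    have hcc := (Finset.card_le_card hsub).trans (Finset.card_union_le _ _)
    have hcr := (Nat.cast_le (α := ℝ)).2 hcc
    rw [Nat.cast_add] at hcr
    exact hcr
  calc _ ≤ X + Y := hc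
    _ ≤ 10 / s * N + 1 / s * N := by linarith
    _ = _ := by ring

lemma mem_allComplexes {n : ℕ} {D : Finset (Finset (Fin n))} : D ∈ allComplexes n ↔ IsComplex D := by
  simp [allComplexes]

lemma dsets_le (n : ℕ) : (dsets n).card ≤ 2 * (allComplexes n).card := by
  have h0 : (∅ : Finset (Finset (Fin n))) ∈ allComplexes n :=
    mem_allComplexes.2 ⟨by simp, by simp⟩
  have h1 : 1 ≤ (allComplexes n).card := Finset.card_pos.2 ⟨_, h0⟩
  have hmem : ∀ D ∈ (dsets n).erase ∅, (∅ : Finset (Fin n)) ∈ D := by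
    intro D hD
    obtain ⟨a, b⟩ := Finset.mem_erase.1 hD
    obtain ⟨x, hx⟩ := Finset.nonempty_iff_ne_empty.2 a
    exact mem_dsets.1 b x hx ∅ (Finset.empty_subset _)
  have h2 : ((dsets n).erase ∅).card ≤ (allComplexes n).card := by
    refine Finset.card_le_card_of_injOn (fun D => D.erase ∅) ?_ ?_
    · intro D hD
      have hD' := mem_dsets.1 (Finset.mem_erase.1 hD).2
      refine mem_allComplexes.2 ⟨fun x hx => ?_, fun x hx y hy hyx => ?_⟩
      · exact Finset.nonempty_iff_ne_empty.2 (Finset.mem_erase.1 hx).1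
      · exact Finset.mem_erase.2 ⟨hy.ne_empty, hD' x (Finset.mem_erase.1 hx).2 y hyx⟩
    · intro D hD D' hD' h
      have := congrArg (insert ∅) h
      simpa only [Finset.insert_erase (hmem D hD), Finset.insert_erase (hmem D' hD')] using this
  have h3 := Finset.pred_card_le_card_erase (s := dsets n) (a := ∅)
  omega

lemma bad_complex {k : ℕ} (hk : 1 ≤ k) :
    ((allComplexes (2*k)).filter fun D => ¬ (|(eulerChar D : ℝ)| ≤ 2 * (2 * k : ℝ) * (2 : ℝ) ^ k)).card
      ≤ (badD k).card := by
  have hnm : ∀ D ∈ allComplexes (2*k), (∅ : Finset (Fin (2*k))) ∉ D := fun D hD h => by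
    have := (mem_allComplexes.1 hD).1 _ h
    simp at this
  refine Finset.card_le_card_of_injOn (fun D => insert ∅ D) ?_ ?_
  · intro D hD
    obtain ⟨h1, h2⟩ := Finset.mem_filter.1 hD
    have h0 := hnm D h1
    obtain ⟨c1, c2⟩ := mem_allComplexes.1 h1
    refine Finset.mem_filter.2 ⟨mem_dsets.2 ?_, ?_⟩
    · intro x hx y hy
      rcases Finset.eq_empty_or_nonempty y with rfl | hyn
      · exact Finset.mem_insert_self _ _
      · rcases Finset.mem_insert.1 hx with rfl | hx
        · exact absurd (Finset.subset_empty.1 hy) hyn.ne_empty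
        · exact Finset.mem_insert_of_mem (c2 x hx y hyn hy)
    · rw [Finset.sum_insert h0]
      have e : ((eulerChar D : ℤ) : ℝ) = - ∑ x ∈ D, (-1:ℝ)^x.card := by
        unfold eulerChar
        push_cast
        rw [← Finset.sum_neg_distrib]
        refine Finset.sum_congr rfl fun x hx => ?_
        obtain ⟨m, hm⟩ : ∃ m, x.card = m + 1 :=
          ⟨x.card - 1, by have := Finset.card_pos.2 (c1 x hx); omega⟩
        rw [hm, Nat.add_sub_cancel, pow_succ]; ring
      rw [e, abs_neg, not_le] at h2
      have hk1 : (1:ℝ) ≤ k := by exact_mod_cast hk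
      have hP : (1:ℝ) ≤ 2^k := one_le_pow₀ (by norm_num)
      rw [Finset.card_empty, pow_zero]
      set S := ∑ x ∈ D, (-1:ℝ)^x.card
      have t : |S| ≤ |1 + S| + 1 := by
        have := abs_sub (1 + S) 1
        simpa using this
      nlinarith
  · intro D hD D' hD' h
    have a := hnm D (Finset.mem_filter.1 hD).1
    have b := hnm D' (Finset.mem_filter.1 hD').1
    have := congrArg (fun X => Finset.erase X ∅) h
    simpa only [Finset.erase_insert a, Finset.erase_insert b] using this

lemma prob_lower {k r l : ℕ} (q : Par k r l) (hk : 1 ≤ k) :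
    1 - 22 / Real.sqrt k ≤ uniformProb (2*k)
      (fun D => |(eulerChar D : ℝ)| ≤ 2 * (2 * k : ℝ) * (2 : ℝ) ^ k) := by
  have h1 := badD_card q hk
  have h2 := bad_complex hk
  have h3 := dsets_le (2*k)
  have h0 : 0 < (allComplexes (2*k)).card :=
    Finset.card_pos.2 ⟨∅, mem_allComplexes.2 ⟨by simp, by simp⟩⟩
  have h4 := Finset.card_filter_add_card_filter_not (s := allComplexes (2*k))
    (fun D => |(eulerChar D : ℝ)| ≤ 2 * (2 * k : ℝ) * (2 : ℝ) ^ k)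
  unfold uniformProb
  have h0' : (0:ℝ) < (allComplexes (2*k)).card := by exact_mod_cast h0
  rw [le_div_iff₀ h0']
  have h2' : (((allComplexes (2*k)).filter fun D => ¬ (|(eulerChar D : ℝ)| ≤ 2 * (2 * k : ℝ) * (2 : ℝ) ^ k)).card : ℝ)
      ≤ (badD k).card := by exact_mod_cast h2
  have h3' : ((dsets (2*k)).card : ℝ) ≤ 2 * (allComplexes (2*k)).card := by exact_mod_cast h3
  have h4' : (((allComplexes (2*k)).filter fun D => |(eulerChar D : ℝ)| ≤ 2 * (2 * k : ℝ) * (2 : ℝ) ^ k).card : ℝ)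
      + (((allComplexes (2*k)).filter fun D => ¬ (|(eulerChar D : ℝ)| ≤ 2 * (2 * k : ℝ) * (2 : ℝ) ^ k)).card : ℝ)
      = (allComplexes (2*k)).card := by exact_mod_cast h4
  have h5 : 11 / Real.sqrt k * (dsets (2*k)).card ≤ 11 / Real.sqrt k * (2 * (allComplexes (2*k)).card) :=
    mul_le_mul_of_nonneg_left h3' (by positivity)
  have h6 : 11 / Real.sqrt k * (2 * ((allComplexes (2*k)).card : ℝ)) =
      22 / Real.sqrt k * (allComplexes (2*k)).card := by ring
  rw [sub_mul, one_mul]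
  linarith

lemma prob_le_one (n : ℕ) (P : Finset (Finset (Fin n)) → Prop) : uniformProb n P ≤ 1 := by
  unfold uniformProb
  refine div_le_one_of_le₀ ?_ (by positivity)
  exact_mod_cast Finset.card_le_card (Finset.filter_subset _ _)

/-- There is a constant `c > 0` such that for `Δ ~ U(n)`, `n` even, with high
probability `|χ(Δ)| ≤ c n 2^{n/2}`. -/
theorem stmt9 :
    ∃ c : ℝ, 0 < c ∧
      Filter.Tendsto (fun m : ℕ =>
        uniformProb (2 * m) (fun Δ =>
          |(eulerChar Δ : ℝ)| ≤ c * (2 * m : ℝ) * (2 : ℝ) ^ m))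
        Filter.atTop (nhds 1) := by
  refine ⟨2, by norm_num, ?_⟩
  obtain ⟨K, hK⟩ := exists_par
  have hlim : Filter.Tendsto (fun m : ℕ => 1 - 22 / Real.sqrt m) Filter.atTop (nhds 1) := by
    have h : Filter.Tendsto (fun m : ℕ => Real.sqrt (m:ℝ)) Filter.atTop Filter.atTop :=
      Real.tendsto_sqrt_atTop.comp tendsto_natCast_atTop_atTop
    have h2 := (h.const_div_atTop 22).const_sub 1
    simpa using h2
  refine tendsto_of_tendsto_of_tendsto_of_le_of_le' hlim tendsto_const_nhds ?_ ?_
  · filter_upwards [Filter.eventually_ge_atTop (max K 1)] with m hm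
    obtain ⟨r, l, q⟩ := hK m (le_trans (le_max_left _ _) hm)
    exact prob_lower q (le_trans (le_max_right _ _) hm)
  · exact Filter.Eventually.of_forall fun m => prob_le_one _ _
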